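/- For every ε > 0 there exists C_ε > 0 such that for all real X ≥ 2, all positive integers q with q ≤ X^{2/3}, and all integers a with gcd(a, q) = 1, | Σ_{n ≤ X, n ≡ a (mod q)} τ(n) − (1/φ(q))·Σ_{n ≤ X, gcd(n,q) = 1} τ(n) | ≤ C_ε·X^{1/3+ε}. -/

import Mathlib

/-!
Write `a` for a reduced residue class modulo `q` and `T = X ^ (1 / 3)`, so that `q ≤ T ^ 2`. The sum
of `τ (n)` over `n ≤ X` coprime to `q` is the sum over all reduced classes of the sums in these
classes, so it suffices to compare the sums over two reduced classes with an error
`O (X ^ (1 / 3 + ε))` and to average (`abs_sum_tauk_sub_le`).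

By Dirichlet's hyperbola method (`card_pairsIn_eq`) the sum over the class `a` equals a quantity
independent of `a`, up to sums over `d ≤ √X`, `(d, q) = 1`, of the sawtooth function at
`(κ - a / d) / q` with `κ` constant, or at `(X / d - a / d) / q`, where `a / d` stands for the residue
modulo `q`. For constant `κ`, full periods of `d` contribute equally for all classes, so only
`d ≤ q` matters (`abs_sub_saw_le`). For `κ = X / d` the range is cut into dyadic intervals `[D, 2 D]`,
and these into blocks of length `L` of size about `D √q / T`, on which the hyperbola is replaced by
its tangent, from above and from below, at a cost `O (T)` (`abs_dyadic_saw_le`).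

The sawtooth is bounded by its truncated Fourier expansion (`abs_sum_saw_le`), so sums of
`e (h (α d + β - a / d) / q)` over the blocks have to be estimated. Completing these sums
(`norm_incomplete_kl_le`) leads to Kloosterman sums modulo `q`, bounded by
`6 ^ ω(q) √q (h, q)` (`norm_kl_le`), with a main term depending on the distance of `h α` to the
nearest integer. The slopes `α` of the tangents of consecutive blocks are well spaced, so summation
over the blocks saves over the trivial estimate of that term (`norm_tangent_sum_le`). Altogether
the error is `O (6 ^ ω(q) τ(q) (log X) ^ 3 T)`, and the divisor bound (`exists_card_divisors_le`)
finishes the proof.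

The bound for Kloosterman sums is reduced to prime powers by the Chinese remainder theorem. For
higher prime powers the sum is evaluated by averaging over the units `1 + p ^ k v`
(`norm_kl_prime_pow_le`). For primes it is Weil's bound (`weil_kloosterman`): the `L`-function of
the sum is a polynomial of degree two, `1 + K T + p T ^ 2`, where `K` is the sum itself, and its
inverse zeros `α`, `β` satisfy `α ^ n + β ^ n = -K_n`, with `K_n` the Kloosterman sum over the
extension of degree `n` (`lLog_eq`, `lLog_eq_sum`). Stepanov's method gives `K_n = O_p (p ^ (n / 2))`
for even `n` (`norm_kloosterman_ext_le`), which forces `|α| = |β| = √p`.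
-/

/-- `tauk k n` is the number of ordered `k`-tuples of positive integers with product `n`. -/
def tauk (k n : ℕ) : ℕ :=
  ((Fintype.piFinset fun _ : Fin k => n.divisors).filter fun f => ∏ i, f i = n).card


/-! ### Stepanov's method on the curve `y ^ p = y + a x + b / x + τ` -/

/-- The monomial `x^⌊n/p⌋ y^(n mod p)`. For the weight `p` of `x` and `1` of `y` it is the unique
monomial of weight `n` with exponent of `y` below `p`. -/
def asMono {A : Type*} [CommRing A] (p : ℕ) (x y : A) (n : ℕ) : A := x ^ (n / p) * y ^ (n % p)

lemma asMono_eq {A : Type*} [CommRing A] {p : ℕ} (hp : 0 < p) (x y : A) {α β : ℕ} (hβ : β < p) :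
    asMono p x y (p * α + β) = x ^ α * y ^ β := by
  unfold asMono
  rw [Nat.mul_add_div hp, Nat.mul_add_mod, Nat.div_eq_of_lt hβ, Nat.mod_eq_of_lt hβ, add_zero]

/-- Modulo the equation of the curve, the powers `y ^ β` with `β ≥ p` can be eliminated from `x ^ α y ^ β`
without increasing the weight `p α + β`; the condition `β ≤ α` keeps the exponents of `x`
nonnegative. -/
lemma asMono_mem {F A : Type*} [Field F] [CommRing A] [Algebra F A] {p : ℕ} (hp : 2 ≤ p)
    (a b τ : F) (x xi y : A) (hx : x * xi = 1)
    (hy : y ^ p = y + a • x + b • xi + τ • (1 : A)) (W : ℕ) (β : ℕ) :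
    ∀ α, β ≤ α → p * α + β ≤ W →
      x ^ α * y ^ β ∈ Submodule.span F (Set.range fun k : Fin (W + 1) => asMono p x y k) := by
  induction β using Nat.strong_induction_on with
  | _ β ih =>
    intro α hαβ hW
    by_cases hβ : β < p
    · rw [← asMono_eq (by omega) x y hβ]
      exact Submodule.subset_span ⟨⟨p * α + β, by omega⟩, rfl⟩
    · push Not at hβ
      obtain ⟨γ, rfl⟩ := Nat.exists_eq_add_of_le hβ
      obtain ⟨δ, rfl⟩ : ∃ δ, α = δ + 1 := ⟨α - 1, by omega⟩
      have key : x ^ (δ + 1) * y ^ (p + γ) = x ^ (δ + 1) * y ^ (γ + 1) + a • (x ^ (δ + 2) * y ^ γ)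
          + b • (x ^ δ * y ^ γ) + τ • (x ^ (δ + 1) * y ^ γ) := by
        rw [pow_add y p γ, hy]
        have : x ^ (δ + 1) * xi = x ^ δ := by rw [pow_succ, mul_assoc, hx, mul_one]
        simp only [Algebra.smul_def] at *
        linear_combination (algebraMap F A) b * y ^ γ * this
      rw [key]
      have e1 : p * (δ + 1) = p * δ + p := by ring
      have e2 : p * (δ + 2) = p * δ + p + p := by ring
      refine Submodule.add_mem _ (Submodule.add_mem _ (Submodule.add_mem _ ?_ ?_) ?_) ?_
      · exact ih _ (by omega) _ (by omega) (by omega)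
      · exact Submodule.smul_mem _ _ (ih _ (by omega) _ (by omega) (by omega))
      · exact Submodule.smul_mem _ _ (ih _ (by omega) _ (by omega) (by omega))
      · exact Submodule.smul_mem _ _ (ih _ (by omega) _ (by omega) (by omega))

open PowerSeries in
/-- A point over the Laurent series field with `y` of order `-1` and `x` of order `-p`. -/
lemma exists_laurent_point {F : Type} [Field F] {p : ℕ} (hp : 2 ≤ p) {a b τ : F} (ha : a ≠ 0) :
    ∃ x y : LaurentSeries F, x ≠ 0 ∧ x.order = -p ∧ y ≠ 0 ∧ y.order = -1 ∧
      y ^ p = y + HahnSeries.C a * x + HahnSeries.C b * x⁻¹ + HahnSeries.C τ := by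
  -- solve `U² - a⁻¹ (1 - s^(p-1) - τ s^p) U + a⁻¹ b s^(2 * p) = 0` over power series in `s = y⁻¹`
  let B : PowerSeries F := C a⁻¹ * (1 - X ^ (p - 1) - C τ * X ^ p)
  let D : PowerSeries F := C (a⁻¹ * b) * X ^ (2 * p)
  let f : Polynomial (PowerSeries F) :=
    Polynomial.X ^ 2 - Polynomial.C B * Polynomial.X + Polynomial.C D
  have hfm : f.Monic := by
    have : f = Polynomial.X ^ 2 + (- Polynomial.C B * Polynomial.X + Polynomial.C D) := by
      simp only [f]; ring
    rw [this]
    apply Polynomial.monic_X_pow_add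
    have : (- Polynomial.C B * Polynomial.X + Polynomial.C D) =
      Polynomial.C (-B) * Polynomial.X + Polynomial.C D := by simp
    rw [this]
    exact lt_of_le_of_lt Polynomial.degree_linear_le (by norm_num)
  have hmem : ∀ g : PowerSeries F, g ∈ (Ideal.span {X} : Ideal (PowerSeries F)) ↔
      constantCoeff g = 0 := fun g => by
    rw [Ideal.mem_span_singleton, X_dvd_iff]
  have hBc : constantCoeff B = a⁻¹ := by
    have h1 : p - 1 ≠ 0 := by omega
    have h2 : p ≠ 0 := by omega
    simp [B, h1, h2]
  have hDc : constantCoeff D = 0 := by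
    have h2 : p ≠ 0 := by omega
    simp [D, h2]
  obtain ⟨U, hU, hU0⟩ := HenselianRing.is_henselian (I := Ideal.span {(X : PowerSeries F)}) f hfm
    (C a⁻¹) (by
      rw [hmem]
      simp [f, hBc, hDc]; ring) (by
      have h3 : IsUnit (Polynomial.eval (C a⁻¹) (Polynomial.derivative f)) := by
        rw [PowerSeries.isUnit_iff_constantCoeff]
        have : (1 + 1) * a⁻¹ - a⁻¹ = a⁻¹ := by ring
        simp [f, hBc, this, ha]
      exact h3.map _)
  rw [hmem] at hU0
  have hUc : constantCoeff U = a⁻¹ := by simpa [sub_eq_zero] using hU0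
  have hUroot : U ^ 2 - B * U + D = 0 := by
    have := hU.eq_zero
    simpa [f] using this
  have hUu : IsUnit U := by
    rw [PowerSeries.isUnit_iff_constantCoeff, hUc]; simpa using ha
  let s : LaurentSeries F := HahnSeries.single 1 1
  have hs : s ≠ 0 := by simp [s]
  let u : LaurentSeries F := HahnSeries.ofPowerSeries ℤ F U
  have hsX : HahnSeries.ofPowerSeries ℤ F X = s := HahnSeries.ofPowerSeries_X
  have hu0 : u ≠ 0 := (hUu.map (HahnSeries.ofPowerSeries ℤ F)).ne_zero
  have huo : u.order = 0 := by
    have h1 : u.coeff 0 ≠ 0 := by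
      have : u.coeff ((0 : ℕ) : ℤ) = PowerSeries.coeff 0 U := by
        simpa using HahnSeries.ofPowerSeries_apply_coeff (Γ := ℤ) U 0
      simp at this
      rw [this, hUc]; simpa using ha
    have h2 : ∀ V : LaurentSeries F, V ∈ Set.range (HahnSeries.ofPowerSeries ℤ F) → V ≠ 0 →
        0 ≤ V.order := by
      rintro _ ⟨V, rfl⟩ hV
      by_contra hlt
      push Not at hlt
      have h4 := HahnSeries.coeff_order_eq_zero.not.mpr hV
      apply h4
      generalize ((HahnSeries.ofPowerSeries ℤ F) V).order = o at hlt
      rw [HahnSeries.ofPowerSeries_apply]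
      apply HahnSeries.embDomain_of_notMem_range
      rintro ⟨n, hn⟩
      simp at hn
      omega
    exact le_antisymm (HahnSeries.order_le_of_coeff_ne_zero h1) (h2 u ⟨U, rfl⟩ hu0)
  have hso : s.order = 1 := HahnSeries.order_single one_ne_zero
  have hroot : HahnSeries.C a * u ^ 2 - (1 - s ^ (p - 1) - HahnSeries.C τ * s ^ p) * u
      + HahnSeries.C b * s ^ (2 * p) = 0 := by
    have h := congrArg (HahnSeries.ofPowerSeries ℤ F) hUroot
    simp only [B, D, map_add, map_sub, map_mul, map_pow, hsX, HahnSeries.ofPowerSeries_C,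
      map_one, map_zero] at h
    have haa : (HahnSeries.C a : LaurentSeries F) * HahnSeries.C a⁻¹ = 1 := by
      rw [← map_mul, mul_inv_cancel₀ ha, map_one]
    change u ^ 2 - _ * u + _ = 0 at h
    linear_combination (HahnSeries.C a : LaurentSeries F) * h - (-(1 - s ^ (p - 1) -
      HahnSeries.C τ * s ^ p) * u + HahnSeries.C b * s ^ (2 * p)) * haa
  have hinv : (s⁻¹).order = -1 := by
    have := HahnSeries.order_mul hs (inv_ne_zero hs)
    rw [mul_inv_cancel₀ hs, HahnSeries.order_one, hso] at this
    omega
  refine ⟨(s⁻¹) ^ p * u, s⁻¹, mul_ne_zero (pow_ne_zero _ (inv_ne_zero hs)) hu0, ?_,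
    inv_ne_zero hs, hinv, ?_⟩
  · rw [HahnSeries.order_mul (pow_ne_zero _ (inv_ne_zero hs)) hu0, HahnSeries.order_pow, hinv, huo]
    simp
  · obtain ⟨m, rfl⟩ : ∃ m, p = m + 1 := ⟨p - 1, by omega⟩
    simp only [Nat.add_sub_cancel] at hroot ⊢
    have h5' : (s ^ (m+1) * u) ≠ 0 := mul_ne_zero (pow_ne_zero _ hs) hu0
    have hss : s * s⁻¹ = 1 := mul_inv_cancel₀ hs
    have huu : u * u⁻¹ = 1 := mul_inv_cancel₀ hu0
    have hsp : s ^ (m + 1) * s⁻¹ ^ (m + 1) = 1 := by rw [← mul_pow, hss, one_pow]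
    rw [mul_inv, inv_pow, inv_inv]
    have h6 : (s ^ (m + 1) * u) * (s⁻¹ ^ (m + 1)) = (s ^ (m + 1) * u) * (s⁻¹ +
        HahnSeries.C a * (s⁻¹ ^ (m + 1) * u) + HahnSeries.C b * (s ^ (m + 1) * u⁻¹)
        + HahnSeries.C τ) := by
      have h7 : s ^ (m + 1) * s⁻¹ = s ^ m := by rw [pow_succ, mul_assoc, hss, mul_one]
      linear_combination (u - HahnSeries.C a * u ^ 2) * hsp - u * h7
        - HahnSeries.C b * s ^ (2 * (m + 1)) * huu - hroot
    have := mul_left_cancel₀ h5' h6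
    simpa using this

/-- Over some extension field there is a point at which monomials `x^α y^β` of distinct weights
`pα + β` are linearly independent. -/
lemma exists_generic_point {F : Type} [Field F] {p : ℕ} (hp : 2 ≤ p) {a b τ : F} (ha : a ≠ 0) :
    ∃ (L : Type) (_ : Field L) (_ : Algebra F L) (x y : L), x ≠ 0 ∧
      y ^ p = y + a • x + b • x⁻¹ + τ • (1 : L) ∧
      ∀ (ι : Type) (s : Finset ι) (c : ι → F) (α β : ι → ℕ),
        Set.InjOn (fun i => p * α i + β i) s →
        ∑ i ∈ s, c i • (x ^ α i * y ^ β i) = 0 → ∀ i ∈ s, c i = 0 := by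
  obtain ⟨x, y, hx, hxo, hy, hyo, h⟩ := exists_laurent_point (τ := τ) (b := b) hp ha
  let alg : Algebra F (LaurentSeries F) := (HahnSeries.C : F →+* LaurentSeries F).toAlgebra
  have hsm : ∀ (c : F) (z : LaurentSeries F), alg.toSMul.smul c z = HahnSeries.C c * z :=
    fun c z => rfl
  refine ⟨LaurentSeries F, inferInstance, alg, x, y, hx, ?_, ?_⟩
  · change y ^ p = y + HahnSeries.C a * x + HahnSeries.C b * x⁻¹ + HahnSeries.C τ * 1
    rw [h, mul_one]
  · intro ι s c α β hinj hsum
    classical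
    by_contra hne
    push Not at hne
    obtain ⟨i0, hi0, hci0⟩ := hne
    obtain ⟨i, hi, hmax⟩ := Finset.exists_max_image (s.filter fun i => c i ≠ 0)
      (fun i => p * α i + β i) ⟨i0, by simp [hi0, hci0]⟩
    rw [Finset.mem_filter] at hi
    have hord : ∀ j, (x ^ α j * y ^ β j).order = -((p * α j + β j : ℕ) : ℤ) := by
      intro j
      rw [HahnSeries.order_mul (pow_ne_zero _ hx) (pow_ne_zero _ hy), HahnSeries.order_pow,
        HahnSeries.order_pow, hxo, hyo]
      simp; ring
    have h2 := congrArg (fun z : LaurentSeries F => z.coeff (-((p * α i + β i : ℕ) : ℤ))) hsum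
    change (∑ i ∈ s, HahnSeries.C (c i) * (x ^ α i * y ^ β i)).coeff _ = 0 at h2
    rw [HahnSeries.coeff_sum, Finset.sum_eq_single i] at h2
    · rw [HahnSeries.C_mul_eq_smul, HahnSeries.coeff_smul, ← hord i] at h2
      simp only [smul_eq_mul, mul_eq_zero] at h2
      rcases h2 with h2 | h2
      · exact hi.2 h2
      · rw [HahnSeries.coeff_order_eq_zero] at h2
        exact mul_ne_zero (pow_ne_zero _ hx) (pow_ne_zero _ hy) h2
    · intro j hj hji
      rw [HahnSeries.C_mul_eq_smul, HahnSeries.coeff_smul]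
      by_cases hcj : c j = 0
      · simp [hcj]
      · have h3 := hmax j (by simp [hj, hcj])
        have h4 : p * α j + β j ≠ p * α i + β i := fun h => hji (hinj hj hi.1 h)
        rw [HahnSeries.coeff_eq_zero_of_lt_order, smul_zero]
        rw [hord]; omega
    · intro h3; exact absurd hi.1 h3

/-- The affine curve `y^p = y + a x + b / x + τ`, without its points over `x = 0`. -/
def asPoints {F : Type} [Field F] (p : ℕ) (a b τ : F) : Set (F × F) :=
  {e | e.1 ≠ 0 ∧ e.2 ^ p = e.2 + a * e.1 + b * e.1⁻¹ + τ}

/-- Stepanov's auxiliary function: a nontrivial combination of monomials of weight at most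
`P ^ 2 + 6 p ^ 2 P`, `P = p ^ r`, which vanishes at all points of the curve over the field with
`P ^ 2` elements. More products `u_i ^ P u_j` than the dimension of a space of functions containing
them yield a linear relation `∑ c_ij u_i ^ P u_j = 0`; taking `P`-th roots at the rational points,
where `u ^ (P ^ 2) = u`, shows that `∑ c_ij ^ P u_i u_j ^ P` vanishes there. This function is not
identically zero since its monomials have distinct weights. -/
lemma stepanov_relation {F : Type} [Field F] [Fintype F] {p r : ℕ} (hp : p.Prime) [CharP F p]
    (hr : 1 ≤ r) (hcard : Fintype.card F = (p ^ r) ^ 2) {a b τ : F} (ha : a ≠ 0) :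
    ∃ d : ℕ → F, (∃ k ≤ (p ^ r) ^ 2 + 6 * p ^ 2 * p ^ r, d k ≠ 0) ∧
      ∀ e ∈ asPoints p a b τ,
        ∑ k ∈ Finset.range ((p ^ r) ^ 2 + 6 * p ^ 2 * p ^ r + 1), d k * asMono p e.1 e.2 k = 0 := by
  classical
  set P := p ^ r with hP
  have hp2 := hp.two_le
  have hPp : p ≤ P := by rw [hP]; exact Nat.le_self_pow (by omega) p
  obtain ⟨L, _, _, x, y, hx, hxy, hind⟩ := exists_generic_point (b := b) (τ := τ) hp2 ha
  let E := asPoints p a b τ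
  -- functions on the rational points together with the generic point: relations are evaluated at
  -- the former, nonvanishing is detected at the latter
  let X : (E → F) × L := (fun e => e.1.1, x)
  let Xi : (E → F) × L := (fun e => e.1.1⁻¹, x⁻¹)
  let Y : (E → F) × L := (fun e => e.1.2, y)
  have hXX : X * Xi = 1 := by
    ext e
    · exact mul_inv_cancel₀ e.2.1
    · exact mul_inv_cancel₀ hx
  have hY : Y ^ p = Y + a • X + b • Xi + τ • 1 := by
    ext e
    · simpa [X, Xi, Y] using e.2.2
    · simpa [X, Xi, Y] using hxy
  have hdm : ∀ n, p * (n / p) + n % p = n := fun n => Nat.div_add_mod n p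
  have hml : ∀ n, n % p < p := fun n => Nat.mod_lt _ (by omega)
  -- the `p^r`-th powers of the first family times the second family are linearly dependent
  -- The factor `X ^ (p * (P + 1))` makes the elimination in `asMono_mem` possible. The value of `K`
  -- is just large enough for `P * (P + K)` to exceed the number `W₁ + 1` of monomials.
  let K := 3 * p ^ 2 + 1
  let W₁ := p * (p * (P + 1)) + (P - 1) * P + (P + K - 1)
  let V₁ := Submodule.span F (Set.range fun k : Fin (W₁ + 1) => asMono p X Y k)
  let f : Fin P × Fin (P + K) → V₁ := fun i =>
    ⟨X ^ (p * (P + 1) + (i.1 : ℕ) / p * P + (i.2 : ℕ) / p) * Y ^ ((i.1 : ℕ) % p * P + (i.2 : ℕ) % p), by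
      refine asMono_mem hp2 a b τ X Xi Y hXX hY _ _ _ ?_ ?_
      · have h1 : (i.1 : ℕ) % p * P ≤ p * P := Nat.mul_le_mul_right _ (hml _).le
        have h2 := hml (i.2 : ℕ)
        linarith [Nat.zero_le ((i.1 : ℕ) / p * P), Nat.zero_le ((i.2 : ℕ) / p)]
      · have h1 : (i.1 : ℕ) * P ≤ (P - 1) * P := Nat.mul_le_mul_right _ (by omega)
        have h2 : p * (p * (P + 1) + (i.1 : ℕ) / p * P + (i.2 : ℕ) / p) +
            ((i.1 : ℕ) % p * P + (i.2 : ℕ) % p) = p * (p * (P + 1)) + (i.1 : ℕ) * P + i.2 := by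
          conv_rhs => rw [← hdm (i.1 : ℕ), ← hdm (i.2 : ℕ)]
          ring
        rw [h2]
        simp only [W₁]
        omega⟩
  have hfd : FiniteDimensional F V₁ := FiniteDimensional.span_of_finite F (Set.finite_range _)
  have hnot : ¬ LinearIndependent F f := by
    intro hli
    have h1 := hli.fintype_card_le_finrank
    have h2 : Module.finrank F V₁ ≤ W₁ + 1 := by
      have := finrank_range_le_card (R := F) (fun k : Fin (W₁ + 1) => asMono p X Y k)
      rwa [Fintype.card_fin] at this
    have h3 : Fintype.card (Fin P × Fin (P + K)) = P * (P + K) := by simp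
    rw [h3] at h1
    have h4 := h1.trans h2
    simp only [W₁, K] at h4
    obtain ⟨t, ht⟩ : ∃ t, P = t + 1 := ⟨P - 1, by omega⟩
    have ht1 : 1 ≤ t := by omega
    rw [ht] at h4
    simp only [Nat.add_sub_cancel] at h4
    have h5 : t + 1 + (3 * p ^ 2 + 1) - 1 = t + 1 + 3 * p ^ 2 := by omega
    rw [h5] at h4
    nlinarith [Nat.zero_le (p ^ 2), mul_le_mul_of_nonneg_left ht1 (Nat.zero_le (p ^ 2))]
  rw [Fintype.not_linearIndependent_iff] at hnot
  obtain ⟨c, hc, i₀, hi₀⟩ := hnot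
  -- conditions at the rational points
  have hpt : ∀ e ∈ asPoints p a b τ,
      ∑ i : Fin P × Fin (P + K), c i * (asMono p e.1 e.2 i.1 ^ P * asMono p e.1 e.2 i.2) = 0 := by
    intro e he
    have h1 := congrArg (fun v : V₁ => (v : (E → F) × L).1 ⟨e, he⟩) hc
    simp only [f, X, Y, Submodule.coe_sum, Submodule.coe_smul, Prod.fst_sum,
      Finset.sum_apply, Prod.smul_fst, Pi.smul_apply, Prod.fst_mul, Pi.mul_apply, Prod.pow_fst,
      Pi.pow_apply, smul_eq_mul, ZeroMemClass.coe_zero, Prod.fst_zero, Pi.zero_apply] at h1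
    have h2 : e.1 ^ (p * (P + 1)) ≠ 0 := pow_ne_zero _ he.1
    apply mul_left_cancel₀ h2
    rw [mul_zero, ← h1, Finset.mul_sum]
    refine Finset.sum_congr rfl fun i _ => ?_
    simp only [asMono, mul_pow, ← pow_mul, pow_add]
    ring
  have hsp : ∀ g : Fin P × Fin (P + K) → F, (∑ i, g i) ^ P = ∑ i, g i ^ P := by
    have : Fact p.Prime := ⟨hp⟩
    intro g
    exact sum_pow_char_pow p r Finset.univ g
  -- take `p^r`-th roots
  let N := p * (P + 1)
  let w : (E → F) × L := ∑ i : Fin P × Fin (P + K), (c i ^ P) •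
    (X ^ (N + (i.1 : ℕ) / p + (i.2 : ℕ) / p * P) * Y ^ ((i.1 : ℕ) % p + (i.2 : ℕ) % p * P))
  have hw1 : w.1 = 0 := by
    ext ⟨e, he⟩
    have h0 := hpt e he
    simp only [w, X, Y, Prod.fst_sum,
      Finset.sum_apply, Prod.smul_fst, Pi.smul_apply, Prod.fst_mul, Pi.mul_apply, Prod.pow_fst,
      Pi.pow_apply, smul_eq_mul, Pi.zero_apply]
    have h3 : ∑ i : Fin P × Fin (P + K), c i ^ P * (e.1 ^ (N + (i.1 : ℕ) / p + (i.2 : ℕ) / p * P) *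
        e.2 ^ ((i.1 : ℕ) % p + (i.2 : ℕ) % p * P)) = e.1 ^ N *
        ∑ i : Fin P × Fin (P + K), c i ^ P * (asMono p e.1 e.2 i.1 * asMono p e.1 e.2 i.2 ^ P) := by
      rw [Finset.mul_sum]
      refine Finset.sum_congr rfl fun i _ => ?_
      simp only [asMono, mul_pow, ← pow_mul, pow_add]
      ring
    rw [h3]
    apply mul_eq_zero_of_right
    have hP0 : P ≠ 0 := by omega
    rw [← pow_eq_zero_iff hP0]
    rw [hsp, ← h0]
    refine Finset.sum_congr rfl fun i _ => ?_
    have hq : ∀ z : F, (z ^ P) ^ P = z := fun z => by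
      rw [← pow_mul, ← sq, ← hcard, FiniteField.pow_card]
    rw [mul_pow, mul_pow, hq, hq]
  have hw2 : w.2 ≠ 0 := by
    intro h0
    simp only [w, X, Y, Prod.snd_sum, Prod.smul_snd, Prod.snd_mul, Prod.pow_snd] at h0
    have h1 := hind _ Finset.univ (fun i : Fin P × Fin (P + K) => c i ^ P)
      (fun i => N + (i.1 : ℕ) / p + (i.2 : ℕ) / p * P) (fun i => (i.1 : ℕ) % p + (i.2 : ℕ) % p * P)
      (by
        intro i _ j _ hij
        have h2 : ∀ i : Fin P × Fin (P + K), p * (N + (i.1 : ℕ) / p + (i.2 : ℕ) / p * P) +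
            ((i.1 : ℕ) % p + (i.2 : ℕ) % p * P) = p * N + (i.1 + P * i.2) := by
          intro i
          conv_rhs => rw [← hdm (i.1 : ℕ), ← hdm (i.2 : ℕ)]
          ring
        simp only [h2] at hij
        have h3 : (i.1 : ℕ) + P * i.2 = j.1 + P * j.2 := by omega
        have h4 : (i.1 : ℕ) = j.1 := by
          have := congrArg (· % P) h3
          simpa [Nat.add_mul_mod_self_left, Nat.mod_eq_of_lt i.1.2, Nat.mod_eq_of_lt j.1.2] using this
        have h5 : (i.2 : ℕ) = j.2 := by
          rw [h4] at h3
          exact Nat.eq_of_mul_eq_mul_left (by omega : 0 < P) (by omega)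
        exact Prod.ext (Fin.ext h4) (Fin.ext h5)) h0 i₀ (Finset.mem_univ _)
    exact pow_ne_zero _ hi₀ h1
  -- reduce modulo the equation of the curve
  have hw3 : w ∈ Submodule.span F
      (Set.range fun k : Fin (P ^ 2 + 6 * p ^ 2 * P + 1) => asMono p X Y k) := by
    refine Submodule.sum_mem _ fun i _ => Submodule.smul_mem _ _ ?_
    refine asMono_mem hp2 a b τ X Xi Y hXX hY _ _ _ ?_ ?_
    · have h1 : (i.2 : ℕ) % p * P ≤ p * P := Nat.mul_le_mul_right _ (hml _).le
      have h2 := hml (i.1 : ℕ)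
      simp only [N]
      linarith [Nat.zero_le ((i.2 : ℕ) / p * P), Nat.zero_le ((i.1 : ℕ) / p)]
    · have h2 : p * (N + (i.1 : ℕ) / p + (i.2 : ℕ) / p * P) +
            ((i.1 : ℕ) % p + (i.2 : ℕ) % p * P) = p * N + (i.1 + P * i.2) := by
        conv_rhs => rw [← hdm (i.1 : ℕ), ← hdm (i.2 : ℕ)]
        ring
      rw [h2]
      have h3 : P * (i.2 : ℕ) ≤ P * (P + 3 * p ^ 2) := Nat.mul_le_mul_left _ (by
        have := i.2.2; simp only [K] at this; omega)
      have h4 := i.1.2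
      have h6 : 1 ≤ p ^ 2 := Nat.one_le_pow _ _ (by omega)
      simp only [N]
      nlinarith [Nat.mul_le_mul_left (p ^ 2) (by omega : 1 ≤ P), Nat.mul_le_mul_right P h6]
  rw [Submodule.mem_span_range_iff_exists_fun] at hw3
  obtain ⟨d, hd⟩ := hw3
  let d' : ℕ → F := fun k => if h : k < P ^ 2 + 6 * p ^ 2 * P + 1 then d ⟨k, h⟩ else 0
  have hdd : ∀ k : Fin (P ^ 2 + 6 * p ^ 2 * P + 1), d' k = d k := fun k => by
    simp only [d', k.2, dif_pos]
  refine ⟨d', ?_, ?_⟩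
  · by_contra hcon
    push Not at hcon
    apply hw2
    rw [← hd]
    have : ∀ k, d k = 0 := fun k => by rw [← hdd]; exact hcon k (by have := k.2; omega)
    simp [this]
  · intro e he
    rw [← Fin.sum_univ_eq_sum_range (fun k => d' k * asMono p e.1 e.2 k)]
    have h1 := congrArg (fun v : (E → F) × L => v.1 ⟨e, he⟩) hd
    simp only [hw1, Pi.zero_apply, Prod.fst_sum, Finset.sum_apply, Prod.smul_fst, Pi.smul_apply,
      smul_eq_mul, asMono, Prod.fst_mul, Prod.pow_fst, Pi.mul_apply, Pi.pow_apply, X, Y] at h1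
    simp only [hdd, asMono]
    exact h1

open Classical in
/-- The one-sided point count. The curve is invariant under `y ↦ y + i` for `i` in the prime field, so
each coefficient of the auxiliary function, as a polynomial in `y` of degree below `p`, vanishes;
one of these coefficients is a nonzero polynomial in `x`. -/
lemma asPoints_card_le {F : Type} [Field F] [Fintype F] {p r : ℕ} (hp : p.Prime)
    [CharP F p] (hr : 1 ≤ r) (hcard : Fintype.card F = (p ^ r) ^ 2) {a b τ : F} (ha : a ≠ 0) :
    (Finset.univ.filter fun e : F × F => e ∈ asPoints p a b τ).card
      ≤ (p ^ r) ^ 2 + 6 * p ^ 2 * p ^ r := by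
  classical
  have : Fact p.Prime := ⟨hp⟩
  obtain ⟨d, ⟨k₀, hk₀, hdk₀⟩, hd⟩ := stepanov_relation (b := b) (τ := τ) hp hr hcard ha
  set W := (p ^ r) ^ 2 + 6 * p ^ 2 * p ^ r
  have hp0 := hp.pos
  -- the coefficient of `y ^ (k₀ % p)` in the auxiliary function
  let D : Polynomial F := ∑ k ∈ (Finset.range (W + 1)).filter (fun k => k % p = k₀ % p),
    Polynomial.monomial (k / p) (d k)
  have hD : D ≠ 0 := by
    intro h
    apply hdk₀
    have h1 := congrArg (fun f => Polynomial.coeff f (k₀ / p)) h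
    simp only [D, Polynomial.finsetSum_coeff, Polynomial.coeff_monomial, Polynomial.coeff_zero] at h1
    rw [Finset.sum_eq_single k₀] at h1
    · simpa using h1
    · intro k hk hne
      rw [if_neg]
      intro h2
      apply hne
      rw [← Nat.div_add_mod k p, ← Nat.div_add_mod k₀ p, h2, (Finset.mem_filter.mp hk).2]
    · intro h; exact absurd (by simp; omega) h
  have hDdeg : D.natDegree ≤ W / p := by
    apply Polynomial.natDegree_sum_le_of_forall_le
    intro k hk
    refine (Polynomial.natDegree_monomial_le _).trans (Nat.div_le_div_right ?_)
    simp at hk; omega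
  have hcast : ∀ i : ℕ, ((i : F)) ^ p = i := fun i => by
    have := map_natCast (frobenius F p) i
    rwa [frobenius_def] at this
  have hroot : ∀ e ∈ asPoints p a b τ, D.eval e.1 = 0 := by
    rintro ⟨x, y⟩ he
    let G : Polynomial F := ∑ k ∈ Finset.range (W + 1), Polynomial.monomial (k % p) (d k * x ^ (k / p))
    have hG : G = 0 := by
      apply Polynomial.eq_zero_of_natDegree_lt_card_of_eval_eq_zero (ι := Fin p) G
        (f := fun i => y + ((i : ℕ) : F))
      · intro i j hij
        have h1 : ((i : ℕ) : F) = ((j : ℕ) : F) := add_left_cancel hij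
        exact Fin.ext (CharP.natCast_injOn_Iio F p i.2 j.2 h1)
      · intro i
        have h2 := hd (x, y + ((i : ℕ) : F)) ⟨he.1, by
          have := he.2
          simp only at this ⊢
          rw [add_pow_char, hcast, this]; ring⟩
        simp only [G, Polynomial.eval_finsetSum, Polynomial.eval_monomial]
        simpa only [asMono, mul_assoc] using h2
      · rw [Fintype.card_fin]
        refine lt_of_le_of_lt (Polynomial.natDegree_sum_le_of_forall_le (n := p - 1) _ _ ?_) (by omega)
        intro k _
        refine (Polynomial.natDegree_monomial_le _).trans ?_
        have := Nat.mod_lt k hp0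
        omega
    have h3 := congrArg (fun f => Polynomial.coeff f (k₀ % p)) hG
    simp only [G, Polynomial.finsetSum_coeff, Polynomial.coeff_monomial, Polynomial.coeff_zero] at h3
    rw [← Finset.sum_filter] at h3
    simpa only [D, Polynomial.eval_finsetSum, Polynomial.eval_monomial] using h3
  have h1 := Finset.card_le_mul_card_image (f := Prod.fst)
    (Finset.univ.filter fun e : F × F => e ∈ asPoints p a b τ) p (by
      intro x _
      let f : Polynomial F := Polynomial.X ^ p - Polynomial.X - Polynomial.C (a * x + b * x⁻¹ + τ)
      have hf : f.natDegree = p := by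
        have : f = Polynomial.X ^ p - (Polynomial.C 1 * Polynomial.X + Polynomial.C (a * x + b * x⁻¹ + τ)) := by
          simp only [f, Polynomial.C_1]; ring
        rw [this]
        apply Polynomial.natDegree_sub_eq_left_of_natDegree_lt ?_ |>.trans
        · simp
        · rw [Polynomial.natDegree_X_pow]
          exact lt_of_le_of_lt Polynomial.natDegree_linear_le hp.one_lt
      have hf0 : f ≠ 0 := by intro h; rw [h] at hf; simp at hf; omega
      calc _ ≤ (f.roots.toFinset).card := by
            apply Finset.card_le_card_of_injOn Prod.snd
            · rintro ⟨x', y⟩ he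
              simp only [Finset.coe_filter, Finset.mem_filter, Finset.mem_univ, true_and,
                Set.mem_ofPred_eq] at he
              obtain ⟨he, rfl⟩ := he
              simp only [Finset.mem_coe, Multiset.mem_toFinset, Polynomial.mem_roots hf0,
                Polynomial.IsRoot.def, f, Polynomial.eval_sub, Polynomial.eval_pow,
                Polynomial.eval_X, Polynomial.eval_C]
              have := he.2
              simp only at this
              rw [this]; ring
            · rintro ⟨x1, y1⟩ h1 ⟨x2, y2⟩ h2 h
              simp at h1 h2 h
              ext
              · exact h1.2.trans h2.2.symm
              · exact h
        _ ≤ Multiset.card f.roots := Multiset.toFinset_card_le _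
        _ ≤ f.natDegree := Polynomial.card_roots' f
        _ = p := hf)
  have h2 : ((Finset.univ.filter fun e : F × F => e ∈ asPoints p a b τ).image Prod.fst).card
      ≤ W / p := by
    calc _ ≤ (D.roots.toFinset).card := by
          apply Finset.card_le_card
          intro x hx
          simp only [Finset.mem_image, Finset.mem_filter, Finset.mem_univ, true_and] at hx
          obtain ⟨e, he, rfl⟩ := hx
          simp only [Multiset.mem_toFinset, Polynomial.mem_roots hD, Polynomial.IsRoot.def]
          exact hroot e he
      _ ≤ Multiset.card D.roots := Multiset.toFinset_card_le _
      _ ≤ D.natDegree := Polynomial.card_roots' D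
      _ ≤ W / p := hDdeg
  calc _ ≤ p * _ := h1
    _ ≤ p * (W / p) := Nat.mul_le_mul_left _ h2
    _ ≤ W := Nat.mul_div_le _ _

/-- Square-root cancellation, with a constant depending on the characteristic only, for
Kloosterman sums over `F` attached to a Frobenius-invariant character. -/
lemma norm_kloosterman_ext_le {F : Type} [Field F] [Fintype F] [DecidableEq F] {p r : ℕ}
    (hp : p.Prime) [CharP F p] (hr : 1 ≤ r) (hcard : Fintype.card F = (p ^ r) ^ 2) {a b : F}
    (ha : a ≠ 0) (Ψ : AddChar F ℂ) (hΨ : Ψ ≠ 1) (hfrob : ∀ y, Ψ (y ^ p) = Ψ y) :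
    ‖∑ x ∈ Finset.univ.filter (fun x : F => x ≠ 0), Ψ (a * x + b * x⁻¹)‖
      ≤ 6 * p ^ 2 * p ^ r + 1 := by
  classical
  set S := ∑ x ∈ Finset.univ.filter (fun x : F => x ≠ 0), Ψ (a * x + b * x⁻¹)
  set Q := Fintype.card F
  have hQ0 : 0 < Q := Fintype.card_pos
  let N : F → ℕ := fun τ => (Finset.univ.filter fun e : F × F => e ∈ asPoints p a b τ).card
  let U : Finset (F × F) := (Finset.univ.filter (fun x : F => x ≠ 0)) ×ˢ Finset.univ
  let t : F × F → F := fun e => e.2 ^ p - e.2 - a * e.1 - b * e.1⁻¹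
  have hfib : ∀ τ, (U.filter fun e => t e = τ) =
      Finset.univ.filter fun e : F × F => e ∈ asPoints p a b τ := by
    intro τ
    ext e
    rw [Finset.mem_filter, Finset.mem_filter, Finset.mem_product, Finset.mem_filter]
    simp only [t, asPoints, Finset.mem_univ, true_and, and_true, Set.mem_ofPred_eq]
    constructor
    · rintro ⟨h1, h2⟩; exact ⟨h1, by rw [← h2]; ring⟩
    · rintro ⟨h1, h2⟩; exact ⟨h1, by rw [h2]; ring⟩
  have hUcard : U.card = (Q - 1) * Q := by
    rw [Finset.card_product, Finset.filter_ne', Finset.card_erase_of_mem (Finset.mem_univ _),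
      Finset.card_univ]
  have hsumN : ∑ τ, N τ = (Q - 1) * Q := by
    rw [← hUcard, Finset.card_eq_sum_card_fiberwise (f := t) (t := Finset.univ) (by simp)]
    exact Finset.sum_congr rfl fun τ _ => by rw [hfib]
  have hQS : (Q : ℂ) * S = ∑ τ, Ψ (-τ) * N τ := by
    have h1 : ∑ e ∈ U, Ψ (-(t e)) = (Q : ℂ) * S := by
      rw [Finset.sum_product, Finset.mul_sum]
      refine Finset.sum_congr rfl fun x _ => ?_
      have : ∀ y, Ψ (-(t (x, y))) = Ψ (a * x + b * x⁻¹) := by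
        intro y
        have h2 : -(t (x, y)) = (a * x + b * x⁻¹) + y - y ^ p := by simp only [t]; ring
        have h3 : Ψ y ≠ 0 := by
          intro h0
          have := AddChar.norm_apply Ψ y
          rw [h0] at this; simp at this
        rw [h2, AddChar.map_sub_eq_div, AddChar.map_add_eq_mul, hfrob, mul_div_assoc,
          div_self h3, mul_one]
      simp only [this]
      simp [Q]
    rw [← h1, ← Finset.sum_fiberwise (s := U) (g := t)]
    refine Finset.sum_congr rfl fun τ _ => ?_
    have h4 : ∀ e ∈ U.filter (fun e => t e = τ), Ψ (-(t e)) = Ψ (-τ) := fun e he => by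
      rw [(Finset.mem_filter.mp he).2]
    rw [Finset.sum_congr rfl h4, Finset.sum_const, hfib, nsmul_eq_mul, mul_comm]
  have hzero : ∑ τ, Ψ (-τ) = 0 := by
    rw [← AddChar.sum_eq_zero_of_ne_one hΨ]
    exact Fintype.sum_equiv (Equiv.neg F) _ _ fun x => rfl
  set B : ℕ := (p ^ r) ^ 2 + 6 * p ^ 2 * p ^ r
  have hNB : ∀ τ, (N τ : ℝ) ≤ B := fun τ => by exact_mod_cast asPoints_card_le hp hr hcard ha
  -- Only an upper bound for each `N τ` is known; subtracting it makes all terms of one sign, and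
  -- the total `∑ τ, N τ` is known exactly.
  have h5 : (Q : ℂ) * S = ∑ τ, Ψ (-τ) * ((N τ : ℂ) - B) := by
    rw [hQS]
    simp only [mul_sub, Finset.sum_sub_distrib, ← Finset.sum_mul, hzero]
    simp
  have h6 : ‖(Q : ℂ) * S‖ ≤ ∑ τ, ((B : ℝ) - N τ) := by
    rw [h5]
    refine (norm_sum_le _ _).trans (Finset.sum_le_sum fun τ _ => ?_)
    rw [norm_mul, AddChar.norm_apply, one_mul, ← Complex.ofReal_natCast, ← Complex.ofReal_natCast,
      ← Complex.ofReal_sub, Complex.norm_real, Real.norm_eq_abs, abs_sub_comm,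
      abs_of_nonneg (sub_nonneg.mpr (hNB τ))]
  have h7 : ∑ τ, ((B : ℝ) - N τ) = Q * (6 * p ^ 2 * p ^ r + 1) := by
    rw [Finset.sum_sub_distrib,
      show ∑ τ, (N τ : ℝ) = ((∑ τ, N τ : ℕ) : ℝ) from (Nat.cast_sum ..).symm, hsumN, Finset.sum_const, Finset.card_univ,
      Nat.cast_mul, Nat.cast_sub hQ0]
    change Q • (B : ℝ) - _ = _
    have : (Q : ℝ) = (p ^ r : ℝ) ^ 2 := by rw [hcard]; push_cast; rfl
    simp only [nsmul_eq_mul, B, Nat.cast_add, Nat.cast_mul, Nat.cast_pow, Nat.cast_ofNat,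
      Nat.cast_one]
    rw [← this]
    ring
  rw [h7, norm_mul, Complex.norm_natCast] at h6
  exact le_of_mul_le_mul_left h6 (by exact_mod_cast hQ0)

/-! ### The `L`-function attached to Kloosterman sums -/

section LFunction
open Polynomial

variable {k : Type} [Field k]

/-- The finite set of monic polynomials of degree `n` over a finite field. -/
noncomputable def monicsOfDegree (k : Type) [Field k] [Finite k] (n : ℕ) : Finset k[X] :=
  Set.Finite.toFinset (s := {f : k[X] | f.Monic ∧ f.natDegree = n}) <| by
    apply Set.Finite.of_injOn (t := Set.univ) (f := fun (f : k[X]) (i : Fin n) => f.coeff i)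
    · intro _ _; trivial
    · rintro f ⟨hf, hfn⟩ g ⟨hg, hgn⟩ h
      ext i
      rcases lt_trichotomy i n with hi | rfl | hi
      · exact congrFun h ⟨i, hi⟩
      · rw [← hfn, hf.coeff_natDegree, hfn, ← hgn, hg.coeff_natDegree]
      · rw [coeff_eq_zero_of_natDegree_lt (by omega), coeff_eq_zero_of_natDegree_lt (by omega)]
    · exact Set.finite_univ

lemma mem_monicsOfDegree [Finite k] {n : ℕ} {f : k[X]} :
    f ∈ monicsOfDegree k n ↔ f.Monic ∧ f.natDegree = n := by
  simp [monicsOfDegree]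

open Classical in
/-- The completely multiplicative function on monic polynomials whose `L`-function is attached to
the Kloosterman sum of the character `ψ` with parameters `a`, `b`: for `f = ∏ (X - xᵢ)` with
`f(0) ≠ 0` its value is `ψ (a ∑ xᵢ + b ∑ xᵢ⁻¹)`. -/
noncomputable def kloosChar (ψ : AddChar k ℂ) (a b : k) (f : k[X]) : ℂ :=
  if f.coeff 0 = 0 then 0 else ψ (-(a * f.nextCoeff + b * (f.coeff 1 / f.coeff 0)))

lemma kloosChar_mul (ψ : AddChar k ℂ) (a b : k) {f g : k[X]} (hf : f.Monic) (hg : g.Monic) :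
    kloosChar ψ a b (f * g) = kloosChar ψ a b f * kloosChar ψ a b g := by
  unfold kloosChar
  rw [mul_coeff_zero, mul_coeff_one, hf.nextCoeff_mul hg]
  by_cases h1 : f.coeff 0 = 0
  · simp [h1]
  by_cases h2 : g.coeff 0 = 0
  · simp [h2]
  rw [if_neg (mul_ne_zero h1 h2), if_neg h1, if_neg h2, ← AddChar.map_add_eq_mul]
  congr 1
  field_simp
  ring

lemma kloosChar_one (ψ : AddChar k ℂ) (a b : k) : kloosChar ψ a b 1 = 1 := by
  simp [kloosChar, nextCoeff, coeff_one]

lemma kloosChar_pow (ψ : AddChar k ℂ) (a b : k) {f : k[X]} (hf : f.Monic) (j : ℕ) :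
    kloosChar ψ a b (f ^ j) = kloosChar ψ a b f ^ j := by
  induction j with
  | zero => simp [kloosChar_one]
  | succ j ih => rw [pow_succ, kloosChar_mul ψ a b (hf.pow j) hf, ih, pow_succ]

variable [Finite k]

/-- The `n`-th coefficient of the `L`-function of `kloosChar`. -/
noncomputable def lCoeff (ψ : AddChar k ℂ) (a b : k) (n : ℕ) : ℂ :=
  ∑ f ∈ monicsOfDegree k n, kloosChar ψ a b f

open Classical in
/-- The monic irreducible polynomials of degree dividing `n` (for `n ≥ 1`). -/
noncomputable def irredsDvd (k : Type) [Field k] [Finite k] (n : ℕ) : Finset k[X] :=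
  n.divisors.biUnion fun d => (monicsOfDegree k d).filter Irreducible

lemma mem_irredsDvd {n : ℕ} {P : k[X]} :
    P ∈ irredsDvd k n ↔ n ≠ 0 ∧ P.Monic ∧ Irreducible P ∧ P.natDegree ∣ n := by
  classical
  simp only [irredsDvd, Finset.mem_biUnion, Nat.mem_divisors, Finset.mem_filter,
    mem_monicsOfDegree]
  constructor
  · rintro ⟨d, ⟨h1, h2⟩, ⟨h3, rfl⟩, h4⟩; exact ⟨h2, h3, h4, h1⟩
  · rintro ⟨h1, h2, h3, h4⟩; exact ⟨_, ⟨h4, h1⟩, ⟨h2, rfl⟩, h3⟩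

/-- The `n`-th coefficient of the logarithmic derivative `T L'(T)/L(T)`, as a sum over primes. -/
noncomputable def lLog (ψ : AddChar k ℂ) (a b : k) (n : ℕ) : ℂ :=
  ∑ P ∈ irredsDvd k n, (P.natDegree : ℂ) * kloosChar ψ a b P ^ (n / P.natDegree)

/-- The degree of a monic polynomial, as a sum over the prime powers dividing it. -/
lemma natDegree_eq_sum_prime_powers {n : ℕ} {f : k[X]} (hf : f.Monic) (hn : f.natDegree = n) :
    (n : ℂ) = ∑ m ∈ Finset.Icc 1 n, ∑ P ∈ irredsDvd k m,
      open Classical in if P ^ (m / P.natDegree) ∣ f then (P.natDegree : ℂ) else 0 := by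
  classical
  have hf0 := hf.ne_zero
  set s := UniqueFactorizationMonoid.normalizedFactors f with hs
  have hmon : ∀ P ∈ s, P.Monic := fun P hP => by
    have h := monic_normalize (UniqueFactorizationMonoid.irreducible_of_normalized_factor P hP).ne_zero
    rwa [UniqueFactorizationMonoid.normalize_normalized_factor P hP] at h
  have hprod : s.prod = f :=
    eq_of_monic_of_associated (by simpa using monic_multiset_prod_of_monic s (fun P => P) hmon) hf
      (UniqueFactorizationMonoid.prod_normalizedFactors hf0)
  have hirr : ∀ P ∈ s, Irreducible P :=
    fun P hP => UniqueFactorizationMonoid.irreducible_of_normalized_factor P hP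
  have hpow : ∀ P : k[X], P.Monic → Irreducible P → ∀ j, (P ^ j ∣ f ↔ j ≤ s.count P) := by
    intro P hP hPi j
    rw [pow_dvd_iff_le_emultiplicity, UniqueFactorizationMonoid.emultiplicity_eq_count_normalizedFactors hPi hf0,
      hP.normalize_eq_self]
    exact Nat.cast_le
  have hdeg : n = ∑ P ∈ s.toFinset, s.count P * P.natDegree := by
    rw [← hn]
    conv_lhs => rw [← hprod]
    rw [natDegree_multiset_prod_of_monic _ hmon, Finset.sum_multiset_map_count]
    simp
  have hle : ∀ P ∈ s.toFinset, s.count P * P.natDegree ≤ n := by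
    intro P hP
    conv_rhs => rw [hdeg]
    exact Finset.single_le_sum (f := fun P => s.count P * P.natDegree) (fun _ _ => Nat.zero_le _) hP
  conv_lhs => rw [hdeg]
  push_cast
  simp only [← Finset.sum_filter]
  rw [Finset.sum_sigma']
  symm
  have : ∀ P ∈ s.toFinset, ((s.count P : ℂ) * P.natDegree) = ∑ j ∈ Finset.Icc 1 (s.count P), (P.natDegree : ℂ) := by
    intro P _; simp
  rw [Finset.sum_congr rfl this, Finset.sum_sigma']
  refine Finset.sum_bij' (fun x _ => ⟨x.2, x.1 / x.2.natDegree⟩) (fun x _ => ⟨x.2 * x.1.natDegree, x.1⟩)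
    ?_ ?_ ?_ ?_ ?_
  · rintro ⟨m, P⟩ h
    simp only [Finset.mem_sigma, Finset.mem_Icc, Finset.mem_filter, mem_irredsDvd,
      Multiset.mem_toFinset] at h ⊢
    obtain ⟨⟨h1, h2⟩, ⟨h3, h4, h5, h6⟩, h7⟩ := h
    rw [hpow P h4 h5] at h7
    have h8 : 1 ≤ m / P.natDegree := Nat.div_pos (Nat.le_of_dvd (by omega) h6) h5.natDegree_pos
    exact ⟨Multiset.one_le_count_iff_mem.mp (h8.trans h7), h8, h7⟩
  · rintro ⟨P, j⟩ h
    simp only [Finset.mem_sigma, Finset.mem_Icc, Finset.mem_filter, mem_irredsDvd,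
      Multiset.mem_toFinset] at h ⊢
    obtain ⟨h1, h2, h3⟩ := h
    have hpos := (hirr P h1).natDegree_pos
    refine ⟨⟨Nat.mul_pos h2 hpos, (Nat.mul_le_mul_right _ h3).trans (hle P (by simpa using h1))⟩, 
      ⟨(Nat.mul_pos h2 hpos).ne', hmon P h1, hirr P h1, dvd_mul_left _ _⟩, ?_⟩
    rw [Nat.mul_div_cancel _ hpos, hpow P (hmon P h1) (hirr P h1)]
    exact h3
  · rintro ⟨m, P⟩ h
    simp only [Finset.mem_sigma, Finset.mem_Icc, Finset.mem_filter, mem_irredsDvd] at h ⊢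
    rw [Nat.div_mul_cancel h.2.1.2.2.2]
  · rintro ⟨P, j⟩ h
    simp only [Finset.mem_sigma, Multiset.mem_toFinset] at h ⊢
    rw [Nat.mul_div_cancel _ (hirr P h.1).natDegree_pos]
  · rintro ⟨m, P⟩ h
    rfl

/-- The identity `T L' = (T L'/L) · L`, coefficient by coefficient. -/
lemma nat_mul_lCoeff (ψ : AddChar k ℂ) (a b : k) (n : ℕ) :
    (n : ℂ) * lCoeff ψ a b n =
      ∑ m ∈ Finset.Icc 1 n, lLog ψ a b m * lCoeff ψ a b (n - m) := by
  classical
  unfold lCoeff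
  rw [Finset.mul_sum]
  have h1 : ∀ f ∈ monicsOfDegree k n, (n : ℂ) * kloosChar ψ a b f =
      ∑ m ∈ Finset.Icc 1 n, ∑ P ∈ irredsDvd k m,
        if P ^ (m / P.natDegree) ∣ f then (P.natDegree : ℂ) * kloosChar ψ a b f else 0 := by
    intro f hf
    rw [mem_monicsOfDegree] at hf
    conv_lhs => rw [natDegree_eq_sum_prime_powers hf.1 hf.2]
    simp only [Finset.sum_mul, ite_mul, zero_mul]
  rw [Finset.sum_congr rfl h1, Finset.sum_comm]
  refine Finset.sum_congr rfl fun m hm => ?_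
  rw [Finset.mem_Icc] at hm
  rw [Finset.sum_comm, lLog, Finset.sum_mul]
  refine Finset.sum_congr rfl fun P hP => ?_
  obtain ⟨h3, h4, h5, h6⟩ := mem_irredsDvd.mp hP
  rw [← Finset.sum_filter, Finset.mul_sum]
  set j := m / P.natDegree
  have hj : (P ^ j).natDegree = m := by rw [h4.natDegree_pow, Nat.div_mul_cancel h6]
  have hPj : (P ^ j).Monic := h4.pow j
  symm
  refine Finset.sum_bij (fun g _ => P ^ j * g) ?_ ?_ ?_ ?_
  · intro g hg
    rw [mem_monicsOfDegree] at hg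
    rw [Finset.mem_filter, mem_monicsOfDegree]
    refine ⟨⟨hPj.mul hg.1, ?_⟩, dvd_mul_right _ _⟩
    rw [hPj.natDegree_mul hg.1, hj, hg.2]; omega
  · intro g _ g' _ h
    exact mul_left_cancel₀ hPj.ne_zero h
  · intro f hf
    rw [Finset.mem_filter, mem_monicsOfDegree] at hf
    obtain ⟨⟨hf1, hf2⟩, g, rfl⟩ := hf
    have hg : g.Monic := hPj.of_mul_monic_left hf1
    refine ⟨g, ?_, rfl⟩
    rw [mem_monicsOfDegree]
    rw [hPj.natDegree_mul hg, hj] at hf2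
    exact ⟨hg, by omega⟩
  · intro g hg
    rw [mem_monicsOfDegree] at hg
    rw [kloosChar_mul ψ a b hPj hg.1, kloosChar_pow ψ a b h4]
    ring

end LFunction

section LFunction
open Polynomial

variable {k : Type} [Field k] [Finite k]

lemma lCoeff_zero (ψ : AddChar k ℂ) (a b : k) : lCoeff ψ a b 0 = 1 := by
  have : monicsOfDegree k 0 = {1} := by
    ext f
    rw [mem_monicsOfDegree, Finset.mem_singleton]
    constructor
    · rintro ⟨h1, h2⟩; exact h1.natDegree_eq_zero.mp h2
    · rintro rfl; simp
  rw [lCoeff, this, Finset.sum_singleton, kloosChar_one]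

lemma lCoeff_one [Fintype k] [DecidableEq k] (ψ : AddChar k ℂ) (a b : k) :
    lCoeff ψ a b 1 = ∑ v ∈ Finset.univ.filter (fun v : k => v ≠ 0), ψ (a * v + b * v⁻¹) := by
  have h1 : lCoeff ψ a b 1 = ∑ v : k, if v = 0 then 0 else ψ (a * v + b * v⁻¹) := by
    rw [lCoeff]
    symm
    refine Finset.sum_bij (fun v _ => X - C v) ?_ ?_ ?_ ?_
    · intro v _; rw [mem_monicsOfDegree]; exact ⟨monic_X_sub_C v, natDegree_X_sub_C v⟩
    · intro v _ w _ h
      have := congrArg (fun f => coeff f 0) h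
      simpa using this
    · intro f hf
      rw [mem_monicsOfDegree] at hf
      refine ⟨-f.coeff 0, Finset.mem_univ _, ?_⟩
      rw [map_neg, sub_neg_eq_add]
      conv_rhs => rw [eq_X_add_C_of_natDegree_le_one hf.2.le]
      have := hf.1.coeff_natDegree
      rw [hf.2] at this
      rw [this, C_1, one_mul]
    · intro v _
      simp only [kloosChar, nextCoeff_X_sub_C, coeff_sub, coeff_X_zero, zero_sub,
        neg_eq_zero, coeff_X_one, coeff_C, one_ne_zero, if_false, sub_zero]
      split_ifs with h
      · rfl
      · congr 1
        field_simp
        ring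
  rw [h1, Finset.sum_filter]
  exact Finset.sum_congr rfl fun v _ => by by_cases h : v = 0 <;> simp [h]

/-- A monic quadratic `X ^ 2 - s X + n` with `n ≠ 0` contributes `ψ (a s + b s / n)`; summing over `s`
leaves only the terms with `a + b / n = 0`. -/
lemma lCoeff_two [Fintype k] (ψ : AddChar k ℂ) {a b : k} (ha : a ≠ 0)
    (hb : b ≠ 0) (hψ : ψ ≠ 1) : lCoeff ψ a b 2 = Fintype.card k := by
  classical
  have h1 : lCoeff ψ a b 2 = ∑ v : k, ∑ u : k, if v = 0 then 0 else ψ (u * (-(a + b / v))) := by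
    rw [lCoeff, ← Finset.sum_product' Finset.univ Finset.univ
      (fun v u : k => if v = 0 then (0 : ℂ) else ψ (u * (-(a + b / v))))]
    symm
    have hdeg : ∀ u v : k, (C u * X + C v : k[X]).natDegree < 2 := fun u v =>
      lt_of_le_of_lt natDegree_linear_le one_lt_two
    have hdeg' : ∀ u v : k, (C u * X + C v : k[X]).degree < 2 := fun u v =>
      lt_of_le_of_lt degree_linear_le (by exact_mod_cast one_lt_two)
    have hn : ∀ u v : k, (X ^ 2 + (C u * X + C v) : k[X]).natDegree = 2 := fun u v => by
      rw [natDegree_add_eq_left_of_natDegree_lt (by rw [natDegree_X_pow]; exact hdeg u v),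
        natDegree_X_pow]
    refine Finset.sum_bij (fun x _ => X ^ 2 + (C x.2 * X + C x.1)) ?_ ?_ ?_ ?_
    · rintro ⟨v, u⟩ _; rw [mem_monicsOfDegree]
      exact ⟨monic_X_pow_add (by exact_mod_cast hdeg' u v), hn u v⟩
    · rintro ⟨v, u⟩ _ ⟨v', u'⟩ _ h
      have h0 := congrArg (fun f => coeff f 0) h
      have h1 := congrArg (fun f => coeff f 1) h
      simp [coeff_X_pow, coeff_C] at h0 h1
      simp [h0, h1]
    · intro f hf
      rw [mem_monicsOfDegree] at hf
      refine ⟨(f.coeff 0, f.coeff 1), Finset.mem_univ _, ?_⟩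
      have h2 := f.as_sum_range_C_mul_X_pow
      have h3 := hf.1.coeff_natDegree
      rw [hf.2] at h2 h3
      conv_rhs => rw [h2]
      simp [Finset.sum_range_succ, h3]
      ring
    · rintro ⟨v, u⟩ _
      simp only [kloosChar]
      rw [nextCoeff_of_natDegree_pos (by rw [hn]; norm_num), hn]
      simp [coeff_X_pow, coeff_C]
      split_ifs with h
      · rfl
      · congr 1
        field_simp
  rw [h1]
  have h2 : ∀ v : k, (∑ u : k, if v = 0 then 0 else ψ (u * (-(a + b / v)))) =
      if v = -(b / a) then (Fintype.card k : ℂ) else 0 := by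
    intro v
    by_cases hv : v = 0
    · subst hv
      rw [if_neg]
      · simp
      · intro h
        have : b / a = 0 := by rw [eq_comm, neg_eq_zero] at h; exact h
        exact div_ne_zero hb ha this
    · simp only [if_neg hv]
      have := AddChar.sum_mulShift (-(a + b / v)) (AddChar.IsPrimitive.of_ne_one hψ)
      rw [this]
      have h3 : (-(a + b / v) = 0) ↔ v = -(b / a) := by
        constructor
        · intro h
          field_simp at h
          field_simp
          linear_combination -h
        · rintro rfl
          field_simp
          ring
      simp only [h3]
      split_ifs <;> simp
  rw [Finset.sum_congr rfl fun v _ => h2 v]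
  simp

lemma lCoeff_of_three_le (ψ : AddChar k ℂ) {a b : k} (ha : a ≠ 0) (hψ : ψ ≠ 1) {n : ℕ}
    (hn : 3 ≤ n) : lCoeff ψ a b n = 0 := by
  obtain ⟨t, ht⟩ := (AddChar.ne_one_iff ).mp hψ
  set s := -t / a
  have hs : ψ (-(a * s)) ≠ 1 := by
    have : -(a * s) = t := by simp only [s]; field_simp
    rwa [this]
  have h1 : ∀ (s : k), ∀ f ∈ monicsOfDegree k n, f + C s * X ^ (n - 1) ∈ monicsOfDegree k n ∧
      kloosChar ψ a b (f + C s * X ^ (n - 1)) = ψ (-(a * s)) * kloosChar ψ a b f := by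
    intro s f hf
    rw [mem_monicsOfDegree] at hf ⊢
    have hd : (C s * X ^ (n - 1) : k[X]).degree < f.degree := by
      rw [degree_eq_natDegree hf.1.ne_zero, hf.2]
      refine lt_of_le_of_lt (degree_C_mul_X_pow_le _ _) ?_
      exact_mod_cast (by omega : n - 1 < n)
    have hmon := hf.1.add_of_left hd
    have hnat : (f + C s * X ^ (n - 1)).natDegree = n := by
      rw [← natDegree_eq_of_degree_eq (degree_add_eq_left_of_degree_lt hd).symm, hf.2]
    refine ⟨⟨hmon, hnat⟩, ?_⟩
    have hc0 : (f + C s * X ^ (n - 1)).coeff 0 = f.coeff 0 := by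
      rw [coeff_add, coeff_C_mul_X_pow, if_neg (by omega), add_zero]
    unfold kloosChar
    rw [hc0, nextCoeff_of_natDegree_pos (by omega), nextCoeff_of_natDegree_pos (p := f) (by omega), hnat, hf.2]
    simp only [coeff_add, coeff_C_mul, coeff_X_pow, if_true, mul_one]
    rw [if_neg (show ¬ 1 = n - 1 by omega)]
    simp only [mul_zero, add_zero]
    split_ifs
    · simp
    · rw [← AddChar.map_add_eq_mul]; congr 1; ring
  have h2 : lCoeff ψ a b n = ψ (-(a * s)) * lCoeff ψ a b n := by
    rw [lCoeff, Finset.mul_sum]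
    symm
    refine Finset.sum_bij' (fun f _ => f + C s * X ^ (n - 1)) (fun f _ => f + C (-s) * X ^ (n - 1))
      (fun f hf => (h1 s f hf).1) (fun f hf => (h1 _ f hf).1) ?_ ?_ (fun f hf => (h1 s f hf).2.symm)
    · intro f _; simp
    · intro f _; simp
  have h3 : (1 - ψ (-(a * s))) * lCoeff ψ a b n = 0 := by rw [sub_mul, one_mul, ← h2, sub_self]
  exact (mul_eq_zero.mp h3).resolve_left (sub_ne_zero.mpr (Ne.symm hs))

/-- The power sums of the inverse zeros of the `L`-function. -/
lemma lLog_eq [Fintype k] (ψ : AddChar k ℂ) {a b : k} (ha : a ≠ 0) (hb : b ≠ 0) (hψ : ψ ≠ 1)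
    {α β : ℂ} (hs : α + β = -lCoeff ψ a b 1) (hp : α * β = Fintype.card k) (n : ℕ) (hn : 1 ≤ n) :
    lLog ψ a b n = -(α ^ n + β ^ n) := by
  have h := nat_mul_lCoeff ψ a b n
  have h1 : lCoeff ψ a b 1 = -(α + β) := by rw [hs, neg_neg]
  have h2 : lCoeff ψ a b 2 = α * β := by rw [hp, lCoeff_two ψ ha hb hψ]
  induction n using Nat.strong_induction_on with
  | _ n ih =>
  match n, hn with
  | 1, _ =>
    simp [lCoeff_zero, h1] at h
    rw [← h]; ring
  | 2, _ =>
    have i1 := ih 1 (by norm_num) (by norm_num) (nat_mul_lCoeff ψ a b 1)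
    rw [Finset.sum_Icc_succ_top (by norm_num)] at h
    simp [lCoeff_zero, h1, h2, i1] at h
    linear_combination -h
  | m + 3, _ =>
    have i1 := ih (m + 1) (by omega) (by omega) (nat_mul_lCoeff ψ a b _)
    have i2 := ih (m + 2) (by omega) (by omega) (nat_mul_lCoeff ψ a b _)
    rw [Finset.sum_Icc_succ_top (by omega), Finset.sum_Icc_succ_top (by omega),
      Finset.sum_Icc_succ_top (by omega), Finset.sum_eq_zero] at h
    · rw [lCoeff_of_three_le ψ ha hψ (by omega), i1, i2, show m + 3 - (m + 1) = 2 by omega,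
        show m + 3 - (m + 1 + 1) = 1 by omega, show m + 3 - (m + 1 + 1 + 1) = 0 by omega, h1, h2,
        lCoeff_zero] at h
      linear_combination -h
    · intro j hj
      rw [Finset.mem_Icc] at hj
      rw [lCoeff_of_three_le ψ ha hψ (by omega), mul_zero]

end LFunction

section LFunction
open Polynomial

/-- The minimal polynomial of `x⁻¹` is the normalized reversal of that of `x`. -/
lemma nextCoeff_minpoly_inv {k K : Type} [Field k] [Field K] [Algebra k K] [FiniteDimensional k K]
    {x : K} (hx : x ≠ 0) :
    (minpoly k x⁻¹).nextCoeff = (minpoly k x).coeff 1 / (minpoly k x).coeff 0 ∧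
      (minpoly k x⁻¹).natDegree = (minpoly k x).natDegree := by
  have hix : IsIntegral k x := .of_finite k x
  have hiy : IsIntegral k x⁻¹ := .of_finite k x⁻¹
  set P := minpoly k x with hP
  have h0 : P.coeff 0 ≠ 0 := minpoly.coeff_zero_ne_zero hix hx
  have hPm : P.Monic := minpoly.monic hix
  have hpos : 0 < P.natDegree := minpoly.natDegree_pos hix
  have htr : P.natTrailingDegree = 0 := by
    rw [natTrailingDegree_eq_zero]; right; exact h0
  have hdeg : (minpoly k x⁻¹).natDegree = P.natDegree := by
    have h1 := IntermediateField.adjoin.finrank hix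
    have h2 := IntermediateField.adjoin.finrank hiy
    rw [← h1, ← h2]
    have : IntermediateField.adjoin k {x⁻¹} = IntermediateField.adjoin k {x} := by
      apply le_antisymm
      · rw [IntermediateField.adjoin_simple_le_iff]
        exact inv_mem (IntermediateField.mem_adjoin_simple_self k x)
      · rw [IntermediateField.adjoin_simple_le_iff]
        have := inv_mem (IntermediateField.mem_adjoin_simple_self k x⁻¹)
        rwa [inv_inv] at this
    rw [this]
  set G : k[X] := C (P.coeff 0)⁻¹ * P.reverse with hG
  have hGdeg : G.natDegree = P.natDegree := by
    rw [hG, natDegree_C_mul (inv_ne_zero h0), reverse_natDegree, htr, Nat.sub_zero]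
  have hGm : G.Monic := by
    rw [Monic, hG, leadingCoeff_mul, leadingCoeff_C, reverse_leadingCoeff, trailingCoeff, htr,
      inv_mul_cancel₀ h0]
  have hroot : aeval x⁻¹ G = 0 := by
    rw [hG, map_mul]
    let _ : Invertible x := invertibleOfNonzero hx
    have := (eval₂_reverse_eq_zero_iff (algebraMap k K) x P).mpr (minpoly.aeval k x)
    rw [invOf_eq_inv] at this
    rw [aeval_def x⁻¹ P.reverse, this, mul_zero]
  have hdvd := minpoly.dvd k x⁻¹ hroot
  have heq : G = minpoly k x⁻¹ := by
    apply eq_of_monic_of_dvd_of_natDegree_le (minpoly.monic hiy) hGm hdvd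
    rw [hGdeg, hdeg]
  refine ⟨?_, hdeg⟩
  rw [← heq, nextCoeff_of_natDegree_pos (by omega), hGdeg, hG, coeff_C_mul, coeff_reverse,
    revAt_le (by omega), show P.natDegree - (P.natDegree - 1) = 1 by omega]
  field_simp

/-- The character sum over an extension field, expressed through minimal polynomials. -/
lemma char_trace_eq_kloosChar {k K : Type} [Field k] [Field K] [Algebra k K] [FiniteDimensional k K]
    (ψ : AddChar k ℂ) (a b : k) {x : K} (hx : x ≠ 0) :
    ψ (Algebra.trace k K (a • x + b • x⁻¹)) =
      kloosChar ψ a b (minpoly k x) ^ (Module.finrank k K / (minpoly k x).natDegree) := by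
  have hix : IsIntegral k x := .of_finite k x
  have hiy : IsIntegral k x⁻¹ := .of_finite k x⁻¹
  obtain ⟨h1, h2⟩ := nextCoeff_minpoly_inv (k := k) hx
  have hd : ∀ y : K, IsIntegral k y → Module.finrank (IntermediateField.adjoin k {y}) K =
      Module.finrank k K / (minpoly k y).natDegree := by
    intro y hy
    rw [← IntermediateField.adjoin.finrank hy]
    exact Nat.eq_div_of_mul_eq_right Module.finrank_pos.ne' (Module.finrank_mul_finrank _ _ _)
  rw [map_add, map_smul, map_smul, trace_eq_finrank_mul_minpoly_nextCoeff,
    trace_eq_finrank_mul_minpoly_nextCoeff, h1, hd x hix, hd _ hiy, h2, kloosChar,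
    if_neg (minpoly.coeff_zero_ne_zero hix hx), ← AddChar.map_nsmul_eq_pow]
  congr 1
  simp only [smul_eq_mul, nsmul_eq_mul]
  ring

open Classical in
lemma card_minpoly_eq {k K : Type} [Field k] [Field K] [Finite k] [Fintype K]
    [Algebra k K] {P : k[X]} (hP : P ∈ irredsDvd k (Module.finrank k K)) :
    (Finset.univ.filter fun x : K => minpoly k x = P).card = P.natDegree := by
  classical
  obtain ⟨h0, h1, h2, h3⟩ := mem_irredsDvd.mp hP
  have : Fintype k := Fintype.ofFinite k
  have hdvd := h2.natDegree_dvd_iff_dvd_X_pow_card_pow_sub_X.mp h3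
  have hcard : Nat.card k ^ Module.finrank k K = Fintype.card K := by
    rw [Nat.card_eq_fintype_card, ← Module.card_eq_pow_finrank (K := k) (V := K)]
  rw [hcard] at hdvd
  have hsplit : (P.map (algebraMap k K)).Splits := by
    have hm : (X ^ Fintype.card K - X : k[X]).map (algebraMap k K) = X ^ Fintype.card K - X := by simp
    refine Splits.of_dvd (g := X ^ Fintype.card K - X) ?_ ?_ (hm ▸ Polynomial.map_dvd _ hdvd)
    · rw [← hm]; exact (FiniteField.isSplittingField_sub K k).splits
    · exact FiniteField.X_pow_card_sub_X_ne_zero K Fintype.one_lt_card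
  have hsep : P.Separable := PerfectField.separable_of_irreducible h2
  have := card_rootSet_eq_natDegree hsep hsplit
  rw [← this, ← Set.toFinset_card]
  refine congrArg Finset.card ?_
  ext x
  simp only [Finset.mem_filter, Finset.mem_univ, true_and, Set.mem_toFinset, mem_rootSet]
  constructor
  · rintro rfl; exact ⟨h2.ne_zero, minpoly.aeval _ _⟩
  · rintro ⟨_, h⟩; exact (minpoly.eq_of_irreducible_of_monic h2 h h1).symm

/-- The coefficients of the logarithmic derivative are the Kloosterman sums over extension fields. -/
lemma lLog_eq_sum {k K : Type} [Field k] [Field K] [Finite k] [Fintype K] [DecidableEq K]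
    [Algebra k K] (ψ : AddChar k ℂ) (a b : k) :
    lLog ψ a b (Module.finrank k K) =
      ∑ x ∈ Finset.univ.filter (fun x : K => x ≠ 0),
        ψ (Algebra.trace k K (a • x + b • x⁻¹)) := by
  classical
  have h0 : Module.finrank k K ≠ 0 := Module.finrank_pos.ne'
  have h1 : ∀ x ∈ Finset.univ.filter (fun x : K => x ≠ 0),
      ψ (Algebra.trace k K (a • x + b • x⁻¹)) =
      kloosChar ψ a b (minpoly k x) ^ (Module.finrank k K / (minpoly k x).natDegree) :=
    fun x hx => char_trace_eq_kloosChar ψ a b (Finset.mem_filter.mp hx).2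
  have hdvd : ∀ x : K, (minpoly k x).natDegree ∣ Module.finrank k K := fun x => by
    rw [← IntermediateField.adjoin.finrank (.of_finite k x)]
    exact Dvd.intro _ (Module.finrank_mul_finrank k (IntermediateField.adjoin k {x}) K)
  rw [Finset.sum_congr rfl h1, Finset.sum_filter_of_ne]
  · rw [lLog, ← Finset.sum_fiberwise_of_maps_to (s := Finset.univ) (g := fun x : K => minpoly k x)
      (t := irredsDvd k (Module.finrank k K))]
    · refine Finset.sum_congr rfl fun P hP => ?_
      rw [Finset.sum_congr rfl (g := fun _ => kloosChar ψ a b P ^ 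
        (Module.finrank k K / P.natDegree)), Finset.sum_const, nsmul_eq_mul]
      · rw [← card_minpoly_eq hP]
      · intro x hx
        rw [(Finset.mem_filter.mp hx).2]
    · intro x _
      exact mem_irredsDvd.mpr ⟨h0, minpoly.monic (.of_finite k x), minpoly.irreducible (.of_finite k x), hdvd x⟩
  · rintro x _ h rfl
    apply h
    have : 1 ≤ Module.finrank k K := Nat.one_le_iff_ne_zero.mpr h0
    rw [minpoly.zero, natDegree_X, Nat.div_one, kloosChar, coeff_X_zero, if_pos rfl, zero_pow h0]

end LFunction

/-! ### Weil's bound for prime moduli -/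

section Weil
open Polynomial

/-- If `‖αβ‖ = p` and the even power sums of `α, β` are `O(p ^ r)`, then `‖α‖² ≤ p`. -/
lemma norm_sq_le_of_power_sums {α β : ℂ} {p C : ℝ} (hp : 0 < p) (hαβ : ‖α‖ * ‖β‖ = p)
    (h : ∀ r : ℕ, 1 ≤ r → ‖α ^ (2 * r) + β ^ (2 * r)‖ ≤ C * p ^ r) : ‖α‖ ^ 2 ≤ p := by
  by_contra! hlt
  have hρ : 1 < ‖α‖ ^ 2 / p := (one_lt_div hp).mpr hlt
  have hβ : ‖β‖ ^ 2 ≤ p := by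
    have : ‖α‖ ^ 2 * ‖β‖ ^ 2 = p * p := by rw [← mul_pow, hαβ, sq]
    by_contra! h2
    nlinarith
  obtain ⟨n, hn⟩ := pow_unbounded_of_one_lt (C + 1) hρ
  have hn1 : C + 1 < (‖α‖ ^ 2 / p) ^ (n + 1) :=
    hn.trans_le (pow_le_pow_right₀ hρ.le (Nat.le_succ n))
  have h1 := h (n + 1) (by omega)
  have h2 : ‖α ^ (2 * (n + 1))‖ ≤ ‖α ^ (2 * (n + 1)) + β ^ (2 * (n + 1))‖ + ‖β ^ (2 * (n + 1))‖ := by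
    simpa using norm_sub_le (α ^ (2 * (n + 1)) + β ^ (2 * (n + 1))) (β ^ (2 * (n + 1)))
  rw [norm_pow, norm_pow, pow_mul, pow_mul ‖β‖] at h2
  have h3 : (‖β‖ ^ 2) ^ (n + 1) ≤ p ^ (n + 1) := pow_le_pow_left₀ (by positivity) hβ _
  rw [div_pow, lt_div_iff₀ (by positivity)] at hn1
  nlinarith

/-- The bound for the power sums over the extension of even degree `2 r`. -/
lemma norm_trace_sum_le {p r : ℕ} [hp : Fact p.Prime] {K : Type} [Field K] [Fintype K]
    [DecidableEq K] [Algebra (ZMod p) K] (hr : 1 ≤ r) (hcard : Fintype.card K = (p ^ r) ^ 2)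
    (ψ : AddChar (ZMod p) ℂ) (hψ : ψ ≠ 1) {a b : ZMod p} (ha : a ≠ 0) :
    ‖∑ x ∈ Finset.univ.filter (fun x : K => x ≠ 0),
        ψ (Algebra.trace (ZMod p) K (a • x + b • x⁻¹))‖ ≤ 6 * p ^ 2 * p ^ r + 1 := by
  have : CharP K p := charP_of_injective_algebraMap (algebraMap (ZMod p) K).injective p
  let Ψ : AddChar (K) ℂ :=
    ψ.compAddMonoidHom (Algebra.trace (ZMod p) (K)).toAddMonoidHom
  have hΨ : Ψ ≠ 1 := by
    obtain ⟨t, ht⟩ := AddChar.ne_one_iff.mp hψ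
    obtain ⟨y, hy⟩ := Algebra.trace_surjective (ZMod p) (K) t
    refine AddChar.ne_one_iff.mpr ⟨y, ?_⟩
    change ψ (Algebra.trace (ZMod p) (K) y) ≠ 1
    rwa [hy]
  have hfrob : ∀ y, Ψ (y ^ p) = Ψ y := by
    intro y
    change ψ (Algebra.trace (ZMod p) (K) _) =
      ψ (Algebra.trace (ZMod p) (K) _)
    have := Algebra.trace_eq_of_algEquiv
      (FiniteField.frobeniusAlgEquivOfAlgebraic (ZMod p) (K)) y
    rw [FiniteField.coe_frobeniusAlgEquivOfAlgebraic, ZMod.card] at this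
    rw [this]
  have h5 := norm_kloosterman_ext_le hp.out hr hcard
    (a := algebraMap (ZMod p) _ a) (b := algebraMap (ZMod p) _ b)
    (by simpa using ha) Ψ hΨ hfrob
  have h6 : ∀ x : K, Ψ (algebraMap (ZMod p) _ a * x + algebraMap (ZMod p) _ b * x⁻¹) =
      ψ (Algebra.trace (ZMod p) (K) (a • x + b • x⁻¹)) := by
    intro x
    rw [Algebra.smul_def, Algebra.smul_def]; rfl
  rw [Finset.sum_congr rfl fun x _ => h6 x] at h5
  exact h5

/-- **Weil's bound** for Kloosterman sums to a prime modulus. -/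
theorem weil_kloosterman {p : ℕ} [hp : Fact p.Prime] (ψ : AddChar (ZMod p) ℂ) (hψ : ψ ≠ 1)
    {a b : ZMod p} (ha : a ≠ 0) (hb : b ≠ 0) :
    ‖∑ v ∈ Finset.univ.filter (fun v : ZMod p => v ≠ 0), ψ (a * v + b * v⁻¹)‖ ≤ 2 * √p := by
  classical
  rw [← lCoeff_one]
  have hp0 : (0 : ℝ) < p := by exact_mod_cast hp.out.pos
  have hp1 : (1 : ℝ) ≤ p := by exact_mod_cast hp.out.one_le
  set c := lCoeff ψ a b 1
  obtain ⟨s, hs⟩ := IsAlgClosed.exists_pow_nat_eq (c ^ 2 - 4 * p) (n := 2) (by norm_num)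
  set α := (-c + s) / 2 with hα
  set β := (-c - s) / 2 with hβ
  have h1 : α + β = -c := by rw [hα, hβ]; ring
  have h2 : α * β = Fintype.card (ZMod p) := by
    rw [ZMod.card, hα, hβ]; linear_combination -hs / 4
  have key : ∀ r : ℕ, 1 ≤ r → ‖α ^ (2 * r) + β ^ (2 * r)‖ ≤ (6 * p ^ 2 + 1) * (p : ℝ) ^ r := by
    intro r hr
    have h3 := lLog_eq ψ ha hb hψ h1 h2 (2 * r) (by omega)
    have hfr : Module.finrank (ZMod p) (GaloisField p (2 * r)) = 2 * r :=
      GaloisField.finrank p (by omega)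
    have : Fintype (GaloisField p (2 * r)) := Fintype.ofFinite _
    have h4 := lLog_eq_sum (K := GaloisField p (2 * r)) ψ a b
    rw [hfr, h3] at h4
    have hcard : Fintype.card (GaloisField p (2 * r)) = (p ^ r) ^ 2 := by
      rw [← Nat.card_eq_fintype_card, GaloisField.card p _ (by omega), ← pow_mul, mul_comm]
    have h5 := norm_trace_sum_le (K := GaloisField p (2 * r)) hr hcard ψ hψ ha (b := b)
    rw [← norm_neg, h4]
    refine h5.trans ?_
    have : (1 : ℝ) ≤ (p : ℝ) ^ r := one_le_pow₀ hp1
    nlinarith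
  have hn : ‖α‖ * ‖β‖ = p := by rw [← norm_mul, h2, ZMod.card, Complex.norm_natCast]
  have hA := norm_sq_le_of_power_sums hp0 hn key
  have hB := norm_sq_le_of_power_sums hp0 (by rw [mul_comm]; exact hn) (α := β) (β := α)
    (fun r hr => by rw [add_comm]; exact key r hr)
  have hc : ‖c‖ ≤ ‖α‖ + ‖β‖ := by
    rw [← norm_neg, ← h1]; exact norm_add_le _ _
  have := Real.le_sqrt_of_sq_le hA
  have := Real.le_sqrt_of_sq_le hB
  linarith

end Weil

/-! ### Kloosterman sums over finite rings -/

section Kloosterman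

open Classical in
/-- The Kloosterman sum of a finite commutative ring attached to two additive characters. -/
noncomputable def kl {R : Type} [CommRing R] [Fintype R] (ψ₁ ψ₂ : AddChar R ℂ) : ℂ :=
  ∑ u : Rˣ, ψ₁ u * ψ₂ (u⁻¹ : Rˣ)

/-- The size of the largest ideal on which `ψ` is trivial. -/
noncomputable def annCard {R : Type} [CommRing R] (ψ : AddChar R ℂ) : ℕ :=
  Nat.card {r : R // ∀ s, ψ (r * s) = 1}

section Ring
variable {R : Type} [CommRing R] [Fintype R]

lemma annCard_pos (ψ : AddChar R ℂ) : 1 ≤ annCard ψ := by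
  have : Nonempty {r : R // ∀ s, ψ (r * s) = 1} := ⟨0, by simp⟩
  exact Nat.card_pos

lemma norm_kl_le_card (ψ₁ ψ₂ : AddChar R ℂ) : ‖kl ψ₁ ψ₂‖ ≤ Fintype.card R := by
  classical
  refine (norm_sum_le _ _).trans ?_
  simp only [norm_mul, AddChar.norm_apply, mul_one, Finset.sum_const, nsmul_eq_mul]
  rw [Finset.card_univ]
  exact_mod_cast Fintype.card_le_of_injective _ (Units.val_injective (α := R))

omit [Fintype R] in
lemma annCard_mulShift {ψ : AddChar R ℂ} (hψ : ψ.IsPrimitive) (b : R) :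
    annCard (ψ.mulShift b) = Nat.card {r : R // b * r = 0} := by
  unfold annCard
  congr! 3 with r
  constructor
  · intro h
    by_contra hne
    apply hψ hne
    ext s
    simpa [AddChar.mulShift_apply, mul_assoc] using h s
  · intro h s
    rw [AddChar.mulShift_apply, ← mul_assoc, h, zero_mul, AddChar.map_zero_eq_one]

/-- Averaging over the units `1 + t v`, for nilpotent `t` with `b t ^ 3 = 0`. -/
lemma card_mul_kl (ψ : AddChar R ℂ) {a b t : R} (ht : IsNilpotent t) (hb : b * t ^ 3 = 0) :
    (Fintype.card R : ℂ) * kl (ψ.mulShift a) (ψ.mulShift b) =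
      open Classical in ∑ u : Rˣ, ψ (a * u + b * (u⁻¹ : Rˣ)) *
        ∑ v : R, ψ (v * (t * (a * u - b * (u⁻¹ : Rˣ))) + v ^ 2 * (b * (u⁻¹ : Rˣ) * t ^ 2)) := by
  classical
  have hu : ∀ v : R, IsUnit (1 + t * v) := fun v =>
    IsNilpotent.isUnit_one_add ((Commute.all t v).isNilpotent_mul_right ht)
  choose w hw using hu
  have h1 : ∀ v : R, kl (ψ.mulShift a) (ψ.mulShift b) =
      ∑ u : Rˣ, ψ (a * u + b * (u⁻¹ : Rˣ)) *
        ψ (v * (t * (a * u - b * (u⁻¹ : Rˣ))) + v ^ 2 * (b * (u⁻¹ : Rˣ) * t ^ 2)) := by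
    intro v
    rw [kl, ← Equiv.sum_comp (Equiv.mulRight (w v))]
    refine Finset.sum_congr rfl fun u _ => ?_
    rw [Equiv.coe_mulRight, AddChar.mulShift_apply, AddChar.mulShift_apply,
      ← AddChar.map_add_eq_mul, ← AddChar.map_add_eq_mul]
    congr 1
    have h2 : b * ((w v)⁻¹ : Rˣ) = b * (1 - t * v + t ^ 2 * v ^ 2) := by
      rw [Units.mul_inv_eq_iff_eq_mul, hw]
      linear_combination (-v ^ 3) * hb
    rw [mul_inv, Units.val_mul, Units.val_mul, hw]
    linear_combination ((u⁻¹ : Rˣ) : R) * h2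
  simp_rw [Finset.mul_sum]
  rw [Finset.sum_comm, ← Finset.sum_congr rfl (fun v _ => h1 v), Finset.sum_const, Finset.card_univ,
    nsmul_eq_mul]

/-- If `b t ^ 2 = 0`, the averages over the units `1 + t v` are linear exponential sums, and only the
solutions of `t (a u - b u⁻¹) = 0` survive. -/
lemma norm_kl_le_of_sq {ψ : AddChar R ℂ} (hψ : ψ.IsPrimitive) {a b t : R} (ht : IsNilpotent t)
    (hb : b * t ^ 2 = 0) :
    ‖kl (ψ.mulShift a) (ψ.mulShift b)‖ ≤
      Nat.card {u : Rˣ // t * (a * u - b * (u⁻¹ : Rˣ)) = 0} := by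
  classical
  have h := card_mul_kl ψ (a := a) (b := b) ht (by rw [pow_succ, ← mul_assoc, hb, zero_mul])
  have h1 : ∀ u : Rˣ, ∑ v : R, ψ (v * (t * (a * u - b * (u⁻¹ : Rˣ))) + v ^ 2 * (b * (u⁻¹ : Rˣ) * t ^ 2))
      = if t * (a * u - b * (u⁻¹ : Rˣ)) = 0 then (Fintype.card R : ℂ) else 0 := by
    intro u
    have : ∀ v : R, v * (t * (a * u - b * (u⁻¹ : Rˣ))) + v ^ 2 * (b * (u⁻¹ : Rˣ) * t ^ 2) =
        v * (t * (a * u - b * (u⁻¹ : Rˣ))) := fun v => by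
      linear_combination v ^ 2 * ((u⁻¹ : Rˣ) : R) * hb
    simp only [this]
    rw [AddChar.sum_mulShift _ hψ]
    push_cast; rfl
  simp only [h1, mul_ite, mul_zero] at h
  rw [← Finset.sum_filter, ← Finset.sum_mul, mul_comm] at h
  have hc : (Fintype.card R : ℂ) ≠ 0 := by exact_mod_cast Fintype.card_ne_zero
  rw [mul_right_cancel₀ hc h]
  refine (norm_sum_le _ _).trans ?_
  simp only [AddChar.norm_apply, Finset.sum_const, nsmul_eq_mul, mul_one]
  rw [Nat.card_eq_fintype_card, Fintype.card_subtype]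

open Classical in
/-- Weyl differencing for a quadratic exponential sum over a ring in which `2` is invertible. -/
lemma norm_sq_quadratic_sum_le {ψ : AddChar R ℂ} (hψ : ψ.IsPrimitive) (h2 : IsUnit (2 : R))
    (c e s : R) (hs : s * e = 0) :
    ‖∑ v : R, ψ (v * c + v ^ 2 * e)‖ ^ 2 ≤
      if s * c = 0 then (Fintype.card R * Nat.card {h : R // e * h = 0} : ℝ) else 0 := by
  classical
  set I := ∑ v : R, ψ (v * c + v ^ 2 * e) with hI
  have h1 : I * (starRingEnd ℂ) I =
      (Fintype.card R : ℂ) * ∑ h ∈ Finset.univ.filter (fun h : R => e * h = 0), ψ (h * c) := by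
    rw [hI, map_sum, Finset.sum_mul_sum, Finset.sum_comm]
    have h3 : ∀ w : R, ∑ v : R, ψ (v * c + v ^ 2 * e) * (starRingEnd ℂ) (ψ (w * c + w ^ 2 * e)) =
        ∑ h : R, ψ (h * c + h ^ 2 * e) * ψ (w * (2 * (e * h))) := by
      intro w
      rw [← Equiv.sum_comp (Equiv.addRight w)]
      refine Finset.sum_congr rfl fun h _ => ?_
      rw [← AddChar.map_neg_eq_conj, ← AddChar.map_add_eq_mul, ← AddChar.map_add_eq_mul,
        Equiv.coe_addRight]
      congr 1
      ring
    rw [Finset.sum_congr rfl fun w _ => h3 w, Finset.sum_comm, Finset.mul_sum, Finset.sum_filter]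
    refine Finset.sum_congr rfl fun h _ => ?_
    rw [← Finset.mul_sum, AddChar.sum_mulShift _ hψ]
    have h4 : (2 * (e * h) = 0) ↔ e * h = 0 := by
      rw [h2.mul_right_eq_zero]
    simp only [h4]
    split_ifs with h5
    · rw [show h * c + h ^ 2 * e = h * c by linear_combination h * h5]; ring
    · simp
  rw [Complex.mul_conj, Complex.normSq_eq_norm_sq] at h1
  split_ifs with hsc
  · have h5 : ‖((‖I‖ ^ 2 : ℝ) : ℂ)‖ ≤ (Fintype.card R * Nat.card {h : R // e * h = 0} : ℝ) := by
      rw [h1, norm_mul, Complex.norm_natCast]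
      gcongr
      refine (norm_sum_le _ _).trans ?_
      simp only [AddChar.norm_apply, Finset.sum_const, nsmul_eq_mul, mul_one]
      rw [Nat.card_eq_fintype_card, Fintype.card_subtype]
    rwa [Complex.norm_real, Real.norm_of_nonneg (by positivity)] at h5
  · have hz : ∑ h ∈ Finset.univ.filter (fun h : R => e * h = 0), ψ (h * c) = 0 := by
      obtain ⟨y, hy⟩ := AddChar.ne_one_iff.mp (hψ hsc)
      rw [AddChar.mulShift_apply] at hy
      set Z := ∑ h ∈ Finset.univ.filter (fun h : R => e * h = 0), ψ (h * c)
      have : Z = ψ (s * c * y) * Z := by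
        rw [Finset.mul_sum]
        symm
        refine Finset.sum_bij' (fun h _ => h + s * y) (fun h _ => h - s * y) ?_ ?_ ?_ ?_ ?_
        · intro h hh; simp at hh ⊢; linear_combination hh + y * hs
        · intro h hh; simp at hh ⊢; linear_combination hh - y * hs
        · intro h _; ring
        · intro h _; ring
        · intro h _; rw [← AddChar.map_add_eq_mul]; congr 1; ring
      have h3 : (1 - ψ (s * c * y)) * Z = 0 := by rw [sub_mul, one_mul, ← this, sub_self]
      exact (mul_eq_zero.mp h3).resolve_left (sub_ne_zero.mpr (Ne.symm hy))
    rw [hz, mul_zero] at h1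
    exact le_of_eq (by exact_mod_cast h1)

/-- Kloosterman sums with `b` a unit, when linearization along `1 + t v` just fails. -/
lemma norm_kl_le_of_cube {ψ : AddChar R ℂ} (hψ : ψ.IsPrimitive) (h2 : IsUnit (2 : R))
    {a b t s : R} (ht : IsNilpotent t) (hb : b * t ^ 3 = 0) (hbu : IsUnit b) (hs : s * t ^ 2 = 0) :
    ‖kl (ψ.mulShift a) (ψ.mulShift b)‖ ≤
      Nat.card {u : Rˣ // (s * t) * (a * u - b * (u⁻¹ : Rˣ)) = 0} *
        √(Nat.card {h : R // t ^ 2 * h = 0} / Fintype.card R) := by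
  classical
  have h := card_mul_kl ψ (a := a) (b := b) ht hb
  have hc : (0 : ℝ) < Fintype.card R := by exact_mod_cast Fintype.card_pos
  set Q : ℝ := ((Fintype.card R : ℕ) : ℝ) with hQ
  set A : ℝ := ((Nat.card {h : R // t ^ 2 * h = 0} : ℕ) : ℝ) with hA
  have h1 : ∀ u : Rˣ, ‖∑ v : R, ψ (v * (t * (a * u - b * (u⁻¹ : Rˣ))) + v ^ 2 * (b * (u⁻¹ : Rˣ) * t ^ 2))‖
      ≤ if (s * t) * (a * u - b * (u⁻¹ : Rˣ)) = 0 then √(Q * A) else 0 := by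
    intro u
    have := norm_sq_quadratic_sum_le hψ h2 (t * (a * u - b * (u⁻¹ : Rˣ))) (b * (u⁻¹ : Rˣ) * t ^ 2) s
      (by linear_combination (b * (u⁻¹ : Rˣ)) * hs)
    have hcard : Nat.card {h : R // b * (u⁻¹ : Rˣ) * t ^ 2 * h = 0} =
        Nat.card {h : R // t ^ 2 * h = 0} := by
      congr! 3 with x
      rw [mul_assoc, (hbu.mul (u⁻¹).isUnit).mul_right_eq_zero]
    rw [hcard, ← mul_assoc] at this
    split_ifs with h3
    · rw [if_pos h3] at this
      exact Real.le_sqrt_of_sq_le this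
    · rw [if_neg h3] at this
      exact (sq_nonpos_iff _).mp this |>.le
  have h3 : Q * ‖kl (ψ.mulShift a) (ψ.mulShift b)‖ ≤
      Nat.card {u : Rˣ // (s * t) * (a * u - b * (u⁻¹ : Rˣ)) = 0} * √(Q * A) := by
    have : Q * ‖kl (ψ.mulShift a) (ψ.mulShift b)‖ =
        ‖(Fintype.card R : ℂ) * kl (ψ.mulShift a) (ψ.mulShift b)‖ := by
      rw [norm_mul, Complex.norm_natCast]
    rw [this, h]
    refine (norm_sum_le _ _).trans ?_
    simp only [norm_mul, AddChar.norm_apply, one_mul]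
    refine (Finset.sum_le_sum fun u _ => h1 u).trans ?_
    rw [← Finset.sum_filter, Finset.sum_const, nsmul_eq_mul, Nat.card_eq_fintype_card,
      Fintype.card_subtype]
  have h4 : √(Q * A) = Q * √(A / Q) := by
    rw [show Q * A = Q ^ 2 * (A / Q) by field_simp, Real.sqrt_mul (by positivity),
      Real.sqrt_sq hc.le]
  rw [h4] at h3
  refine le_of_mul_le_mul_left (h3.trans (le_of_eq ?_)) hc
  simp only [hA, hQ]
  ring

end Ring

end Kloosterman

section Counting

lemma exists_mulShift_eq {n : ℕ} [NeZero n] {ψ : AddChar (ZMod n) ℂ} (hψ : ψ.IsPrimitive)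
    (χ : AddChar (ZMod n) ℂ) : ∃ a, χ = ψ.mulShift a := by
  have h := AddChar.to_mulShift_inj_of_isPrimitive hψ
  have h2 := ((Fintype.bijective_iff_injective_and_card _).mpr ⟨h, (AddChar.card_eq).symm⟩).2 χ
  exact ⟨h2.choose, h2.choose_spec.symm⟩

section Ring
variable {R : Type} [CommRing R] [Fintype R]

/-- Multiplication by `b` maps the annihilator of `t b` to that of `t`, with kernel the annihilator
of `b`. -/
lemma card_ann_mul_le (b t : R) :
    Nat.card {x : R // t * b * x = 0} ≤ Nat.card {x : R // t * x = 0} * Nat.card {x : R // b * x = 0} := by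
  classical
  rw [Nat.card_eq_fintype_card, Nat.card_eq_fintype_card, Nat.card_eq_fintype_card,
    Fintype.card_subtype, Fintype.card_subtype, Fintype.card_subtype]
  refine (Finset.card_le_mul_card_image_of_maps_to (f := fun x => b * x)
    (t := Finset.univ.filter fun x : R => t * x = 0) ?_ _ ?_)|>.trans (le_of_eq (mul_comm _ _))
  · intro x hx
    simp only [Finset.mem_filter, Finset.mem_univ, true_and] at hx ⊢
    rw [← mul_assoc, hx]
  · intro y hy
    rcases Finset.eq_empty_or_nonempty
      {a ∈ {x : R | t * b * x = 0} | b * a = y} with h | ⟨x₀, hx₀⟩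
    · rw [h]; simp
    · simp only [Finset.mem_filter, Finset.mem_univ, true_and] at hx₀
      refine Finset.card_le_card_of_injOn (fun x => x - x₀) ?_ ?_
      · intro x hx
        simp only [Finset.coe_filter, Finset.mem_filter, Finset.mem_univ, true_and,
          Set.mem_ofPred_eq] at hx ⊢
        rw [mul_sub, hx.2, hx₀.2, sub_self]
      · intro x _ y _ h
        simpa using h

/-- If `s b x (x + 2) = 0` forces `c x = 0` or `c (x + 2) = 0`, the congruence
`s (a u - b u⁻¹) = 0` has at most `2 * #{x | c * x = 0}` solutions. -/
lemma card_quadratic_le (s a b c : R)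
    (H : ∀ x : R, s * b * (x * (x + 2)) = 0 → c * x = 0 ∨ c * (x + 2) = 0) :
    Nat.card {u : Rˣ // s * (a * u - b * (u⁻¹ : Rˣ)) = 0} ≤ 2 * Nat.card {x : R // c * x = 0} := by
  classical
  rw [Nat.card_eq_fintype_card, Nat.card_eq_fintype_card, Fintype.card_subtype,
    Fintype.card_subtype]
  set S := Finset.univ.filter fun u : Rˣ => s * (a * u - b * (u⁻¹ : Rˣ)) = 0 with hS
  set T := Finset.univ.filter fun x : R => c * x = 0 with hT
  rcases S.eq_empty_or_nonempty with h | ⟨u₀, hu₀⟩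
  · rw [h]; simp
  have key : ∀ u ∈ S, s * a * u ^ 2 = s * b := by
    intro u hu
    simp only [hS, Finset.mem_filter, Finset.mem_univ, true_and] at hu
    have : ((u⁻¹ : Rˣ) : R) * u = 1 := by simp
    linear_combination (u : R) * hu + s * b * this
  have hcard : (S.image fun u => ((u * u₀⁻¹ : Rˣ) : R)).card = S.card := by
    apply Finset.card_image_of_injective
    intro u v h
    simpa using Units.ext h
  rw [← hcard]
  have hsub : (S.image fun u => ((u * u₀⁻¹ : Rˣ) : R)) ⊆
      (T.image fun x => x + 1) ∪ (T.image fun x => x - 1) := by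
    intro y hy
    obtain ⟨u, hu, rfl⟩ := Finset.mem_image.mp hy
    have h1 := key u hu
    have h2 := key u₀ hu₀
    set w : R := ((u * u₀⁻¹ : Rˣ) : R) with hw
    have h3 : (u : R) = w * u₀ := by rw [hw, Units.val_mul]; simp
    have h4 := H (w - 1) (by
      rw [h3] at h1
      linear_combination h1 - w ^ 2 * h2)
    rw [Finset.mem_union, Finset.mem_image, Finset.mem_image]
    rcases h4 with h4 | h4
    · left; exact ⟨w - 1, by simp [hT, h4], by ring⟩
    · right; exact ⟨w - 1 + 2, by simpa [hT] using h4, by ring⟩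
  refine (Finset.card_le_card hsub).trans ((Finset.card_union_le _ _).trans ?_)
  have := Finset.card_image_le (s := T) (f := fun x => x + 1)
  have := Finset.card_image_le (s := T) (f := fun x => x - 1)
  omega

end Ring

section PrimePower
variable {p n : ℕ} [hp : Fact p.Prime]

lemma zmod_pow_isUnit_or (x : ZMod (p ^ n)) :
    IsUnit x ∨ ∃ y, x = p * y := by
  have : NeZero (p ^ n) := ⟨pow_ne_zero _ hp.out.ne_zero⟩
  have hx : x = ((x.val : ℕ) : ZMod (p ^ n)) := by simp
  by_cases h : p ∣ x.val
  · right
    obtain ⟨k, hk⟩ := h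
    exact ⟨k, by rw [hx, hk]; push_cast; rfl⟩
  · left
    rw [hx, ZMod.isUnit_iff_coprime]
    exact Nat.Coprime.pow_right _ ((Nat.Prime.coprime_iff_not_dvd hp.out).mpr h).symm

lemma zmod_pow_card_ann_le (k : ℕ) :
    Nat.card {x : ZMod (p ^ n) // (p : ZMod (p ^ n)) ^ k * x = 0} ≤ p ^ k := by
  have : NeZero (p ^ n) := ⟨pow_ne_zero _ hp.out.ne_zero⟩
  classical
  have := IsAddCyclic.card_nsmul_eq_zero_le (α := ZMod (p ^ n)) (n := p ^ k)
    (pow_pos hp.out.pos _)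
  rw [Nat.card_eq_fintype_card, Fintype.card_subtype]
  simpa [nsmul_eq_mul] using this

/-- In `ℤ/pⁿ`, consecutive elements cannot both be divisible by `p`. -/
lemma zmod_pow_isUnit_add (hn : 0 < n) {x d : ZMod (p ^ n)} (hd : IsUnit d) :
    IsUnit x ∨ IsUnit (x + d) := by
  rcases zmod_pow_isUnit_or x with h | ⟨y, rfl⟩
  · exact Or.inl h
  rcases zmod_pow_isUnit_or ((p : ZMod (p ^ n)) * y + d) with h | ⟨z, hz⟩
  · exact Or.inr h
  exfalso
  have hpn : IsNilpotent (p : ZMod (p ^ n)) := ⟨n, by rw [← Nat.cast_pow, ZMod.natCast_self]⟩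
  have : IsNilpotent d := by
    rw [show d = (p : ZMod (p ^ n)) * (z - y) by linear_combination hz]
    exact (Commute.all _ _).isNilpotent_mul_right hpn
  have hnt : Nontrivial (ZMod (p ^ n)) := by
    have : Fact (1 < p ^ n) := ⟨Nat.one_lt_pow hn.ne' hp.out.one_lt⟩
    exact ZMod.nontrivial _
  obtain ⟨k, hk⟩ := this
  exact not_isUnit_zero (hk ▸ hd.pow k)

lemma card_quadratic_odd_le (hn : 0 < n) (h2 : p ≠ 2) (k : ℕ) (a b : ZMod (p ^ n)) :
    Nat.card {u : (ZMod (p ^ n))ˣ // (p : ZMod (p ^ n)) ^ k * (a * u - b * (u⁻¹ : (ZMod (p ^ n))ˣ)) = 0} ≤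
      2 * (p ^ k * Nat.card {x : ZMod (p ^ n) // b * x = 0}) := by
  have : NeZero (p ^ n) := ⟨pow_ne_zero _ hp.out.ne_zero⟩
  have hu2 : IsUnit (2 : ZMod (p ^ n)) := by
    rw [show (2 : ZMod (p ^ n)) = ((2 : ℕ) : ZMod (p ^ n)) by norm_num, ZMod.isUnit_iff_coprime]
    exact Nat.Coprime.pow_right _ ((Nat.coprime_primes Nat.prime_two hp.out).mpr (Ne.symm h2))
  refine (card_quadratic_le _ a b ((p : ZMod (p ^ n)) ^ k * b) ?_).trans ?_
  · intro x hx
    rcases zmod_pow_isUnit_add hn (x := x) hu2 with h | h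
    · right
      rw [show (p : ZMod (p ^ n)) ^ k * b * (x * (x + 2)) = x * ((p : ZMod (p ^ n)) ^ k * b * (x + 2)) by ring] at hx
      exact h.mul_right_eq_zero.mp hx
    · left
      rw [show (p : ZMod (p ^ n)) ^ k * b * (x * (x + 2)) = (x + 2) * ((p : ZMod (p ^ n)) ^ k * b * x) by ring] at hx
      exact h.mul_right_eq_zero.mp hx
  · gcongr
    exact (card_ann_mul_le _ _).trans (Nat.mul_le_mul_right _ (zmod_pow_card_ann_le k))

lemma card_quadratic_two_le (hn : 0 < n) (h2 : p = 2) (k : ℕ) (a b : ZMod (p ^ n)) :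
    Nat.card {u : (ZMod (p ^ n))ˣ // (p : ZMod (p ^ n)) ^ k * (a * u - b * (u⁻¹ : (ZMod (p ^ n))ˣ)) = 0} ≤
      2 * (p ^ (k + 1) * Nat.card {x : ZMod (p ^ n) // b * x = 0}) := by
  have : NeZero (p ^ n) := ⟨pow_ne_zero _ hp.out.ne_zero⟩
  have hp2 : (p : ZMod (p ^ n)) = 2 := by
    have : ((p : ℕ) : ZMod (p ^ n)) = ((2 : ℕ) : ZMod (p ^ n)) := congrArg Nat.cast h2
    simpa using this
  refine (card_quadratic_le _ a b ((p : ZMod (p ^ n)) ^ (k + 1) * b) ?_).trans ?_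
  · intro x hx
    rcases zmod_pow_isUnit_or x with h | ⟨y, rfl⟩
    · right
      rw [show (p : ZMod (p ^ n)) ^ k * b * (x * (x + 2)) = x * ((p : ZMod (p ^ n)) ^ k * b * (x + 2)) by ring] at hx
      rw [pow_succ]
      linear_combination (p : ZMod (p ^ n)) * (h.mul_right_eq_zero.mp hx)
    · rcases zmod_pow_isUnit_add hn (x := y) isUnit_one with h | h
      · right
        have : y * ((p : ZMod (p ^ n)) ^ (k + 1) * b * (p * y + 2)) = 0 := by
          rw [pow_succ]; linear_combination hx
        exact h.mul_right_eq_zero.mp this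
      · left
        have : (y + 1) * ((p : ZMod (p ^ n)) ^ (k + 1) * b * (p * y)) = 0 := by
          rw [pow_succ]; linear_combination hx + (p : ZMod (p ^ n)) ^ k * b * (p * y) * hp2
        exact h.mul_right_eq_zero.mp this
  · gcongr
    exact (card_ann_mul_le _ _).trans (Nat.mul_le_mul_right _ (zmod_pow_card_ann_le (k + 1)))

end PrimePower
end Counting

section PrimePowerBound

lemma kl_eq_sum_ne_zero {p : ℕ} [Fact p.Prime] (ψ : AddChar (ZMod p) ℂ) (a b : ZMod p) :
    kl (ψ.mulShift a) (ψ.mulShift b) =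
      ∑ v ∈ Finset.univ.filter (fun v : ZMod p => v ≠ 0), ψ (a * v + b * v⁻¹) := by
  classical
  rw [kl]
  refine Finset.sum_bij' (fun u _ => (u : ZMod p)) (fun v hv => Units.mk0 v (by simpa using hv))
    ?_ ?_ ?_ ?_ ?_
  · intro u _; simp
  · intro v _; simp
  · intro u _; ext; simp
  · intro v _; simp
  · intro u _
    rw [AddChar.mulShift_apply, AddChar.mulShift_apply, ← AddChar.map_add_eq_mul,
      Units.val_inv_eq_inv_val]

lemma norm_kl_prime_le {p : ℕ} (hp : p.Prime) [NeZero p] (ψ₁ ψ₂ : AddChar (ZMod p) ℂ) :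
    ‖kl ψ₁ ψ₂‖ ≤ 2 * √p * annCard ψ₂ := by
  have : Fact p.Prime := ⟨hp⟩
  classical
  have hψ := ZMod.isPrimitive_stdAddChar p
  have hψ1 : (ZMod.stdAddChar : AddChar (ZMod p) ℂ) ≠ 1 := by
    have := hψ (one_ne_zero)
    rwa [AddChar.mulShift_one] at this
  obtain ⟨a, rfl⟩ := exists_mulShift_eq hψ ψ₁
  obtain ⟨b, rfl⟩ := exists_mulShift_eq hψ ψ₂
  have hs : (1 : ℝ) ≤ √p := by
    rw [Real.one_le_sqrt]; exact_mod_cast hp.one_lt.le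
  have hA : (1 : ℝ) ≤ annCard (ZMod.stdAddChar.mulShift b) := by
    exact_mod_cast annCard_pos (ZMod.stdAddChar.mulShift b)
  by_cases hb : b = 0
  · have h1 : annCard ((ZMod.stdAddChar : AddChar (ZMod p) ℂ).mulShift b) = p := by
      rw [annCard_mulShift hψ, hb]
      simp
    rw [h1]
    refine (norm_kl_le_card _ _).trans ?_
    rw [ZMod.card]
    have : (0 : ℝ) ≤ p := by positivity
    nlinarith
  · suffices ‖kl ((ZMod.stdAddChar : AddChar (ZMod p) ℂ).mulShift a)
        (ZMod.stdAddChar.mulShift b)‖ ≤ 2 * √p from this.trans (by nlinarith)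
    rw [kl_eq_sum_ne_zero]
    by_cases ha : a = 0
    · have h2 : ∑ v : ZMod p, (ZMod.stdAddChar : AddChar (ZMod p) ℂ) (a * v + b * v⁻¹) = 0 := by
        rw [← Equiv.sum_comp (Equiv.inv (ZMod p))]
        simp only [ha, Equiv.inv_apply, inv_inv, zero_mul, zero_add]
        have := AddChar.sum_mulShift b hψ
        simp only [hb, if_false] at this
        simpa [mul_comm] using this
      rw [← Finset.sum_filter_add_sum_filter_not _ (fun v : ZMod p => v ≠ 0)] at h2
      have h3 : ∑ v ∈ Finset.univ.filter (fun v : ZMod p => ¬ v ≠ 0),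
          (ZMod.stdAddChar : AddChar (ZMod p) ℂ) (a * v + b * v⁻¹) = 1 := by
        simp [Finset.filter_eq']
      rw [h3] at h2
      rw [eq_neg_of_add_eq_zero_left h2, norm_neg, norm_one]
      linarith
    · exact weil_kloosterman _ hψ1 ha hb

/-- The bound for prime powers. For `n = 2 k`, and for `n = 2 k + 1` with `p ∣ b`, averaging over
`1 + p ^ k v` is linear; for `n = 2 k + 1` and `b` a unit it gives quadratic Gauss sums. For `p = 2`
the loss of a constant factor permits rounding `n / 2` up. -/
lemma norm_kl_prime_pow_le {p n : ℕ} (hp : p.Prime) (hn : 0 < n) [NeZero (p ^ n)]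
    (ψ₁ ψ₂ : AddChar (ZMod (p ^ n)) ℂ) :
    ‖kl ψ₁ ψ₂‖ ≤ 6 * √((p ^ n : ℕ) : ℝ) * annCard ψ₂ := by
  have : Fact p.Prime := ⟨hp⟩
  classical
  by_cases hn1 : n = 1
  · subst hn1
    refine (norm_kl_prime_le (by simpa using hp) ψ₁ ψ₂).trans ?_
    gcongr; norm_num
  have hψ := ZMod.isPrimitive_stdAddChar (p ^ n)
  obtain ⟨a, rfl⟩ := exists_mulShift_eq hψ ψ₁
  obtain ⟨b, rfl⟩ := exists_mulShift_eq hψ ψ₂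
  have hpp : (p : ZMod (p ^ n)) ^ n = 0 := by rw [← Nat.cast_pow, ZMod.natCast_self]
  have hp0 : ∀ m, n ≤ m → (p : ZMod (p ^ n)) ^ m = 0 := fun m hm => by
    rw [← Nat.sub_add_cancel hm, pow_add, hpp, mul_zero]
  have hnil : ∀ k, 1 ≤ k → IsNilpotent ((p : ZMod (p ^ n)) ^ k) := fun k hk =>
    ⟨n, by rw [← pow_mul]; exact hp0 _ (by nlinarith)⟩
  have hA := annCard_mulShift hψ b
  rw [hA]
  set G : ℝ := ((Nat.card {r : ZMod (p ^ n) // b * r = 0} : ℕ) : ℝ) with hG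
  have hG1 : 1 ≤ G := by
    have h := annCard_pos ((ZMod.stdAddChar : AddChar (ZMod (p ^ n)) ℂ).mulShift b)
    rw [hA] at h
    rw [hG]; exact_mod_cast h
  have hp2 : (2 : ℝ) ≤ p := by exact_mod_cast hp.two_le
  -- `p ^ k` against the square root of the modulus
  have hsq : ∀ k, 2 * k ≤ n → (p : ℝ) ^ k ≤ √((p ^ n : ℕ) : ℝ) := by
    intro k hk
    apply Real.le_sqrt_of_sq_le
    push_cast
    rw [← pow_mul]
    exact pow_le_pow_right₀ (by linarith) (by omega)
  have hs0 : 0 ≤ √((p ^ n : ℕ) : ℝ) := Real.sqrt_nonneg _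
  have easy : ∀ k, 1 ≤ k → 2 * k ≤ n → p ≠ 2 → b * ((p : ZMod (p ^ n)) ^ k) ^ 2 = 0 →
      ‖kl ((ZMod.stdAddChar : AddChar (ZMod (p ^ n)) ℂ).mulShift a)
        (ZMod.stdAddChar.mulShift b)‖ ≤ 6 * √((p ^ n : ℕ) : ℝ) * G := by
    intro k hk hk2 h2 hb
    refine (norm_kl_le_of_sq hψ (hnil k hk) hb).trans ?_
    have h := card_quadratic_odd_le hn h2 k a b
    have h' : (Nat.card {u : (ZMod (p ^ n))ˣ // (p : ZMod (p ^ n)) ^ k *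
        (a * u - b * (u⁻¹ : (ZMod (p ^ n))ˣ)) = 0} : ℝ) ≤ 2 * (p ^ k * G) := by
      rw [hG]; exact_mod_cast h
    refine h'.trans ?_
    have := hsq k hk2
    have : (p : ℝ) ^ k * G ≤ √((p ^ n : ℕ) : ℝ) * G := by gcongr
    nlinarith [mul_nonneg hs0 (by linarith : 0 ≤ G)]
  obtain ⟨k, hk⟩ : ∃ k, n = 2 * k ∨ n = 2 * k + 1 := ⟨n / 2, by omega⟩
  by_cases h2 : p = 2
  · -- here the exponent is rounded up
    obtain ⟨k, hk⟩ : ∃ k, n = 2 * k ∨ n + 1 = 2 * k := ⟨(n + 1) / 2, by omega⟩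
    refine (norm_kl_le_of_sq hψ (hnil k (by omega)) (by
      rw [← pow_mul, hp0 _ (by omega), mul_zero])).trans ?_
    have h := card_quadratic_two_le hn h2 k a b
    have h' : (Nat.card {u : (ZMod (p ^ n))ˣ // (p : ZMod (p ^ n)) ^ k *
        (a * u - b * (u⁻¹ : (ZMod (p ^ n))ˣ)) = 0} : ℝ) ≤ 2 * (p ^ (k + 1) * G) := by
      rw [hG]; exact_mod_cast h
    refine h'.trans ?_
    have h3 : 2 * (p : ℝ) ^ (k + 1) ≤ 6 * √((p ^ n : ℕ) : ℝ) := by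
      have h4 : (p : ℝ) ^ (k + 1) / 3 ≤ √((p ^ n : ℕ) : ℝ) := by
        apply Real.le_sqrt_of_sq_le
        push_cast
        have hpr : (p : ℝ) = 2 := by exact_mod_cast h2
        have : (p : ℝ) ^ (2 * k) ≤ 2 * p ^ n := by
          calc (p : ℝ) ^ (2 * k) ≤ p ^ (n + 1) := pow_le_pow_right₀ (by linarith) (by omega)
            _ = 2 * p ^ n := by rw [pow_succ]; nth_rewrite 2 [hpr]; ring
        have h5 : ((p : ℝ) ^ (k + 1) / 3) ^ 2 = p ^ (2 * k) * 4 / 9 := by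
          rw [div_pow, ← pow_mul, show (k + 1) * 2 = 2 * k + 2 by ring, pow_add]
          nth_rewrite 2 [hpr]; ring
        rw [h5]
        have : (0 : ℝ) ≤ p ^ n := by positivity
        linarith
      linarith
    calc 2 * ((p : ℝ) ^ (k + 1) * G) = (2 * (p : ℝ) ^ (k + 1)) * G := by ring
      _ ≤ _ := by gcongr
  rcases hk with hk | hk
  · exact easy k (by omega) (by omega) h2 (by rw [← pow_mul, hp0 _ (by omega), mul_zero])
  rcases zmod_pow_isUnit_or b with hbu | ⟨y, rfl⟩
  · have hu2 : IsUnit (2 : ZMod (p ^ n)) := by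
      rw [show (2 : ZMod (p ^ n)) = ((2 : ℕ) : ZMod (p ^ n)) by norm_num, ZMod.isUnit_iff_coprime]
      exact Nat.Coprime.pow_right _ ((Nat.coprime_primes Nat.prime_two hp).mpr (Ne.symm h2))
    have hb3 : b * ((p : ZMod (p ^ n)) ^ k) ^ 3 = 0 := by
      rw [← pow_mul, hp0 _ (by omega), mul_zero]
    have hst : (p : ZMod (p ^ n)) * ((p : ZMod (p ^ n)) ^ k) ^ 2 = 0 := by
      rw [← pow_mul, ← pow_succ', hp0 _ (by omega)]
    refine (norm_kl_le_of_cube hψ hu2 (hnil k (by omega)) hb3 hbu hst).trans ?_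
    rw [← pow_succ', ← pow_mul, ZMod.card]
    have h := card_quadratic_odd_le hn h2 (k + 1) a b
    have h' : (Nat.card {u : (ZMod (p ^ n))ˣ // (p : ZMod (p ^ n)) ^ (k + 1) *
        (a * u - b * (u⁻¹ : (ZMod (p ^ n))ˣ)) = 0} : ℝ) ≤ 2 * (p ^ (k + 1) * G) := by
      rw [hG]; exact_mod_cast h
    have h'' : (Nat.card {x : ZMod (p ^ n) // (p : ZMod (p ^ n)) ^ (k * 2) * x = 0} : ℝ) ≤
        p ^ (k * 2) := by exact_mod_cast zmod_pow_card_ann_le (p := p) (n := n) (k * 2)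
    calc _ ≤ 2 * ((p : ℝ) ^ (k + 1) * G) * √(p ^ (k * 2) / ((p ^ n : ℕ) : ℝ)) := by gcongr
      _ = 2 * √((p ^ n : ℕ) : ℝ) * G := by
        have e1 : ((p ^ n : ℕ) : ℝ) = (p ^ k) ^ 2 * p := by
          rw [hk]; push_cast; ring
        have e2 : (p : ℝ) ^ (k * 2) / ((p ^ n : ℕ) : ℝ) = 1 / p := by
          rw [e1, pow_mul]; field_simp
        rw [e2, e1, Real.sqrt_mul (by positivity), Real.sqrt_sq (by positivity), one_div,
          Real.sqrt_inv]
        have e3 : √(p : ℝ) ^ 2 = p := Real.sq_sqrt (by positivity)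
        have e4 : √(p : ℝ) ≠ 0 := by positivity
        field_simp
        rw [e3, pow_succ]; ring
      _ ≤ _ := by
        nlinarith [mul_nonneg hs0 (by linarith : 0 ≤ G)]
  · refine easy k (by omega) (by omega) h2 ?_
    rw [← pow_mul, mul_comm (p : ZMod (p ^ n)) y, mul_assoc, ← pow_succ', hp0 _ (by omega),
      mul_zero]

end PrimePowerBound

/-! ### Kloosterman sums to an arbitrary modulus -/

section CRT

section Prod
variable {R S T : Type} [CommRing R] [Fintype R] [CommRing S] [Fintype S] [CommRing T] [Fintype T]

/-- Restriction of an additive character to the first factor of a product decomposition. -/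
noncomputable def charFst (e : R ≃+* S × T) (ψ : AddChar R ℂ) : AddChar S ℂ :=
  ψ.compAddMonoidHom ((e.symm : S × T →+ R).comp (AddMonoidHom.inl S T))

/-- Restriction of an additive character to the second factor of a product decomposition. -/
noncomputable def charSnd (e : R ≃+* S × T) (ψ : AddChar R ℂ) : AddChar T ℂ :=
  ψ.compAddMonoidHom ((e.symm : S × T →+ R).comp (AddMonoidHom.inr S T))

omit [Fintype R] [Fintype S] [Fintype T] in
lemma char_symm_apply (e : R ≃+* S × T) (ψ : AddChar R ℂ) (x : S × T) :
    ψ (e.symm x) = charFst e ψ x.1 * charSnd e ψ x.2 := by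
  have : charFst e ψ x.1 * charSnd e ψ x.2 = ψ (e.symm (x.1, 0)) * ψ (e.symm (0, x.2)) := rfl
  rw [this, ← AddChar.map_add_eq_mul, ← map_add]
  simp

lemma kl_prod (e : R ≃+* S × T) (ψ₁ ψ₂ : AddChar R ℂ) :
    kl ψ₁ ψ₂ = kl (charFst e ψ₁) (charFst e ψ₂) * kl (charSnd e ψ₁) (charSnd e ψ₂) := by
  classical
  rw [kl, kl, kl, Finset.sum_mul_sum, ← Finset.sum_product', Finset.univ_product_univ]
  set f : Rˣ ≃* Sˣ × Tˣ := (Units.mapEquiv e.toMulEquiv).trans MulEquiv.prodUnits with hf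
  rw [← Equiv.sum_comp f.symm.toEquiv]
  refine Finset.sum_congr rfl fun x _ => ?_
  have h1 : ((f.symm x : Rˣ) : R) = e.symm ((x.1 : S), (x.2 : T)) := rfl
  have h2 : (((f.symm x)⁻¹ : Rˣ) : R) = e.symm (((x.1)⁻¹ : Sˣ), ((x.2)⁻¹ : Tˣ)) := rfl
  simp only [MulEquiv.toEquiv_eq_coe, EquivLike.coe_coe, h1, h2, char_symm_apply]
  ring

omit [Fintype S] [Fintype T] in
/-- The product of the largest ideals of the kernels in the two factors is an ideal of the kernel. -/
lemma annCard_prod_le (e : R ≃+* S × T) (ψ : AddChar R ℂ) :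
    annCard (charFst e ψ) * annCard (charSnd e ψ) ≤ annCard ψ := by
  classical
  rw [annCard, annCard, annCard, ← Nat.card_prod]
  refine Nat.card_le_card_of_injective
    (fun x => ⟨e.symm (x.1.1, x.2.1), fun s => ?_⟩) ?_
  · obtain ⟨y, rfl⟩ := e.symm.surjective s
    rw [← map_mul, char_symm_apply]
    simp only [Prod.fst_mul, Prod.snd_mul, x.1.2, x.2.2, mul_one]
  · intro x y h
    simp only [Subtype.mk.injEq, EmbeddingLike.apply_eq_iff_eq, Prod.mk.injEq] at h
    exact Prod.ext (Subtype.ext h.1) (Subtype.ext h.2)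

end Prod

/-- The Weil–Estermann bound for Kloosterman sums to an arbitrary modulus. -/
theorem norm_kl_le : ∀ (q : ℕ) [NeZero q] (ψ₁ ψ₂ : AddChar (ZMod q) ℂ),
    ‖kl ψ₁ ψ₂‖ ≤ 6 ^ q.primeFactors.card * √(q : ℝ) * annCard ψ₂ := by
  intro q
  induction q using Nat.recOnPosPrimePosCoprime with
  | prime_pow p n hp hn =>
    intro _ ψ₁ ψ₂
    rw [Nat.primeFactors_prime_pow hn.ne' hp, Finset.card_singleton, pow_one]
    exact norm_kl_prime_pow_le hp hn ψ₁ ψ₂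
  | zero => intro hq; exact absurd rfl hq.out
  | one =>
    intro _ ψ₁ ψ₂
    have h1 : (1 : ℝ) ≤ annCard ψ₂ := by exact_mod_cast annCard_pos ψ₂
    refine (norm_kl_le_card _ _).trans ?_
    simpa using h1
  | coprime a b ha hb hab iha ihb =>
    intro _ ψ₁ ψ₂
    have : NeZero a := ⟨by omega⟩
    have : NeZero b := ⟨by omega⟩
    set e := ZMod.chineseRemainder hab with he
    rw [kl_prod e, norm_mul, hab.primeFactors_mul, Finset.card_union_of_disjoint
      hab.disjoint_primeFactors, pow_add]
    have h1 := iha (charFst e ψ₁) (charFst e ψ₂)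
    have h2 := ihb (charSnd e ψ₁) (charSnd e ψ₂)
    have h3 : (annCard (charFst e ψ₂) * annCard (charSnd e ψ₂) : ℝ) ≤ annCard ψ₂ := by
      exact_mod_cast annCard_prod_le e ψ₂
    refine (mul_le_mul h1 h2 (norm_nonneg _) (by positivity)).trans ?_
    rw [Nat.cast_mul, Real.sqrt_mul (by positivity)]
    calc _ = 6 ^ a.primeFactors.card * 6 ^ b.primeFactors.card * (√(a : ℝ) * √(b : ℝ)) *
          (annCard (charFst e ψ₂) * annCard (charSnd e ψ₂) : ℝ) := by ring
      _ ≤ _ := by gcongr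

lemma annCard_stdAddChar_le {q : ℕ} [NeZero q] (h : ℕ) :
    annCard ((ZMod.stdAddChar : AddChar (ZMod q) ℂ).mulShift h) ≤ h.gcd q := by
  classical
  rw [annCard_mulShift (ZMod.isPrimitive_stdAddChar q)]
  have h0 : 0 < h.gcd q := Nat.gcd_pos_of_pos_right _ (NeZero.pos q)
  refine le_trans ?_ (IsAddCyclic.card_nsmul_eq_zero_le (α := ZMod q) h0)
  rw [Nat.card_eq_fintype_card, Fintype.card_subtype]
  refine Finset.card_le_card fun r hr => ?_
  simp only [Finset.mem_filter, Finset.mem_univ, true_and, nsmul_eq_mul] at hr ⊢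
  have hb : ((h.gcd q : ℕ) : ZMod q) = h * ((h.gcdA q : ℤ) : ZMod q) := by
    have := congrArg (fun z : ℤ => (z : ZMod q)) (Nat.gcd_eq_gcd_ab h q)
    simpa using this
  rw [hb]
  linear_combination ((h.gcdA q : ℤ) : ZMod q) * hr

end CRT

/-! ### The sawtooth function and exponential sums -/

section Sawtooth

/-- The additive character `x ↦ exp (2 π i x)` of `ℝ`. -/
noncomputable def ee (x : ℝ) : ℂ := Complex.exp (Complex.I * (2 * Real.pi * x : ℝ))

lemma ee_add (x y : ℝ) : ee (x + y) = ee x * ee y := by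
  rw [ee, ee, ee, ← Complex.exp_add]; congr 1; push_cast; ring

@[simp] lemma norm_ee (x : ℝ) : ‖ee x‖ = 1 := Complex.norm_exp_I_mul_ofReal _

@[simp] lemma ee_zero : ee 0 = 1 := by simp [ee]

@[simp] lemma ee_intCast (n : ℤ) : ee n = 1 := by
  rw [ee, Complex.exp_eq_one_iff]; exact ⟨n, by push_cast; ring⟩

lemma ee_re (x : ℝ) : (ee x).re = Real.cos (2 * Real.pi * x) := by
  rw [ee, mul_comm, Complex.exp_ofReal_mul_I_re]

lemma norm_ee_sub_one_le (x : ℝ) : ‖ee x - 1‖ ≤ 2 * Real.pi * |x| := by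
  refine (Real.norm_exp_I_mul_ofReal_sub_one_le (x := 2 * Real.pi * x)).trans ?_
  rw [Real.norm_eq_abs, abs_mul, abs_of_pos Real.two_pi_pos]

lemma norm_ee_sub_one_le_two (x : ℝ) : ‖ee x - 1‖ ≤ 2 := by
  refine (norm_sub_le _ _).trans ?_
  rw [norm_ee, norm_one]; norm_num

lemma norm_ee_sub_one (x : ℝ) : ‖ee x - 1‖ = 2 * |Real.sin (Real.pi * x)| := by
  rw [ee, Complex.norm_exp_I_mul_ofReal_sub_one, Real.norm_eq_abs, abs_mul, abs_two]
  congr 3; ring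

/-- The sawtooth function `{x} - 1 / 2`. -/
noncomputable def saw (x : ℝ) : ℝ := Int.fract x - 1 / 2

/-- The periodic quadratic Bernoulli function. -/
noncomputable def bern (x : ℝ) : ℝ := Int.fract x ^ 2 - Int.fract x + 1 / 6

lemma hasSum_bern (x : ℝ) :
    HasSum (fun n : ℕ => (1 / (n : ℝ) ^ 2) * Real.cos (2 * Real.pi * (n * x)))
      (Real.pi ^ 2 * bern x) := by
  have h := hasSum_one_div_nat_pow_mul_cos (k := 1) one_ne_zero
    (x := Int.fract x) ⟨Int.fract_nonneg _, (Int.fract_lt_one _).le⟩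
  have hB : (Polynomial.map (algebraMap ℚ ℝ) (Polynomial.bernoulli (2 * 1))).eval (Int.fract x)
      = bern x := by
    have : Polynomial.bernoulli 2 = Polynomial.X ^ 2 - Polynomial.X + Polynomial.C (1 / 6) := by
      rw [Polynomial.bernoulli_def]
      simp only [Finset.sum_range_succ, Finset.sum_range_zero]
      norm_num [← Polynomial.C_mul_X_pow_eq_monomial, Nat.choose]
      ring
    rw [mul_one, this]
    simp [bern]
  rw [hB] at h
  convert! h using 1
  · ext n
    rw [mul_one]
    congr 1
    have : 2 * Real.pi * n * Int.fract x = 2 * Real.pi * (n * x) - ((n * ⌊x⌋ : ℤ) : ℝ) * (2 * Real.pi) := by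
      rw [Int.fract]; push_cast; ring
    rw [this, Real.cos_sub_int_mul_two_pi]
  · norm_num [Nat.factorial]
    left; ring

/-- `2 * saw` is the derivative of `bern`, and `saw` increases with slope `1` except for downward jumps,
so averaging over `[x - η, x]` bounds `saw x` from above up to `η / 2`. -/
lemma saw_le (x : ℝ) {η : ℝ} (h0 : 0 < η) (h1 : η ≤ 1) :
    saw x ≤ (bern x - bern (x - η)) / (2 * η) + η / 2 := by
  have hy0 := Int.fract_nonneg x
  have hy1 := Int.fract_lt_one x
  rw [← sub_le_iff_le_add, le_div_iff₀ (by positivity), saw, bern, bern]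
  have hx : x - η = (Int.fract x - η) + (⌊x⌋ : ℤ) := by rw [Int.fract]; ring
  rw [hx, Int.fract_add_intCast]
  set y := Int.fract x
  by_cases h : η ≤ y
  · rw [Int.fract_eq_self.mpr ⟨by linarith, by linarith⟩]
    nlinarith
  · have : Int.fract (y - η) = y - η + 1 := by
      rw [← Int.fract_add_one, Int.fract_eq_self.mpr ⟨by linarith, by linarith⟩]
    rw [this]
    nlinarith

/-- The bound opposite to `saw_le`, by averaging over `[x, x + η]`. -/
lemma le_saw (x : ℝ) {η : ℝ} (h0 : 0 < η) (h1 : η ≤ 1) :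
    (bern (x + η) - bern x) / (2 * η) - η / 2 ≤ saw x := by
  have hy0 := Int.fract_nonneg x
  have hy1 := Int.fract_lt_one x
  rw [sub_le_iff_le_add, div_le_iff₀ (by positivity), saw, bern, bern]
  have hx : x + η = (Int.fract x + η) + (⌊x⌋ : ℤ) := by rw [Int.fract]; ring
  rw [hx, Int.fract_add_intCast]
  set y := Int.fract x
  by_cases h : y + η < 1
  · rw [Int.fract_eq_self.mpr ⟨by linarith, by linarith⟩]
    nlinarith
  · have : Int.fract (y + η) = y + η - 1 := by
      rw [← Int.fract_sub_one, Int.fract_eq_self.mpr ⟨by linarith, by linarith⟩]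
    rw [this]
    nlinarith

/-- The weight of the `h`-th frequency in the smoothed sawtooth. -/
noncomputable def wt (η : ℝ) (h : ℕ) : ℝ := min (1 / (η * (h : ℝ) ^ 2)) (1 / (h : ℝ))

/-- Truncated Fourier expansion of a difference of values of `bern`, summed over points. -/
lemma abs_sum_bern_sub_le {ι : Type*} (s : Finset ι) (x : ι → ℝ) {η : ℝ} (h0 : 0 < η)
    (σ : ℝ) (hσ : |σ| = η) {N : ℕ} (hN : 1 ≤ N) :
    |∑ i ∈ s, (bern (x i + σ) - bern (x i))| / (2 * η) ≤ s.card / (η * N) +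
      ∑ h ∈ Finset.Icc 1 N, wt η h * ‖∑ i ∈ s, ee (h * x i)‖ := by
  have hpi := Real.pi_gt_three
  set S : ℕ → ℝ := fun h => ‖∑ i ∈ s, ee (h * x i)‖ with hS
  set T : ℕ → ℝ := fun h => ∑ i ∈ s, ((1 / (h : ℝ) ^ 2) * Real.cos (2 * Real.pi * (h * (x i + σ))) -
    (1 / (h : ℝ) ^ 2) * Real.cos (2 * Real.pi * (h * x i))) with hT
  have hsum : HasSum T (Real.pi ^ 2 * ∑ i ∈ s, (bern (x i + σ) - bern (x i))) := by
    rw [Finset.mul_sum]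
    refine hasSum_sum fun i _ => ?_
    rw [mul_sub]
    exact (hasSum_bern _).sub (hasSum_bern _)
  have hS0 : ∀ h, 0 ≤ S h := fun h => norm_nonneg _
  have hSn : ∀ h, S h ≤ s.card := fun h => (norm_sum_le _ _).trans (by simp)
  have hTS : ∀ h : ℕ, |T h| ≤ (1 / (h : ℝ) ^ 2) * (min 2 (2 * Real.pi * (h * η)) * S h) := by
    intro h
    have e1 : T h = (1 / (h : ℝ) ^ 2) * (((ee (h * σ) - 1) * ∑ i ∈ s, ee (h * x i)).re) := by
      rw [hT, Finset.mul_sum, Complex.re_sum, Finset.mul_sum]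
      refine Finset.sum_congr rfl fun i _ => ?_
      rw [sub_mul, one_mul, ← ee_add, Complex.sub_re, ee_re, ee_re]
      rw [show (h : ℝ) * σ + h * x i = h * (x i + σ) by ring]
      ring
    rw [e1, abs_mul, abs_of_nonneg (by positivity)]
    gcongr
    refine (Complex.abs_re_le_norm _).trans ?_
    rw [norm_mul]
    refine mul_le_mul_of_nonneg_right (le_min (norm_ee_sub_one_le_two _) ?_) (norm_nonneg _)
    refine (norm_ee_sub_one_le _).trans ?_
    rw [abs_mul, hσ, Nat.abs_cast]
  have hlow : ∀ h : ℕ, 1 ≤ h → |T h| ≤ Real.pi ^ 2 * (2 * η) *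
      (wt η h * S h) := by
    intro h hh
    have hh' : (1 : ℝ) ≤ h := by exact_mod_cast hh
    refine (hTS h).trans ?_
    rw [← mul_assoc (1 / (h : ℝ) ^ 2), ← mul_assoc (Real.pi ^ 2 * (2 * η))]
    refine mul_le_mul_of_nonneg_right ?_ (hS0 h)
    rw [wt]
    rcases le_total (1 / (η * (h : ℝ) ^ 2)) (1 / (h : ℝ)) with hm | hm
    · rw [min_eq_left hm]
      calc 1 / (h : ℝ) ^ 2 * min 2 (2 * Real.pi * (h * η)) ≤ 1 / (h : ℝ) ^ 2 * 2 := by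
            gcongr; exact min_le_left _ _
        _ ≤ 1 / (h : ℝ) ^ 2 * (2 * Real.pi ^ 2) := by gcongr; nlinarith
        _ = _ := by field_simp
    · rw [min_eq_right hm]
      calc 1 / (h : ℝ) ^ 2 * min 2 (2 * Real.pi * (h * η)) ≤
            1 / (h : ℝ) ^ 2 * (2 * Real.pi * (h * η)) := by
            gcongr; exact min_le_right _ _
        _ = (2 * Real.pi) * (η * (1 / h)) := by field_simp
        _ ≤ (2 * Real.pi ^ 2) * (η * (1 / h)) := by gcongr; nlinarith
        _ = _ := by ring
  have hhigh : ∀ h : ℕ, |T h| ≤ 2 * s.card * ((h : ℝ) ^ 2)⁻¹ := by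
    intro h
    refine (hTS h).trans ?_
    rw [one_div, mul_comm]
    gcongr
    · exact min_le_left _ _
    · exact hSn h
  have hT0 : T 0 = 0 := by simp [hT]
  set W := ∑ h ∈ Finset.Icc 1 N, wt η h * S h with hW
  have hpart : ∀ M : ℕ, N ≤ M → |∑ h ∈ Finset.range (M + 1), T h| ≤
      Real.pi ^ 2 * (2 * η) * (s.card / (η * N) + W) := by
    intro M hM
    have hsplit : ∑ h ∈ Finset.range (M + 1), T h =
        ∑ h ∈ Finset.Icc 1 N, T h + ∑ h ∈ Finset.Ioc N M, T h := by
      have e1 : Finset.Icc 1 N = Finset.Ioc 0 N := rfl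
      rw [e1, Finset.sum_Ioc_consecutive _ (Nat.zero_le _) hM, Finset.sum_range_succ', hT0, add_zero,
        Finset.range_eq_Ico, Finset.sum_Ico_add' T 0 M 1]
      rfl
    rw [hsplit]
    refine (abs_add_le _ _).trans ?_
    have h1 : |∑ h ∈ Finset.Icc 1 N, T h| ≤ Real.pi ^ 2 * (2 * η) * W := by
      refine (Finset.abs_sum_le_sum_abs _ _).trans ?_
      rw [hW, Finset.mul_sum]
      exact Finset.sum_le_sum fun h hh => hlow h (Finset.mem_Icc.mp hh).1
    have h2 : |∑ h ∈ Finset.Ioc N M, T h| ≤ 2 * s.card * (N : ℝ)⁻¹ := by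
      refine (Finset.abs_sum_le_sum_abs _ _).trans ?_
      refine (Finset.sum_le_sum fun h _ => hhigh h).trans ?_
      rw [← Finset.mul_sum]
      gcongr
      refine (sum_Ioc_inv_sq_le_sub (by omega) hM).trans ?_
      have : (0 : ℝ) ≤ (M : ℝ)⁻¹ := by positivity
      linarith
    have h3 : 2 * s.card * (N : ℝ)⁻¹ ≤ Real.pi ^ 2 * (2 * η) * (s.card / (η * N)) := by
      have : (0 : ℝ) < N := by exact_mod_cast hN
      calc 2 * s.card * (N : ℝ)⁻¹ ≤ (2 * Real.pi ^ 2) * (s.card * (N : ℝ)⁻¹) := by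
            have : (0 : ℝ) ≤ s.card * (N : ℝ)⁻¹ := by positivity
            nlinarith [mul_nonneg (by nlinarith : 0 ≤ Real.pi ^ 2 - 1) this]
        _ = _ := by field_simp
    rw [mul_add]
    linarith
  have hlim := (hsum.tendsto_sum_nat.comp (Filter.tendsto_add_atTop_nat 1)).abs
  have hle := le_of_tendsto hlim (Filter.eventually_atTop.mpr ⟨N, fun M hM => hpart M hM⟩)
  rw [abs_mul, abs_of_pos (by positivity)] at hle
  rw [div_le_iff₀ (by positivity)]
  rw [mul_assoc] at hle
  have := le_of_mul_le_mul_left hle (by positivity)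
  linarith

/-- Sums of the sawtooth function are controlled by exponential sums. -/
lemma abs_sum_saw_le {ι : Type*} (s : Finset ι) (x : ι → ℝ) {η : ℝ} (h0 : 0 < η) (h1 : η ≤ 1)
    {N : ℕ} (hN : 1 ≤ N) :
    |∑ i ∈ s, saw (x i)| ≤ s.card * η / 2 + (s.card / (η * N) +
      ∑ h ∈ Finset.Icc 1 N, wt η h * ‖∑ i ∈ s, ee (h * x i)‖) := by
  have hu := abs_sum_bern_sub_le s x h0 (-η) (by rw [abs_neg, abs_of_pos h0]) hN
  have hl := abs_sum_bern_sub_le s x h0 η (abs_of_pos h0) hN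
  rw [abs_le]
  constructor
  · have h2 : ∑ i ∈ s, ((bern (x i + η) - bern (x i)) / (2 * η) - η / 2) ≤ ∑ i ∈ s, saw (x i) :=
      Finset.sum_le_sum fun i _ => le_saw _ h0 h1
    rw [Finset.sum_sub_distrib, ← Finset.sum_div, Finset.sum_const, nsmul_eq_mul] at h2
    have h3 := div_le_div_of_nonneg_right (neg_abs_le (∑ i ∈ s, (bern (x i + η) - bern (x i))))
      (by positivity : 0 ≤ 2 * η)
    rw [neg_div] at h3
    linarith
  · have h2 : ∑ i ∈ s, saw (x i) ≤ ∑ i ∈ s, ((bern (x i) - bern (x i - η)) / (2 * η) + η / 2) :=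
      Finset.sum_le_sum fun i _ => saw_le _ h0 h1
    rw [Finset.sum_add_distrib, ← Finset.sum_div, Finset.sum_const, nsmul_eq_mul] at h2
    have e : ∑ i ∈ s, (bern (x i) - bern (x i - η)) = -∑ i ∈ s, (bern (x i + -η) - bern (x i)) := by
      rw [← Finset.sum_neg_distrib]; refine Finset.sum_congr rfl fun i _ => ?_
      rw [sub_eq_add_neg (x i)]; ring
    rw [e] at h2
    have h3 := div_le_div_of_nonneg_right (neg_le_abs (∑ i ∈ s, (bern (x i + -η) - bern (x i))))
      (by positivity : 0 ≤ 2 * η)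
    linarith

end Sawtooth

/-! ### Completion of incomplete Kloosterman sums -/

section Completion

lemma norm_geom_le (u v : ℕ) (α : ℝ) : ‖∑ d ∈ Finset.Ico u v, ee (α * d)‖ ≤ ((v - u : ℕ) : ℝ) := by
  refine (norm_sum_le _ _).trans ?_
  simp

lemma norm_geom_mul_le (u v : ℕ) (α : ℝ) (n : ℤ) (hn : |α - n| ≤ 1 / 2) :
    ‖∑ d ∈ Finset.Ico u v, ee (α * d)‖ * (2 * |α - n|) ≤ 1 := by
  have hpow : ∀ d : ℕ, ee (α * d) = ee α ^ d := by
    intro d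
    rw [ee, ee, ← Complex.exp_nat_mul]; congr 1; push_cast; ring
  have h1 : ‖∑ d ∈ Finset.Ico u v, ee (α * d)‖ * ‖ee α - 1‖ ≤ 2 := by
    rcases le_total u v with huv | huv
    · rw [← norm_mul]
      simp only [hpow]
      rw [geom_sum_Ico_mul _ huv]
      refine (norm_sub_le _ _).trans ?_
      rw [norm_pow, norm_pow, norm_ee]; norm_num
    · rw [Finset.Ico_eq_empty (by omega)]; simp
  have h2 : 4 * |α - n| ≤ ‖ee α - 1‖ := by
    have e1 : ee α = ee (α - n) := by
      have := ee_add (α - n) n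
      rw [ee_intCast, mul_one] at this
      rw [← this]; congr 1; ring
    rw [e1, norm_ee_sub_one]
    have hp := Real.pi_pos
    have := Real.mul_abs_le_abs_sin (x := Real.pi * (α - n)) (by
      rw [abs_mul, abs_of_pos hp]; nlinarith)
    rw [abs_mul, abs_of_pos hp] at this
    have e2 : 2 / Real.pi * (Real.pi * |α - n|) = 2 * |α - n| := by field_simp
    linarith
  nlinarith [norm_nonneg (∑ d ∈ Finset.Ico u v, ee (α * d))]

lemma harmonic_sum_le (N : ℕ) : ∑ h ∈ Finset.Icc 1 N, (1 / (h : ℝ)) ≤ 1 + Real.log N := by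
  have := harmonic_le_one_add_log N
  rw [harmonic_eq_sum_Icc] at this
  push_cast at this
  simpa [one_div] using this

variable {q : ℕ} [NeZero q]

/-- The sum of geometric sums over a complete set of frequencies, centred at `ρ / q`. -/
lemma sum_norm_geom_le (u v : ℕ) {ρ : ℝ} (hρ : |ρ| ≤ 1 / 2) :
    ∑ j ∈ Finset.range q, ‖∑ d ∈ Finset.Ico u v, ee ((ρ - j) / q * d)‖ ≤
      ‖∑ d ∈ Finset.Ico u v, ee (ρ / q * d)‖ + q * (2 * (1 + Real.log q)) := by
  have hq0 : 0 < q := NeZero.pos q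
  have hq : (0 : ℝ) < q := by exact_mod_cast hq0
  obtain ⟨r, rfl⟩ : ∃ r, q = r + 1 := ⟨q - 1, by omega⟩
  set q := r + 1 with hqr
  rw [Finset.sum_range_succ', add_comm]
  have e0 : (ρ - ((0 : ℕ) : ℝ)) / (q : ℝ) = ρ / q := by simp
  rw [e0]
  have hab := abs_le.mp hρ
  have hj : ∀ j ∈ Finset.range r, ‖∑ d ∈ Finset.Ico u v, ee ((ρ - ((j + 1 : ℕ) : ℝ)) / q * d)‖ ≤
      q * (1 / ((j + 1 : ℕ) : ℝ)) + q * (1 / ((r - 1 - j + 1 : ℕ) : ℝ)) := by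
    intro j hj
    have hjr : j + 1 ≤ r := by have := Finset.mem_range.mp hj; omega
    have hc : (((r - 1 - j + 1 : ℕ) : ℝ)) = q - ((j + 1 : ℕ) : ℝ) := by
      have : r - 1 - j + 1 + (j + 1) = q := by omega
      rw [← this]; push_cast; ring
    set J : ℝ := ((j + 1 : ℕ) : ℝ) with hJ
    have hJ1 : 1 ≤ J := by rw [hJ]; exact_mod_cast Nat.succ_le_succ (Nat.zero_le j)
    have hJq : J + 1 ≤ q := by rw [hJ]; exact_mod_cast (by omega : j + 1 + 1 ≤ q)
    rw [hc]
    have p1 : 0 ≤ (q : ℝ) * (1 / J) := by positivity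
    have p2 : 0 ≤ (q : ℝ) * (1 / (q - J)) :=
      mul_nonneg hq.le (one_div_nonneg.mpr (by linarith))
    set V := ‖∑ d ∈ Finset.Ico u v, ee ((ρ - J) / q * d)‖ with hV
    have hV0 : 0 ≤ V := norm_nonneg _
    rcases le_total (2 * (J - ρ)) q with h | h
    · have ha : |(ρ - J) / q - (0 : ℤ)| = (J - ρ) / q := by
        rw [Int.cast_zero, sub_zero, abs_div, abs_of_pos hq, abs_of_neg (by linarith)]; ring
      have := norm_geom_mul_le u v ((ρ - J) / q) 0 (by
        rw [ha, div_le_div_iff₀ hq (by norm_num)]; linarith)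
      rw [ha, ← hV] at this
      have h3 : V ≤ q * (1 / J) := by
        rw [mul_one_div, le_div_iff₀ (by linarith)]
        have e : V * (2 * ((J - ρ) / q)) = V * (2 * (J - ρ)) / q := by ring
        rw [e, div_le_one hq] at this
        nlinarith
      linarith
    · have ha : |(ρ - J) / q - (-1 : ℤ)| = (q - J + ρ) / q := by
        have e : (ρ - J) / q - ((-1 : ℤ) : ℝ) = (q - J + ρ) / q := by
          push_cast; field_simp; ring
        rw [e, abs_div, abs_of_pos hq, abs_of_nonneg (by linarith)]
      have := norm_geom_mul_le u v ((ρ - J) / q) (-1) (by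
        rw [ha, div_le_div_iff₀ hq (by norm_num)]; linarith)
      rw [ha, ← hV] at this
      have h3 : V ≤ q * (1 / (q - J)) := by
        rw [mul_one_div, le_div_iff₀ (by linarith)]
        have e : V * (2 * ((q - J + ρ) / q)) = V * (2 * (q - J + ρ)) / q := by ring
        rw [e, div_le_one hq] at this
        nlinarith
      linarith
  have hH : ∑ j ∈ Finset.range r, (1 / ((j + 1 : ℕ) : ℝ)) ≤ 1 + Real.log q := by
    have h1 := harmonic_sum_le r
    have h2 : ∑ h ∈ Finset.Icc 1 r, (1 / (h : ℝ)) = ∑ j ∈ Finset.range r, (1 / ((j + 1 : ℕ) : ℝ)) := by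
      rw [Finset.range_eq_Ico, Finset.sum_Ico_add' (fun h : ℕ => 1 / (h : ℝ)) 0 r 1]
      rfl
    rw [← h2]
    refine h1.trans ?_
    rcases Nat.eq_zero_or_pos r with h0 | h0
    · rw [h0]
      have : 0 ≤ Real.log q := Real.log_natCast_nonneg _
      simpa using this
    · gcongr
      rw [hqr]; exact_mod_cast Nat.le_succ r
  have hfin := Finset.sum_le_sum hj
  rw [Finset.sum_add_distrib, ← Finset.mul_sum, ← Finset.mul_sum,
    Finset.sum_range_reflect (fun j => 1 / ((j + 1 : ℕ) : ℝ)) r] at hfin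
  have h4 : (q : ℝ) * ∑ j ∈ Finset.range r, (1 / ((j + 1 : ℕ) : ℝ)) ≤ q * (1 + Real.log q) := by
    gcongr
  linarith

/-- Fourier inversion on `ℤ/q` for the function `d ↦ e (b d⁻¹ / q)` supported on the units. -/
lemma sum_kl_mul (b d : ZMod q) :
    ∑ m : ZMod q, kl (ZMod.stdAddChar.mulShift m) (ZMod.stdAddChar.mulShift b) *
      ZMod.stdAddChar (-(m * d)) =
    open Classical in if IsUnit d then (q : ℂ) * ZMod.stdAddChar (b * d⁻¹) else 0 := by
  classical
  have hψ := ZMod.isPrimitive_stdAddChar q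
  have h1 : ∀ u : (ZMod q)ˣ, ∑ m : ZMod q, (ZMod.stdAddChar (m * ((u : ZMod q) - d)) : ℂ) =
      if (u : ZMod q) - d = 0 then (q : ℂ) else 0 := by
    intro u
    rw [AddChar.sum_mulShift _ hψ, ZMod.card]; push_cast; rfl
  have h2 : ∑ m : ZMod q, kl (ZMod.stdAddChar.mulShift m) (ZMod.stdAddChar.mulShift b) *
      ZMod.stdAddChar (-(m * d)) = ∑ u : (ZMod q)ˣ, ZMod.stdAddChar (b * ((u⁻¹ : (ZMod q)ˣ) : ZMod q)) *
        ∑ m : ZMod q, (ZMod.stdAddChar (m * ((u : ZMod q) - d)) : ℂ) := by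
    simp only [kl, Finset.sum_mul, Finset.mul_sum]
    rw [Finset.sum_comm]
    refine Finset.sum_congr (by congr!) fun u _ => Finset.sum_congr rfl fun m _ => ?_
    rw [AddChar.mulShift_apply, AddChar.mulShift_apply, mul_assoc, mul_comm, mul_assoc,
      ← AddChar.map_add_eq_mul]
    congr 2; ring
  rw [h2]
  simp only [h1]
  split_ifs with hd
  · obtain ⟨w, rfl⟩ := hd
    rw [Finset.sum_eq_single w]
    · rw [sub_self, if_pos rfl, mul_comm, ZMod.inv_coe_unit]
    · intro u _ hu
      rw [if_neg, mul_zero]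
      intro h
      exact hu (Units.ext (sub_eq_zero.mp h))
    · simp
  · refine Finset.sum_eq_zero fun u _ => ?_
    rw [if_neg, mul_zero]
    intro h
    exact hd (sub_eq_zero.mp h ▸ u.isUnit)

lemma stdAddChar_eq_ee (j : ℤ) : (ZMod.stdAddChar (j : ZMod q) : ℂ) = ee (j / q) := by
  rw [ZMod.stdAddChar_coe, ee]; congr 1; push_cast; ring

/-- Completion of an incomplete twisted Kloosterman sum. -/
lemma norm_incomplete_kl_le (b : ZMod q) (β : ℝ) (u v : ℕ) {M : ℝ} (hM : 0 < M)
    (hMuv : ((v - u : ℕ) : ℝ) ≤ M * q) :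
    ‖∑ d ∈ (Finset.Ico u v).filter (fun d => d.Coprime q),
      ee (β * d) * ZMod.stdAddChar (b * (d : ZMod q)⁻¹)‖ ≤
    6 ^ q.primeFactors.card * √(q : ℝ) * annCard ((ZMod.stdAddChar : AddChar (ZMod q) ℂ).mulShift b) *
      (2 * M / (1 + 2 * M * |q * β - round (q * β)|) + 2 * (1 + Real.log q)) := by
  classical
  have hq : (0 : ℝ) < q := by exact_mod_cast NeZero.pos q
  set K := 6 ^ q.primeFactors.card * √(q : ℝ) *
    annCard ((ZMod.stdAddChar : AddChar (ZMod q) ℂ).mulShift b) with hK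
  set ρ : ℝ := q * β - round (q * β) with hρ
  have hρ2 : |ρ| ≤ 1 / 2 := abs_sub_round _
  set S := ∑ d ∈ (Finset.Ico u v).filter (fun d => d.Coprime q),
      ee (β * d) * ZMod.stdAddChar (b * (d : ZMod q)⁻¹) with hS
  -- the factor `ee (β * d)` only shifts the frequencies, by the real number `q * β`
  have h1 : (q : ℂ) * S = ∑ m : ZMod q, kl (ZMod.stdAddChar.mulShift m) (ZMod.stdAddChar.mulShift b) *
      ∑ d ∈ Finset.Ico u v, ee (β * d) * ZMod.stdAddChar (-(m * (d : ZMod q))) := by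
    rw [hS, Finset.sum_filter, Finset.mul_sum]
    simp only [Finset.mul_sum]
    rw [Finset.sum_comm]
    refine Finset.sum_congr rfl fun d _ => ?_
    have h2 := sum_kl_mul b (d : ZMod q)
    simp only [ZMod.isUnit_iff_coprime] at h2
    have h3 : ∑ m : ZMod q, kl (ZMod.stdAddChar.mulShift m) (ZMod.stdAddChar.mulShift b) *
        (ee (β * d) * ZMod.stdAddChar (-(m * (d : ZMod q)))) = ee (β * d) * ∑ m : ZMod q,
        kl (ZMod.stdAddChar.mulShift m) (ZMod.stdAddChar.mulShift b) *
        ZMod.stdAddChar (-(m * (d : ZMod q))) := by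
      rw [Finset.mul_sum]; exact Finset.sum_congr rfl fun m _ => by ring
    rw [h3, h2]
    split_ifs <;> ring
  have hK0 : 0 ≤ K := by positivity
  have h2 : ∑ m : ZMod q, ‖∑ d ∈ Finset.Ico u v, ee (β * d) * ZMod.stdAddChar (-(m * (d : ZMod q)))‖ =
      ∑ j ∈ Finset.range q, ‖∑ d ∈ Finset.Ico u v, ee ((ρ - j) / q * d)‖ := by
    rw [← Equiv.sum_comp (Equiv.addRight ((round (q * β) : ℤ) : ZMod q))]
    refine Finset.sum_bij' (fun m _ => m.val) (fun j _ => (j : ZMod q)) ?_ ?_ ?_ ?_ ?_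
    · intro m _; exact Finset.mem_range.mpr (ZMod.val_lt m)
    · intro j _; simp
    · intro m _; simp
    · intro j hj; exact ZMod.val_cast_of_lt (Finset.mem_range.mp hj)
    · intro m _
      congr 1
      refine Finset.sum_congr rfl fun d _ => ?_
      have e : -(((Equiv.addRight ((round (q * β) : ℤ) : ZMod q)) m) * (d : ZMod q)) =
          ((-((m.val + round (q * β)) * d) : ℤ) : ZMod q) := by
        rw [Equiv.coe_addRight]; push_cast; simp
      rw [e, stdAddChar_eq_ee, ← ee_add]
      congr 1
      rw [hρ]; push_cast; field_simp; ring
  have h3 : q * ‖S‖ ≤ K * (‖∑ d ∈ Finset.Ico u v, ee (ρ / q * d)‖ + q * (2 * (1 + Real.log q))) := by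
    calc q * ‖S‖ = ‖(q : ℂ) * S‖ := by rw [norm_mul, Complex.norm_natCast]
      _ ≤ ∑ m : ZMod q, K * ‖∑ d ∈ Finset.Ico u v, ee (β * d) * ZMod.stdAddChar (-(m * (d : ZMod q)))‖ := by
        rw [h1]
        refine (norm_sum_le _ _).trans (Finset.sum_le_sum fun m _ => ?_)
        rw [norm_mul]
        gcongr
        exact norm_kl_le q _ _
      _ ≤ _ := by
        rw [← Finset.mul_sum, h2]
        gcongr
        exact sum_norm_geom_le u v hρ2
  set V := ‖∑ d ∈ Finset.Ico u v, ee (ρ / q * d)‖ with hV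
  have hV0 : 0 ≤ V := norm_nonneg _
  have hV1 : V / q ≤ 2 * M / (1 + 2 * M * |ρ|) := by
    have hVM : V ≤ M * q := (norm_geom_le u v _).trans hMuv
    have ha : |ρ / q - (0 : ℤ)| = |ρ| / q := by
      rw [Int.cast_zero, sub_zero, abs_div, abs_of_pos hq]
    have hq1 : (1 : ℝ) ≤ q := by exact_mod_cast NeZero.pos q
    have h5 := norm_geom_mul_le u v (ρ / q) 0 (by
      rw [ha]; exact (div_le_self (abs_nonneg _) hq1).trans hρ2)
    rw [ha, ← hV] at h5
    rw [le_div_iff₀ (by positivity)]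
    have h6 : V / q ≤ M := by rwa [div_le_iff₀ hq]
    have h7 : V / q * (2 * |ρ|) ≤ 1 := by
      calc _ = V * (2 * (|ρ| / q)) := by ring
        _ ≤ 1 := h5
    nlinarith
  have h4 : ‖S‖ ≤ K * (V / q + 2 * (1 + Real.log q)) := by
    have e : K * (V + q * (2 * (1 + Real.log q))) = q * (K * (V / q + 2 * (1 + Real.log q))) := by
      field_simp
    rw [e] at h3
    exact le_of_mul_le_mul_left h3 hq
  refine h4.trans ?_
  gcongr

end Completion

/-! ### Sums over spaced sequences -/

section Spacing

/-- The part of `sum_spaced_le` to the right of `k`. -/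
lemma sum_spaced_right {M g : ℝ} (hM : 0 < M) (hg : 0 < g) (k : ℝ) (n : ℕ) (x : ℕ → ℝ)
    (hx : ∀ i j, i ≤ j → j < n → g * ((j : ℝ) - i) ≤ x j - x i) :
    ∑ j ∈ Finset.range n, (if k ≤ x j then 2 * M / (1 + 2 * M * |x j - k|) else 0) ≤
      ∑ i ∈ Finset.range n, 2 * M / (1 + 2 * M * (g * i)) := by
  induction n generalizing x with
  | zero => simp
  | succ n ih =>
    by_cases h0 : k ≤ x 0
    · refine Finset.sum_le_sum fun j hj => ?_
      have h1 := hx 0 j (Nat.zero_le _) (Finset.mem_range.mp hj)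
      have h2 : g * (j : ℝ) ≤ |x j - k| := by
        refine le_trans ?_ (le_abs_self _)
        push_cast at h1; linarith
      split_ifs
      · gcongr
      · positivity
    · rw [Finset.sum_range_succ', if_neg h0, add_zero, Finset.sum_range_succ]
      have h3 := ih (fun j => x (j + 1)) fun i j hij hj => by
        have := hx (i + 1) (j + 1) (by omega) (by omega)
        push_cast at this
        linarith
      have : 0 ≤ 2 * M / (1 + 2 * M * (g * n)) := by positivity
      linarith

/-- The part of `sum_spaced_le` to the left of `k`. -/
lemma sum_spaced_left {M g : ℝ} (hM : 0 < M) (hg : 0 < g) (k : ℝ) (n : ℕ) (x : ℕ → ℝ)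
    (hx : ∀ i j, i ≤ j → j < n → g * ((j : ℝ) - i) ≤ x j - x i) :
    ∑ j ∈ Finset.range n, (if k ≤ x j then 0 else 2 * M / (1 + 2 * M * |x j - k|)) ≤
      ∑ i ∈ Finset.range n, 2 * M / (1 + 2 * M * (g * i)) := by
  induction n with
  | zero => simp
  | succ n ih =>
    by_cases h0 : k ≤ x n
    · rw [Finset.sum_range_succ, if_pos h0, add_zero, Finset.sum_range_succ]
      have h3 := ih fun i j hij hj => hx i j hij (by omega)
      have : 0 ≤ 2 * M / (1 + 2 * M * (g * n)) := by positivity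
      linarith
    · rw [← Finset.sum_range_reflect (fun i : ℕ => 2 * M / (1 + 2 * M * (g * i)))]
      refine Finset.sum_le_sum fun j hj => ?_
      have hj := Finset.mem_range.mp hj
      have h1 := hx j n (by omega) (by omega)
      have e : ((n + 1 - 1 - j : ℕ) : ℝ) = (n : ℝ) - j := by
        rw [Nat.cast_sub (by omega)]; simp
      have h2 : g * ((n + 1 - 1 - j : ℕ) : ℝ) ≤ |x j - k| := by
        rw [e, abs_sub_comm]
        refine le_trans ?_ (le_abs_self _)
        linarith
      split_ifs
      · positivity
      · gcongr

/-- For a `g`-spaced sequence, one term near `k` on each side is bounded trivially and the others by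
the harmonic series. -/
lemma sum_spaced_le {M g : ℝ} (hM : 0 < M) (hg : 0 < g) (k : ℝ) (n : ℕ) (x : ℕ → ℝ)
    (hx : ∀ i j, i ≤ j → j < n → g * ((j : ℝ) - i) ≤ x j - x i) :
    ∑ j ∈ Finset.range n, 2 * M / (1 + 2 * M * |x j - k|) ≤
      2 * (2 * M + (1 / g) * (1 + Real.log n)) := by
  have h1 := sum_spaced_right hM hg k n x hx
  have h2 := sum_spaced_left hM hg k n x hx
  have h3 : ∑ i ∈ Finset.range n, 2 * M / (1 + 2 * M * (g * i)) ≤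
      2 * M + (1 / g) * (1 + Real.log n) := by
    rcases n with _ | n
    · simp; positivity
    · rw [Finset.sum_range_succ']
      have h4 : ∑ i ∈ Finset.range n, 2 * M / (1 + 2 * M * (g * ((i + 1 : ℕ) : ℝ))) ≤
          (1 / g) * (1 + Real.log ((n + 1 : ℕ) : ℝ)) := by
        have h5 := harmonic_sum_le (n + 1)
        have h6 : ∑ h ∈ Finset.Icc 1 (n + 1), (1 / (h : ℝ)) =
            ∑ j ∈ Finset.range (n + 1), (1 / ((j + 1 : ℕ) : ℝ)) := by
          rw [Finset.range_eq_Ico, Finset.sum_Ico_add' (fun h : ℕ => 1 / (h : ℝ)) 0 (n + 1) 1]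
          rfl
        rw [h6, Finset.sum_range_succ] at h5
        have h7 : (0 : ℝ) ≤ 1 / ((n + 1 : ℕ) : ℝ) := by positivity
        calc _ ≤ ∑ i ∈ Finset.range n, (1 / g) * (1 / ((i + 1 : ℕ) : ℝ)) := by
              refine Finset.sum_le_sum fun i _ => ?_
              have hi : (0 : ℝ) < ((i + 1 : ℕ) : ℝ) := by positivity
              rw [div_mul_div_comm, one_mul, div_le_div_iff₀ (by positivity) (by positivity)]
              linarith
          _ ≤ _ := by
              rw [← Finset.mul_sum]
              gcongr
              linarith
      have : 2 * M / (1 + 2 * M * (g * ((0 : ℕ) : ℝ))) = 2 * M := by simp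
      linarith
  have h4 : ∀ j, 2 * M / (1 + 2 * M * |x j - k|) =
      (if k ≤ x j then 2 * M / (1 + 2 * M * |x j - k|) else 0) +
      (if k ≤ x j then 0 else 2 * M / (1 + 2 * M * |x j - k|)) := by
    intro j; split_ifs <;> simp
  rw [Finset.sum_congr rfl fun j _ => h4 j, Finset.sum_add_distrib]
  linarith

end Spacing

section Spacing

/-- A spaced increasing sequence of length `R` visits the neighbourhoods of at most `R + 2`
integers, and near each of them the sum is controlled by the harmonic series. -/
lemma sum_spaced_round_le {M g R : ℝ} (hM : 0 < M) (hg : 0 < g) (n : ℕ) (x : ℕ → ℝ)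
    (hx : ∀ i j, i ≤ j → j < n → g * ((j : ℝ) - i) ≤ x j - x i)
    (hR : ∀ i j, i < n → j < n → x j - x i ≤ R) (hR0 : 0 ≤ R) :
    ∑ j ∈ Finset.range n, 2 * M / (1 + 2 * M * |x j - round (x j)|) ≤
      (R + 2) * (2 * (2 * M + (1 / g) * (1 + Real.log n))) := by
  classical
  rcases n with _ | n
  · simp; positivity
  set B := 2 * (2 * M + (1 / g) * (1 + Real.log ((n + 1 : ℕ) : ℝ))) with hB
  have hB0 : 0 ≤ B := by
    have : 0 ≤ Real.log ((n + 1 : ℕ) : ℝ) := Real.log_natCast_nonneg _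
    positivity
  have hmono : ∀ i j, i ≤ j → j < n + 1 → x i ≤ x j := by
    intro i j hij hj
    have h1 := hx i j hij hj
    have h2 : (0 : ℝ) ≤ (j : ℝ) - i := by
      have : (i : ℝ) ≤ j := by exact_mod_cast hij
      linarith
    nlinarith [mul_nonneg hg.le h2]
  have hround : ∀ y z : ℝ, y ≤ z → round y ≤ round z := fun y z h => by
    rw [round_eq, round_eq]; exact Int.floor_le_floor (by linarith)
  have hmaps : ∀ j ∈ Finset.range (n + 1),
      round (x j) ∈ Finset.Icc (round (x 0)) (round (x n)) := by
    intro j hj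
    have hj := Finset.mem_range.mp hj
    exact Finset.mem_Icc.mpr ⟨hround _ _ (hmono _ _ (Nat.zero_le _) hj),
      hround _ _ (hmono _ _ (by omega) (by omega))⟩
  rw [← Finset.sum_fiberwise_of_maps_to hmaps]
  have hcard : ((Finset.Icc (round (x 0)) (round (x n))).card : ℝ) ≤ R + 2 := by
    rw [Int.card_Icc]
    have h1 := hround _ _ (hmono 0 n (Nat.zero_le _) (by omega))
    have h2 : (((round (x n) + 1 - round (x 0)).toNat : ℕ) : ℝ) =
        (round (x n) : ℝ) + 1 - round (x 0) := by
      have : (((round (x n) + 1 - round (x 0)).toNat : ℕ) : ℤ) = round (x n) + 1 - round (x 0) :=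
        Int.toNat_of_nonneg (by omega)
      exact_mod_cast this
    rw [h2]
    have h3 := hR 0 n (by omega) (by omega)
    have h4 := abs_le.mp (abs_sub_round (x 0))
    have h5 := abs_le.mp (abs_sub_round (x n))
    linarith
  calc _ ≤ ∑ k ∈ Finset.Icc (round (x 0)) (round (x n)), B := by
        refine Finset.sum_le_sum fun k _ => ?_
        refine le_trans ?_ (sum_spaced_le hM hg (k : ℝ) (n + 1) x hx)
        rw [Finset.sum_filter]
        refine Finset.sum_le_sum fun j _ => ?_
        split_ifs with h
        · rw [h]
        · positivity
    _ ≤ _ := by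
        rw [Finset.sum_const, nsmul_eq_mul]
        gcongr

end Spacing

section GcdSum

lemma sum_gcd_div_le (N q : ℕ) (hq : q ≠ 0) :
    ∑ h ∈ Finset.Icc 1 N, ((h.gcd q : ℕ) : ℝ) / h ≤ q.divisors.card * (1 + Real.log N) := by
  classical
  have h1 : ∀ h ∈ Finset.Icc 1 N, ((h.gcd q : ℕ) : ℝ) / h ≤
      ∑ g ∈ q.divisors, if g ∣ h then (g : ℝ) / h else 0 := by
    intro h hh
    have hmem : h.gcd q ∈ q.divisors := Nat.mem_divisors.mpr ⟨Nat.gcd_dvd_right _ _, hq⟩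
    refine le_trans ?_ (Finset.single_le_sum (fun g _ => ?_) hmem)
    · rw [if_pos (Nat.gcd_dvd_left _ _)]
    · split_ifs <;> positivity
  refine (Finset.sum_le_sum h1).trans ?_
  rw [Finset.sum_comm]
  calc _ ≤ ∑ g ∈ q.divisors, (1 + Real.log N) := by
        refine Finset.sum_le_sum fun g hg => le_trans ?_ (harmonic_sum_le N)
        have hg0 : 0 < g := Nat.pos_of_mem_divisors hg
        rw [← Finset.sum_filter]
        calc _ = ∑ h ∈ (Finset.Icc 1 N).filter (fun h => g ∣ h), 1 / ((h / g : ℕ) : ℝ) := by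
              refine Finset.sum_congr rfl fun h hh => ?_
              obtain ⟨hh, k, rfl⟩ := Finset.mem_filter.mp hh
              rw [Nat.mul_div_cancel_left _ hg0]
              have hk : k ≠ 0 := by
                rintro rfl; simp at hh
              have : (k : ℝ) ≠ 0 := by exact_mod_cast hk
              have : (g : ℝ) ≠ 0 := by positivity
              push_cast; field_simp
          _ = ∑ k ∈ ((Finset.Icc 1 N).filter (fun h => g ∣ h)).image (fun h => h / g),
                1 / (k : ℝ) := by
              rw [Finset.sum_image]
              intro a ha b hb hab
              simp only [Finset.coe_filter, Set.mem_ofPred_eq] at ha hb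
              simp only at hab
              rw [← Nat.div_mul_cancel ha.2, hab, Nat.div_mul_cancel hb.2]
          _ ≤ _ := by
              refine Finset.sum_le_sum_of_subset_of_nonneg ?_ fun _ _ _ => by positivity
              intro k hk
              obtain ⟨h, hh, rfl⟩ := Finset.mem_image.mp hk
              obtain ⟨hh, hd⟩ := Finset.mem_filter.mp hh
              rw [Finset.mem_Icc] at hh ⊢
              exact ⟨Nat.div_pos (Nat.le_of_dvd (by omega) hd) hg0,
                (Nat.div_le_self _ _).trans hh.2⟩
    _ = _ := by rw [Finset.sum_const, nsmul_eq_mul]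

end GcdSum

section Block

variable {q : ℕ} [NeZero q]

lemma annCard_unit_le (a : (ZMod q)ˣ) (h : ℕ) :
    annCard ((ZMod.stdAddChar : AddChar (ZMod q) ℂ).mulShift (-((h : ZMod q) * (a : ZMod q)))) ≤ h.gcd q := by
  refine le_of_eq_of_le ?_ (annCard_stdAddChar_le h)
  rw [annCard_mulShift (ZMod.isPrimitive_stdAddChar q),
    annCard_mulShift (ZMod.isPrimitive_stdAddChar q)]
  refine Nat.card_congr (Equiv.subtypeEquivRight fun r => ?_)
  rw [neg_mul, neg_eq_zero, mul_assoc, mul_comm (a : ZMod q), ← mul_assoc, Units.mul_left_eq_zero]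

/-- The least nonnegative residue of the inverse class `a / d` modulo `q`. -/
def invRes (a : (ZMod q)ˣ) (d : ℕ) : ℕ := ((a : ZMod q) * (d : ZMod q)⁻¹).val

lemma invRes_cast (a : (ZMod q)ˣ) (d : ℕ) :
    ((invRes a d : ℕ) : ZMod q) = (a : ZMod q) * (d : ZMod q)⁻¹ := by
  rw [invRes, ZMod.natCast_val, ZMod.cast_id]

/-- Exponential sums of a linear phase twisted by `-a / d` modulo `q`. -/
lemma norm_block_le (a : (ZMod q)ˣ) (h : ℕ) (α β : ℝ) (u v : ℕ) {M : ℝ} (hM : 0 < M)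
    (hMuv : ((v - u : ℕ) : ℝ) ≤ M * q) :
    ‖∑ d ∈ (Finset.Ico u v).filter (fun d => d.Coprime q),
      ee (h * ((α * d + β - invRes a d) / q))‖ ≤
    6 ^ q.primeFactors.card * √(q : ℝ) * ((h.gcd q : ℕ) : ℝ) *
      (2 * M / (1 + 2 * M * |h * α - round (h * α)|) + 2 * (1 + Real.log q)) := by
  have hq : (0 : ℝ) < q := by exact_mod_cast NeZero.pos q
  have h1 := norm_incomplete_kl_le (-((h : ZMod q) * (a : ZMod q))) (h * α / q) u v hM hMuv
  have e : (q : ℝ) * (h * α / q) = h * α := by field_simp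
  rw [e] at h1
  have h2 : ∑ d ∈ (Finset.Ico u v).filter (fun d => d.Coprime q),
      ee (h * ((α * d + β - invRes a d) / q)) = ee (h * β / q) *
      ∑ d ∈ (Finset.Ico u v).filter (fun d => d.Coprime q),
      ee (h * α / q * d) * ZMod.stdAddChar (-((h : ZMod q) * (a : ZMod q)) * (d : ZMod q)⁻¹) := by
    rw [Finset.mul_sum]
    refine Finset.sum_congr rfl fun d _ => ?_
    have e2 : -((h : ZMod q) * (a : ZMod q)) * (d : ZMod q)⁻¹ = ((-(h * invRes a d) : ℤ) : ZMod q) := by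
      push_cast; rw [invRes_cast]; ring
    rw [e2, stdAddChar_eq_ee, ← ee_add, ← ee_add]
    congr 1; push_cast; field_simp; ring
  rw [h2, norm_mul, norm_ee, one_mul]
  refine h1.trans ?_
  have h3 : (annCard ((ZMod.stdAddChar : AddChar (ZMod q) ℂ).mulShift (-((h : ZMod q) * (a : ZMod q)))) : ℝ)
      ≤ ((h.gcd q : ℕ) : ℝ) := by exact_mod_cast annCard_unit_le a h
  have h4 : 0 ≤ Real.log q := Real.log_natCast_nonneg _
  gcongr

end Block

/-! ### Sawtooth sums along the hyperbola -/

section Block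

variable {q : ℕ} [NeZero q]

/-- Exponential sum over a dyadic interval, with the hyperbola `y = X / d` replaced by its tangents
at the points `D + j L`. -/
lemma norm_tangent_sum_le (a : (ZMod q)ˣ) {h D D' L : ℕ} (hh : 1 ≤ h) (hL : 1 ≤ L) (hLD : L ≤ D)
    (hD' : D' ≤ 2 * D) {X ℓ : ℝ} (hX : (D : ℝ) ^ 2 ≤ X) (hq1 : 1 + Real.log q ≤ ℓ)
    (hD1 : 1 + Real.log ((2 * D : ℕ) : ℝ) ≤ ℓ) (β : ℕ → ℝ) :
    ‖∑ d ∈ (Finset.Ico D D').filter (fun d => d.Coprime q),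
      ee (h * ((-(X / ((D + (d - D) / L * L : ℕ) : ℝ) ^ 2) * d + β ((d - D) / L) -
        invRes a d) / q))‖ ≤
    6 ^ q.primeFactors.card * √(q : ℝ) * ((h.gcd q : ℕ) : ℝ) *
      (4 * h * X * L / (D ^ 2 * q) + (8 * L / q + 28 * (D / L) * ℓ)) := by
  classical
  have hq : (0 : ℝ) < q := by exact_mod_cast NeZero.pos q
  have hL0 : (0 : ℝ) < L := by exact_mod_cast hL
  have hD0 : (0 : ℝ) < D := by exact_mod_cast (hL.trans hLD)
  have hh0 : (0 : ℝ) < h := by exact_mod_cast hh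
  have hX0 : 0 < X := lt_of_lt_of_le (by positivity) hX
  have hLD' : (L : ℝ) ≤ D := by exact_mod_cast hLD
  set n := (D' - D) / L + 1 with hn
  have hn2 : (n : ℝ) ≤ 2 * (D / L) := by
    have h1 : (((D' - D) / L : ℕ) : ℝ) ≤ ((D' - D : ℕ) : ℝ) / L := Nat.cast_div_le
    have h2 : ((D' - D : ℕ) : ℝ) ≤ D := by exact_mod_cast (by omega : D' - D ≤ D)
    have h3 : (1 : ℝ) ≤ D / L := by rwa [le_div_iff₀ hL0, one_mul]
    have h4 : ((D' - D : ℕ) : ℝ) / L ≤ D / L := by gcongr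
    rw [hn]; push_cast; linarith
  have hn1 : 1 + Real.log n ≤ ℓ := by
    refine le_trans ?_ hD1
    gcongr
    have : (n : ℝ) ≤ 2 * D := hn2.trans (by
      have : (D : ℝ) / L ≤ D := div_le_self hD0.le (by exact_mod_cast hL)
      linarith)
    exact_mod_cast this
  have hℓ : 1 ≤ ℓ := le_trans (by linarith [Real.log_natCast_nonneg q]) hq1
  have hdj : ∀ j < n, ((D + j * L : ℕ) : ℝ) ≤ 2 * D := by
    intro j hj
    have h1 : j * L ≤ (D' - D) / L * L := Nat.mul_le_mul_right _ (by omega)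
    have h2 := Nat.div_mul_le_self (D' - D) L
    exact_mod_cast (by omega : D + j * L ≤ 2 * D)
  set x : ℕ → ℝ := fun j => h * (-(X / ((D + j * L : ℕ) : ℝ) ^ 2)) with hx
  set K := 6 ^ q.primeFactors.card * √(q : ℝ) * ((h.gcd q : ℕ) : ℝ) with hK
  set M : ℝ := L / q with hM
  have hM0 : 0 < M := by positivity
  have hmaps : ∀ d ∈ (Finset.Ico D D').filter (fun d => d.Coprime q),
      (d - D) / L ∈ Finset.range n := by
    intro d hd
    have hd := Finset.mem_Ico.mp (Finset.mem_filter.mp hd).1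
    have : (d - D) / L ≤ (D' - D) / L := Nat.div_le_div_right (by omega)
    exact Finset.mem_range.mpr (by omega)
  have hfib : ∀ j, ((Finset.Ico D D').filter (fun d => d.Coprime q)).filter
      (fun d => (d - D) / L = j) =
      (Finset.Ico (D + j * L) (min (D + j * L + L) D')).filter (fun d => d.Coprime q) := by
    intro j
    ext d
    simp only [Finset.mem_filter, Finset.mem_Ico, lt_min_iff]
    rw [Nat.div_eq_iff (by omega)]
    constructor
    · rintro ⟨⟨⟨h1, h2⟩, h3⟩, h4, h5⟩
      refine ⟨⟨?_, ?_, ?_⟩, h3⟩ <;> omega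
    · rintro ⟨⟨h1, h2, h3⟩, h4⟩
      refine ⟨⟨⟨?_, h3⟩, h4⟩, ?_, ?_⟩
      · exact le_trans (Nat.le_add_right _ _) h1
      · omega
      · omega
  have hstep : ∀ j ∈ Finset.range n,
      ‖∑ d ∈ ((Finset.Ico D D').filter (fun d => d.Coprime q)).filter (fun d => (d - D) / L = j),
        ee (h * ((-(X / ((D + (d - D) / L * L : ℕ) : ℝ) ^ 2) * d + β ((d - D) / L) -
        invRes a d) / q))‖ ≤
      K * (2 * M / (1 + 2 * M * |x j - round (x j)|) + 2 * (1 + Real.log q)) := by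
    intro j _
    have h1 := norm_block_le a h (-(X / ((D + j * L : ℕ) : ℝ) ^ 2)) (β j) (D + j * L)
      (min (D + j * L + L) D') hM0 (by
        rw [hM, div_mul_cancel₀ _ hq.ne']
        exact_mod_cast (by omega : min (D + j * L + L) D' - (D + j * L) ≤ L))
    rw [hfib]
    refine le_of_eq_of_le ?_ h1
    congr 1
    refine Finset.sum_congr rfl fun d hd => ?_
    rw [← hfib] at hd
    rw [(Finset.mem_filter.mp hd).2]
  -- the slopes are `-X / z ^ 2` with `D ≤ z ≤ 2 D`, so consecutive ones differ by `≫ X L / D ^ 3`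
  have hgap : ∀ i j, i ≤ j → j < n → h * X * L / (4 * D ^ 3) * ((j : ℝ) - i) ≤ x j - x i := by
    intro i j hij hj
    have hi2 := hdj i (by omega)
    have hj2 := hdj j hj
    have hij' : (0 : ℝ) ≤ (j : ℝ) - i := by
      have : (i : ℝ) ≤ j := by exact_mod_cast hij
      linarith
    rw [hx]
    simp only
    have e1 : ((D + j * L : ℕ) : ℝ) - ((D + i * L : ℕ) : ℝ) = (j - i) * L := by push_cast; ring
    have pi : (0 : ℝ) < ((D + i * L : ℕ) : ℝ) := by push_cast; positivity
    have pj : (0 : ℝ) < ((D + j * L : ℕ) : ℝ) := by push_cast; positivity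
    set y := ((D + i * L : ℕ) : ℝ)
    set z := ((D + j * L : ℕ) : ℝ)
    have e2 : h * -(X / z ^ 2) - h * -(X / y ^ 2) =
        h * X * (z - y) * (1 / (y * z ^ 2) + 1 / (y ^ 2 * z)) := by
      field_simp; ring
    rw [e2, e1]
    have b1 : 1 / (8 * (D : ℝ) ^ 3) ≤ 1 / (y * z ^ 2) := by
      apply one_div_le_one_div_of_le (by positivity)
      calc y * z ^ 2 ≤ (2 * D) * (2 * D) ^ 2 := by gcongr
        _ = _ := by ring
    have b2 : 1 / (8 * (D : ℝ) ^ 3) ≤ 1 / (y ^ 2 * z) := by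
      apply one_div_le_one_div_of_le (by positivity)
      calc y ^ 2 * z ≤ (2 * D) ^ 2 * (2 * D) := by gcongr
        _ = _ := by ring
    calc h * X * L / (4 * D ^ 3) * ((j : ℝ) - i) = h * X * ((j - i) * L) *
          (1 / (8 * (D : ℝ) ^ 3) + 1 / (8 * (D : ℝ) ^ 3)) := by field_simp; ring
      _ ≤ _ := by gcongr
  have hrange : ∀ i j, i < n → j < n → x j - x i ≤ h * X / D ^ 2 := by
    intro i j _ _
    rw [hx]
    simp only
    have pi : (D : ℝ) ≤ ((D + i * L : ℕ) : ℝ) := by exact_mod_cast Nat.le_add_right _ _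
    have pj : (0 : ℝ) < ((D + j * L : ℕ) : ℝ) := by push_cast; positivity
    have b1 : X / ((D + i * L : ℕ) : ℝ) ^ 2 ≤ X / D ^ 2 := by gcongr
    have b2 : 0 ≤ X / ((D + j * L : ℕ) : ℝ) ^ 2 := by positivity
    calc _ ≤ h * (X / ((D + i * L : ℕ) : ℝ) ^ 2) := by nlinarith
      _ ≤ h * (X / D ^ 2) := by gcongr
      _ = _ := by ring
  have hsp := sum_spaced_round_le hM0 (by positivity) n x hgap hrange (by positivity)
  rw [← Finset.sum_fiberwise_of_maps_to hmaps]
  refine (norm_sum_le _ _).trans ((Finset.sum_le_sum hstep).trans ?_)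
  rw [← Finset.mul_sum, Finset.sum_add_distrib, Finset.sum_const, Finset.card_range, nsmul_eq_mul]
  have hK0 : 0 ≤ K := by positivity
  refine mul_le_mul_of_nonneg_left ?_ hK0
  have hfirst : (h * X / D ^ 2 + 2) * (2 * (2 * M + 1 / (h * X * L / (4 * D ^ 3)) *
      (1 + Real.log n))) ≤ 4 * h * X * L / (D ^ 2 * q) + (8 * L / q + 24 * (D / L) * ℓ) := by
    have c1 : (1 : ℝ) / (h * X * L / (4 * D ^ 3)) * (1 + Real.log n) ≤
        4 * D ^ 3 / (h * X * L) * ℓ := by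
      rw [one_div_div]
      gcongr
    have c2 : 16 * (D : ℝ) ^ 3 / (h * X * L) ≤ 16 * (D / L) := by
      rw [div_le_iff₀ (by positivity)]
      have : (D : ℝ) ^ 2 ≤ h * X := by
        have : (1 : ℝ) ≤ h := by exact_mod_cast hh
        nlinarith
      calc 16 * (D : ℝ) ^ 3 = 16 * D * D ^ 2 := by ring
        _ ≤ 16 * D * (h * X) := by gcongr
        _ = _ := by field_simp
    calc _ ≤ (h * X / D ^ 2 + 2) * (2 * (2 * M + 4 * D ^ 3 / (h * X * L) * ℓ)) := by gcongr
      _ = 4 * h * X * L / (D ^ 2 * q) + (8 * L / q + 8 * (D / L) * ℓ) +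
          16 * (D : ℝ) ^ 3 / (h * X * L) * ℓ := by
        rw [hM]; field_simp; ring
      _ ≤ 4 * h * X * L / (D ^ 2 * q) + (8 * L / q + 8 * (D / L) * ℓ) + 16 * (D / L) * ℓ := by
        gcongr
      _ = _ := by ring
  have hsecond : (n : ℝ) * (2 * (1 + Real.log q)) ≤ 4 * (D / L) * ℓ := by
    calc _ ≤ (2 * ((D : ℝ) / L)) * (2 * ℓ) := by
          have : 0 ≤ 1 + Real.log q := by linarith [Real.log_natCast_nonneg q]
          gcongr
      _ = _ := by ring
  linarith

end Block

section Block

variable {q : ℕ} [NeZero q]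

set_option maxHeartbeats 400000 in
/-- The sawtooth sum along the tangents, for blocks of length of order `D √q / T`. The Fourier expansion
is smoothed at scale `η = T / D`. -/
lemma abs_tangent_saw_le (a : (ZMod q)ˣ) {D D' L N : ℕ} {T : ℝ} (hT : 1 ≤ T)
    (hqT : (q : ℝ) ≤ T ^ 2) (hTD : T ≤ D) (hDT : (D : ℝ) ^ 2 ≤ T ^ 3) (hD' : D' ≤ 2 * D)
    (hN : 2 * T ^ 3 ≤ N) (hL : 1 ≤ L) (hLD : L ≤ D) (hL1 : D * √(q : ℝ) / T ≤ L)
    (hL2 : L ≤ 2 * (D * √(q : ℝ) / T)) (β : ℕ → ℝ) :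
    |∑ d ∈ (Finset.Ico D D').filter (fun d => d.Coprime q),
      saw ((-(T ^ 3 / ((D + (d - D) / L * L : ℕ) : ℝ) ^ 2) * d + β ((d - D) / L) -
        invRes a d) / q)| ≤
    54 * (6 ^ q.primeFactors.card * q.divisors.card * (1 + Real.log N) ^ 2 * T) := by
  classical
  have hq : (0 : ℝ) < q := by exact_mod_cast NeZero.pos q
  have hq1 : (1 : ℝ) ≤ q := by exact_mod_cast NeZero.pos q
  have hL0 : (0 : ℝ) < L := by exact_mod_cast hL
  have hT0 : 0 < T := by linarith
  have hD0 : (0 : ℝ) < D := by linarith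
  have hD1 : (1 : ℝ) ≤ D := by linarith
  have hTT : T ≤ T ^ 2 := by nlinarith
  have hT3 : T ^ 2 ≤ T ^ 3 := by nlinarith [sq_nonneg T]
  have hN0 : (0 : ℝ) < N := by nlinarith
  have hN1 : 1 ≤ N := by exact_mod_cast hN0
  set s := √(q : ℝ) with hs
  have hs0 : 0 < s := Real.sqrt_pos.mpr hq
  have hss : s * s = q := Real.mul_self_sqrt hq.le
  set ℓ := 1 + Real.log N with hℓ
  have hℓ1 : 1 ≤ ℓ := by linarith [Real.log_natCast_nonneg N]
  have hlq : 1 + Real.log q ≤ ℓ := by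
    have : (q : ℝ) ≤ N := by nlinarith
    rw [hℓ]; gcongr
  have hlD : 1 + Real.log ((2 * D : ℕ) : ℝ) ≤ ℓ := by
    rw [hℓ]; push_cast; gcongr; nlinarith
  set η : ℝ := T / D with hη
  have hη0 : 0 < η := by positivity
  have hη1 : η ≤ 1 := by rw [hη, div_le_one hD0]; exact hTD
  set Φ : ℝ := 6 ^ q.primeFactors.card with hΦ
  have hΦ1 : 1 ≤ Φ := one_le_pow₀ (by norm_num)
  have hτ1 : (1 : ℝ) ≤ q.divisors.card := by
    exact_mod_cast Finset.card_pos.mpr ⟨1, Nat.one_mem_divisors.mpr (NeZero.ne q)⟩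
  set τ : ℝ := (q.divisors.card : ℝ) with hτ
  set I := (Finset.Ico D D').filter (fun d => d.Coprime q) with hI
  have hcard : (I.card : ℝ) ≤ D := by
    have h1 : I.card ≤ D' - D := (Finset.card_filter_le _ _).trans (Nat.card_Ico _ _).le
    exact_mod_cast h1.trans (by omega)
  refine (abs_sum_saw_le I _ hη0 hη1 hN1).trans ?_
  have hsum : ∑ h ∈ Finset.Icc 1 N, wt η h * ‖∑ d ∈ I,
      ee (h * ((-(T ^ 3 / ((D + (d - D) / L * L : ℕ) : ℝ) ^ 2) * d + β ((d - D) / L) -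
        invRes a d) / q))‖ ≤ Φ * s * (4 * T ^ 3 * L / (η * D ^ 2 * q) +
          (8 * L / q + 28 * (D / L) * ℓ)) * (τ * ℓ) := by
    have hW : (0 : ℝ) ≤ 8 * L / q + 28 * (D / L) * ℓ := by positivity
    calc _ ≤ ∑ h ∈ Finset.Icc 1 N, Φ * s * (4 * T ^ 3 * L / (η * D ^ 2 * q) +
          (8 * L / q + 28 * (D / L) * ℓ)) * (((h.gcd q : ℕ) : ℝ) / h) := by
          refine Finset.sum_le_sum fun h hh => ?_
          have hh1 := (Finset.mem_Icc.mp hh).1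
          have hh0 : (0 : ℝ) < h := by exact_mod_cast hh1
          have h1 := norm_tangent_sum_le a hh1 hL hLD hD' hDT hlq hlD β
          have w0 : 0 ≤ wt η h := le_min (by positivity) (by positivity)
          have w1 : wt η h ≤ 1 / (η * (h : ℝ) ^ 2) := min_le_left _ _
          have w2 : wt η h ≤ 1 / (h : ℝ) := min_le_right _ _
          refine (mul_le_mul_of_nonneg_left h1 w0).trans ?_
          rw [← hs, ← hΦ]
          calc _ = Φ * s * ((h.gcd q : ℕ) : ℝ) * (wt η h * (4 * h * T ^ 3 * L / (D ^ 2 * q)) +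
                wt η h * (8 * L / q + 28 * (D / L) * ℓ)) := by ring
            _ ≤ Φ * s * ((h.gcd q : ℕ) : ℝ) *
                (1 / (η * (h : ℝ) ^ 2) * (4 * h * T ^ 3 * L / (D ^ 2 * q)) +
                1 / (h : ℝ) * (8 * L / q + 28 * (D / L) * ℓ)) := by gcongr
            _ = _ := by field_simp
      _ ≤ _ := by
          rw [← Finset.mul_sum]
          gcongr
          exact sum_gcd_div_le N q (NeZero.ne q)
  have hmain : s * (4 * T ^ 3 * L / (η * D ^ 2 * q) + (8 * L / q + 28 * (D / L) * ℓ)) ≤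
      52 * ℓ * T := by
    have a1 : s * (4 * T ^ 3 * L / (η * D ^ 2 * q)) ≤ 8 * T := by
      calc _ = 4 * T ^ 2 * s / (D * q) * L := by rw [hη]; field_simp
        _ ≤ 4 * T ^ 2 * s / (D * q) * (2 * (D * s / T)) := by gcongr
        _ = 8 * T * (s * s) / q := by field_simp; ring
        _ = 8 * T := by rw [hss]; field_simp
    have a2 : s * (8 * L / q) ≤ 16 * T := by
      calc _ = 8 * s / q * L := by ring
        _ ≤ 8 * s / q * (2 * (D * s / T)) := by gcongr
        _ = 16 * (D / T) * (s * s) / q := by ring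
        _ = 16 * (D / T) := by rw [hss]; field_simp
        _ ≤ 16 * T := by
          gcongr
          rw [div_le_iff₀ hT0]
          nlinarith
    have a3 : s * (D / L) ≤ T := by
      rw [mul_div_assoc', div_le_iff₀ hL0]
      rw [div_le_iff₀ hT0] at hL1
      linarith
    calc _ = s * (4 * T ^ 3 * L / (η * D ^ 2 * q)) + s * (8 * L / q) + 28 * (s * (D / L)) * ℓ := by
          ring
      _ ≤ 8 * T + 16 * T + 28 * T * ℓ := by gcongr
      _ ≤ _ := by nlinarith
  have hcard1 : (I.card : ℝ) * η / 2 ≤ T / 2 := by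
    calc _ ≤ (D : ℝ) * η / 2 := by gcongr
      _ = _ := by rw [hη]; field_simp
  have hcard2 : (I.card : ℝ) / (η * N) ≤ 1 := by
    rw [div_le_one (by positivity)]
    calc (I.card : ℝ) ≤ D := hcard
      _ = D ^ 2 / D := by field_simp
      _ ≤ N / D := by
          gcongr
          nlinarith [pow_pos hT0 3]
      _ ≤ T * N / D := by
          gcongr; nlinarith
      _ = _ := by rw [hη]; ring
  have hQ : T ≤ Φ * τ * ℓ ^ 2 * T := by
    have : 1 ≤ Φ * τ * ℓ ^ 2 := by
      have h1 : 1 ≤ ℓ ^ 2 := one_le_pow₀ hℓ1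
      exact one_le_mul_of_one_le_of_one_le (one_le_mul_of_one_le_of_one_le hΦ1 hτ1) h1
    calc T = 1 * T := (one_mul T).symm
      _ ≤ _ := by gcongr
  have hfin : Φ * s * (4 * T ^ 3 * L / (η * D ^ 2 * q) + (8 * L / q + 28 * (D / L) * ℓ)) * (τ * ℓ)
      ≤ 52 * (Φ * τ * ℓ ^ 2 * T) := by
    calc _ = Φ * τ * ℓ * (s * (4 * T ^ 3 * L / (η * D ^ 2 * q) + (8 * L / q + 28 * (D / L) * ℓ))) := by
          ring
      _ ≤ Φ * τ * ℓ * (52 * ℓ * T) := by gcongr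
      _ = _ := by ring
  linarith

/-- The sawtooth function increases with slope at most `1`. -/
lemma saw_sub_le {x y : ℝ} (h : x ≤ y) : saw y ≤ saw x + (y - x) := by
  have h1 : (⌊x⌋ : ℝ) ≤ ⌊y⌋ := by exact_mod_cast Int.floor_le_floor h
  have h2 := Int.floor_add_fract x
  have h3 := Int.floor_add_fract y
  unfold saw
  linarith

lemma abs_saw_le (x : ℝ) : |saw x| ≤ 1 := by
  have h1 := Int.fract_nonneg x
  have h2 := (Int.fract_lt_one x).le
  unfold saw
  rw [abs_le]; constructor <;> linarith

/-- The hyperbola over a dyadic interval. -/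
lemma abs_dyadic_saw_le (a : (ZMod q)ˣ) {D D' N : ℕ} {T : ℝ} (hT : 1 ≤ T)
    (hqT : (q : ℝ) ≤ T ^ 2) (hDT : (D : ℝ) ^ 2 ≤ T ^ 3) (hD' : D' ≤ 2 * D)
    (hN : 2 * T ^ 3 ≤ N) :
    |∑ d ∈ (Finset.Ico D D').filter (fun d => d.Coprime q),
      saw ((T ^ 3 / d - invRes a d) / q)| ≤
    58 * (6 ^ q.primeFactors.card * q.divisors.card * (1 + Real.log N) ^ 2 * T) := by
  classical
  have hq : (0 : ℝ) < q := by exact_mod_cast NeZero.pos q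
  have hq1 : (1 : ℝ) ≤ q := by exact_mod_cast NeZero.pos q
  have hT0 : 0 < T := by linarith
  have hN1 : 1 ≤ N := by
    have : (0 : ℝ) < N := by nlinarith [pow_pos hT0 3]
    exact_mod_cast this
  set Q := 6 ^ q.primeFactors.card * q.divisors.card * (1 + Real.log N) ^ 2 * T with hQdef
  have hQ : T ≤ Q := by
    have hΦ1 : (1 : ℝ) ≤ 6 ^ q.primeFactors.card := one_le_pow₀ (by norm_num)
    have hτ1 : (1 : ℝ) ≤ q.divisors.card := by
      exact_mod_cast Finset.card_pos.mpr ⟨1, Nat.one_mem_divisors.mpr (NeZero.ne q)⟩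
    have h1 : 1 ≤ (1 + Real.log N) ^ 2 :=
      one_le_pow₀ (by linarith [Real.log_natCast_nonneg N])
    have : 1 ≤ 6 ^ q.primeFactors.card * (q.divisors.card : ℝ) * (1 + Real.log N) ^ 2 :=
      one_le_mul_of_one_le_of_one_le (one_le_mul_of_one_le_of_one_le hΦ1 hτ1) h1
    rw [hQdef]; nlinarith
  set I := (Finset.Ico D D').filter (fun d => d.Coprime q) with hI
  have hcard : (I.card : ℝ) ≤ D := by
    have h1 : I.card ≤ D' - D := (Finset.card_filter_le _ _).trans (Nat.card_Ico _ _).le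
    exact_mod_cast h1.trans (by omega)
  rcases lt_or_ge (D : ℝ) T with hlt | hTD
  · refine (Finset.abs_sum_le_sum_abs _ _).trans ((Finset.sum_le_card_nsmul _ _ 1
      fun d _ => abs_saw_le _).trans ?_)
    rw [nsmul_eq_mul, mul_one]; linarith
  have hD0 : (0 : ℝ) < D := by linarith
  set s := √(q : ℝ) with hs
  have hs0 : 0 < s := Real.sqrt_pos.mpr hq
  have hss : s * s = q := Real.mul_self_sqrt hq.le
  have hs1 : 1 ≤ s := Real.one_le_sqrt.mpr hq1
  have hsT : s ≤ T := Real.sqrt_le_iff.mpr ⟨hT0.le, hqT⟩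
  set y := D * s / T with hy
  have hy1 : 1 ≤ y := by
    rw [hy, le_div_iff₀ hT0]; nlinarith
  have hyD : y ≤ D := by
    rw [hy, div_le_iff₀ hT0]; nlinarith
  set L := ⌈y⌉₊ with hLdef
  have hL1 : y ≤ L := Nat.le_ceil y
  have hL2 : L ≤ 2 * y := by
    have := Nat.ceil_lt_add_one (by linarith : 0 ≤ y)
    rw [← hLdef] at this; linarith
  have hLD : L ≤ D := Nat.ceil_le.mpr hyD
  have hL : 1 ≤ L := Nat.one_le_ceil_iff.mpr (by linarith)
  have hL0 : (0 : ℝ) < L := by exact_mod_cast hL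
  have hdj : ∀ j : ℕ, (0 : ℝ) < ((D + j * L : ℕ) : ℝ) := fun j => by push_cast; positivity
  set β : ℝ → ℕ → ℝ := fun σ j => 2 * T ^ 3 / ((D + j * L : ℕ) : ℝ) + σ with hβ
  set δ : ℝ := T ^ 3 * L ^ 2 / D ^ 3 with hδ
  have hδ0 : 0 ≤ δ := by positivity
  -- the values of the tangent, shifted by `σ`
  set x : ℝ → ℕ → ℝ := fun σ d => (-(T ^ 3 / ((D + (d - D) / L * L : ℕ) : ℝ) ^ 2) * d +
    β σ ((d - D) / L) - invRes a d) / q with hx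
  have hB : ∀ σ, |∑ d ∈ I, saw (x σ d)| ≤ 54 * Q := fun σ =>
    abs_tangent_saw_le a hT hqT hTD hDT hD' hN hL hLD hL1 hL2 (β σ)
  have hδQ : D * (δ / q) ≤ 4 * Q := by
    refine le_trans ?_ (mul_le_mul_of_nonneg_left hQ (by norm_num))
    calc (D : ℝ) * (δ / q) = T ^ 3 / (D ^ 2 * q) * L ^ 2 := by rw [hδ]; field_simp
      _ ≤ T ^ 3 / (D ^ 2 * q) * (2 * y) ^ 2 := by gcongr
      _ = 4 * T * (s * s) / q := by rw [hy]; field_simp; ring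
      _ = 4 * T := by rw [hss]; field_simp
  -- the hyperbola lies between the tangent and its translate by `δ`
  have htan : ∀ d ∈ I, x 0 d ≤ (T ^ 3 / d - invRes a d) / q ∧
      (T ^ 3 / d - invRes a d) / q ≤ x δ d ∧ x δ d = x 0 d + δ / q := by
    intro d hd
    have hd := (Finset.mem_Ico.mp (Finset.mem_filter.mp hd).1).1
    have hdD : (D : ℝ) ≤ d := by exact_mod_cast hd
    have hd0 : (0 : ℝ) < d := by linarith
    set j := (d - D) / L with hj
    have hp := hdj j
    have hj1 : j * L ≤ d - D := Nat.div_mul_le_self _ _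
    have hj2 : d - D < j * L + L := by
      rw [hj]; have := Nat.lt_div_mul_add (a := d - D) (b := L) (by omega); exact this
    have hzD : (D : ℝ) ≤ ((D + j * L : ℕ) : ℝ) := by exact_mod_cast Nat.le_add_right _ _
    have hz1 : ((D + j * L : ℕ) : ℝ) ≤ d := by exact_mod_cast (by omega : D + j * L ≤ d)
    have hz2 : (d : ℝ) ≤ ((D + j * L : ℕ) : ℝ) + L := by
      exact_mod_cast (by omega : d ≤ D + j * L + L)
    simp only [hx, hβ, ← hj]
    set z := ((D + j * L : ℕ) : ℝ)
    have key : T ^ 3 / d - (-(T ^ 3 / z ^ 2) * d + 2 * T ^ 3 / z) =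
        T ^ 3 * (d - z) ^ 2 / (d * z ^ 2) := by
      field_simp; ring
    have key0 : 0 ≤ T ^ 3 * (d - z) ^ 2 / (d * z ^ 2) := by positivity
    have key1 : T ^ 3 * (d - z) ^ 2 / (d * z ^ 2) ≤ δ := by
      rw [hδ]
      have e : (D : ℝ) ^ 3 = D * D ^ 2 := by ring
      rw [e]
      have : 0 ≤ (d : ℝ) - z := by linarith
      gcongr
      linarith
    refine ⟨?_, ?_, ?_⟩
    · gcongr; linarith
    · gcongr; linarith
    · ring
  have hcδ : (I.card : ℝ) * (δ / q) ≤ D * (δ / q) := by gcongr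
  have h0 := abs_le.mp (hB 0)
  have h1 := abs_le.mp (hB δ)
  rw [abs_le]
  constructor
  · have : ∑ d ∈ I, saw (x δ d) ≤ ∑ d ∈ I, (saw ((T ^ 3 / d - invRes a d) / q) + δ / q) := by
      refine Finset.sum_le_sum fun d hd => ?_
      obtain ⟨t1, t2, t3⟩ := htan d hd
      have := saw_sub_le t2
      linarith
    rw [Finset.sum_add_distrib, Finset.sum_const, nsmul_eq_mul] at this
    linarith
  · have : ∑ d ∈ I, saw ((T ^ 3 / d - invRes a d) / q) ≤ ∑ d ∈ I, (saw (x 0 d) + δ / q) := by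
      refine Finset.sum_le_sum fun d hd => ?_
      obtain ⟨t1, t2, t3⟩ := htan d hd
      have := saw_sub_le t1
      linarith
    rw [Finset.sum_add_distrib, Finset.sum_const, nsmul_eq_mul] at this
    linarith

end Block

/-! ### Comparison of two residue classes -/

section Assembly

variable {q : ℕ} [NeZero q]

/-- The quantity `6 ^ ω(q) τ(q) (1 + log N) ^ 2 T` in which the error terms are measured. -/
noncomputable def errBound (q N : ℕ) (T : ℝ) : ℝ :=
  6 ^ q.primeFactors.card * q.divisors.card * (1 + Real.log N) ^ 2 * T

lemma le_errBound (q N : ℕ) [NeZero q] {T : ℝ} (hT : 1 ≤ T) : T ≤ errBound q N T := by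
  have hΦ1 : (1 : ℝ) ≤ 6 ^ q.primeFactors.card := one_le_pow₀ (by norm_num)
  have hτ1 : (1 : ℝ) ≤ q.divisors.card := by
    exact_mod_cast Finset.card_pos.mpr ⟨1, Nat.one_mem_divisors.mpr (NeZero.ne q)⟩
  have h1 : 1 ≤ (1 + Real.log N) ^ 2 :=
    one_le_pow₀ (by linarith [Real.log_natCast_nonneg N])
  have : 1 ≤ 6 ^ q.primeFactors.card * (q.divisors.card : ℝ) * (1 + Real.log N) ^ 2 :=
    one_le_mul_of_one_le_of_one_le (one_le_mul_of_one_le_of_one_le hΦ1 hτ1) h1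
  rw [errBound]; nlinarith

/-- Dyadic decomposition of the sum along the hyperbola. -/
lemma abs_hyperbola_saw_le (a : (ZMod q)ˣ) {R N : ℕ} {T : ℝ} (hT : 1 ≤ T)
    (hqT : (q : ℝ) ≤ T ^ 2) (hR : (R : ℝ) ^ 2 ≤ T ^ 3) (hN : 2 * T ^ 3 ≤ N) :
    |∑ d ∈ (Finset.Ico 1 (R + 1)).filter (fun d => d.Coprime q),
      saw ((T ^ 3 / d - invRes a d) / q)| ≤
    116 * ((1 + Real.log N) * errBound q N T) := by
  classical
  have hQ : 0 ≤ errBound q N T := le_trans (by linarith) (le_errBound q N hT)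
  have hk : ∀ k R : ℕ, R < 2 ^ k → (R : ℝ) ^ 2 ≤ T ^ 3 →
      |∑ d ∈ (Finset.Ico 1 (R + 1)).filter (fun d => d.Coprime q),
      saw ((T ^ 3 / d - invRes a d) / q)| ≤ k * (58 * errBound q N T) := by
    intro k
    induction k with
    | zero =>
      intro R hR _
      have : R = 0 := by simpa using hR
      subst this; simp
    | succ k ih =>
      intro R hR hRT
      rcases Nat.eq_zero_or_pos R with h0 | h0
      · subst h0; simp; positivity
      have hle : ((R / 2 : ℕ) : ℝ) ≤ R := by exact_mod_cast Nat.div_le_self _ _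
      have h1 := ih (R / 2) (by rw [pow_succ] at hR; omega) (le_trans (by gcongr) hRT)
      have hDT : ((R / 2 + 1 : ℕ) : ℝ) ^ 2 ≤ T ^ 3 := by
        refine le_trans ?_ hRT
        have : ((R / 2 + 1 : ℕ) : ℝ) ≤ R := by exact_mod_cast (by omega : R / 2 + 1 ≤ R)
        gcongr
      have h2 := abs_dyadic_saw_le a (D' := R + 1) hT hqT hDT (by omega) hN
      rw [← errBound] at h2
      have e : (Finset.Ico 1 (R + 1)).filter (fun d => d.Coprime q) =
          (Finset.Ico 1 (R / 2 + 1)).filter (fun d => d.Coprime q) ∪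
          (Finset.Ico (R / 2 + 1) (R + 1)).filter (fun d => d.Coprime q) := by
        rw [← Finset.filter_union, Finset.Ico_union_Ico_eq_Ico (by omega) (by omega)]
      rw [e, Finset.sum_union (Finset.disjoint_filter_filter
        (Finset.Ico_disjoint_Ico_consecutive _ _ _))]
      refine (abs_add_le _ _).trans ((add_le_add h1 h2).trans ?_)
      push_cast; linarith
  refine (hk (Nat.log 2 R + 1) R (Nat.lt_pow_succ_log_self (by norm_num) R) hR).trans ?_
  have hlog : ((Nat.log 2 R + 1 : ℕ) : ℝ) ≤ 2 * (1 + Real.log N) := by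
    have hN0 := Real.log_natCast_nonneg N
    rcases Nat.eq_zero_or_pos R with h0 | h0
    · subst h0; simp; linarith
    have hR1 : (1 : ℝ) ≤ R := by exact_mod_cast h0
    have h1 : ((2 ^ Nat.log 2 R : ℕ) : ℝ) ≤ R := by
      exact_mod_cast Nat.pow_log_le_self 2 h0.ne'
    have h2 : (R : ℝ) ≤ N := by nlinarith
    have h3 : (Nat.log 2 R : ℝ) * Real.log 2 ≤ Real.log N := by
      rw [← Real.log_pow]
      apply Real.log_le_log (by positivity)
      push_cast at h1
      linarith
    have h4 := Real.log_two_gt_d9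
    have h5 : (0 : ℝ) ≤ (Nat.log 2 R : ℝ) := Nat.cast_nonneg _
    push_cast
    nlinarith
  calc _ ≤ 2 * (1 + Real.log N) * (58 * errBound q N T) := by gcongr
    _ = _ := by ring

/-- The sawtooth sum with constant argument, over at most one period; here `η = 1 / √q`. -/
lemma abs_short_saw_le (a : (ZMod q)ˣ) (κ : ℝ) {R N : ℕ} {T : ℝ} (hT : 1 ≤ T)
    (hqT : (q : ℝ) ≤ T ^ 2) (hR : R ≤ q) (hN : 2 * T ^ 3 ≤ N) :
    |∑ d ∈ (Finset.Ico 1 (R + 1)).filter (fun d => d.Coprime q), saw ((κ - invRes a d) / q)| ≤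
    6 * errBound q N T := by
  classical
  have hq : (0 : ℝ) < q := by exact_mod_cast NeZero.pos q
  have hq1 : (1 : ℝ) ≤ q := by exact_mod_cast NeZero.pos q
  have hT0 : 0 < T := by linarith
  have hN0 : (0 : ℝ) < N := by nlinarith [pow_pos hT0 3]
  have hN1 : 1 ≤ N := by exact_mod_cast hN0
  set s := √(q : ℝ) with hs
  have hs0 : 0 < s := Real.sqrt_pos.mpr hq
  have hss : s * s = q := Real.mul_self_sqrt hq.le
  have hs1 : 1 ≤ s := Real.one_le_sqrt.mpr hq1
  have hsT : s ≤ T := Real.sqrt_le_iff.mpr ⟨hT0.le, hqT⟩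
  set I := (Finset.Ico 1 (R + 1)).filter (fun d => d.Coprime q) with hI
  have hcard : (I.card : ℝ) ≤ q := by
    have h1 : I.card ≤ R + 1 - 1 := (Finset.card_filter_le _ _).trans (Nat.card_Ico _ _).le
    exact_mod_cast h1.trans (by omega)
  set ℓ := 1 + Real.log N with hℓ
  have hlq0 : 0 ≤ Real.log q := Real.log_natCast_nonneg _
  have hlq : 1 + Real.log q ≤ ℓ := by
    have : (q : ℝ) ≤ N := by nlinarith [pow_pos hT0 3, sq_nonneg T]
    rw [hℓ]; gcongr
  have hη1 : 1 / s ≤ 1 := by rw [div_le_one hs0]; exact hs1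
  refine (abs_sum_saw_le I _ (by positivity) hη1 hN1).trans ?_
  have c1 : (I.card : ℝ) * (1 / s) / 2 ≤ T / 2 := by
    have : (I.card : ℝ) * (1 / s) ≤ s := by
      rw [mul_one_div, div_le_iff₀ hs0, hss]; exact hcard
    linarith
  have c2 : (I.card : ℝ) / (1 / s * N) ≤ 1 := by
    rw [div_le_one (by positivity), one_div, inv_mul_eq_div, le_div_iff₀ hs0]
    calc (I.card : ℝ) * s ≤ q * s := by gcongr
      _ ≤ T ^ 2 * T := by gcongr
      _ ≤ N := by nlinarith [pow_pos hT0 3]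
  set Φ : ℝ := 6 ^ q.primeFactors.card with hΦ
  set τ : ℝ := (q.divisors.card : ℝ) with hτ
  have hℓ0 : 0 ≤ ℓ := by linarith
  have hsum : ∑ h ∈ Finset.Icc 1 N, wt (1 / s) h * ‖∑ d ∈ I, ee (h * ((κ - invRes a d) / q))‖ ≤
      Φ * s * (4 * ℓ) * (τ * ℓ) := by
    calc _ ≤ ∑ h ∈ Finset.Icc 1 N, Φ * s * (4 * ℓ) * (((h.gcd q : ℕ) : ℝ) / h) := by
          refine Finset.sum_le_sum fun h hh => ?_
          have hh1 := (Finset.mem_Icc.mp hh).1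
          have hh0 : (0 : ℝ) < h := by exact_mod_cast hh1
          have h1 := norm_block_le a h 0 κ 1 (R + 1) one_pos (by
            rw [one_mul]; exact_mod_cast (by omega : R + 1 - 1 ≤ q))
          simp only [zero_mul, zero_add, mul_zero, round_zero, Int.cast_zero, sub_zero,
            abs_zero, add_zero, div_one, mul_one] at h1
          have w2 : wt (1 / s) h ≤ 1 / (h : ℝ) := min_le_right _ _
          calc _ ≤ 1 / (h : ℝ) * (Φ * s * ((h.gcd q : ℕ) : ℝ) * (2 + 2 * (1 + Real.log q))) := by
                gcongr
            _ ≤ 1 / (h : ℝ) * (Φ * s * ((h.gcd q : ℕ) : ℝ) * (4 * ℓ)) := by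
                gcongr; linarith
            _ = _ := by ring
      _ ≤ _ := by
          rw [← Finset.mul_sum]
          gcongr
          exact sum_gcd_div_le N q (NeZero.ne q)
  have hQ := le_errBound q N hT
  have hfin : Φ * s * (4 * ℓ) * (τ * ℓ) ≤ 4 * errBound q N T := by
    calc _ ≤ Φ * T * (4 * ℓ) * (τ * ℓ) := by gcongr
      _ = _ := by rw [errBound]; ring
  linarith

/-- The sum over a full period does not depend on `a`. -/
lemma sum_period_eq (a a' : (ZMod q)ˣ) (F : ℕ → ℝ) :
    ∑ d ∈ Finset.range q, (if (d + 1).Coprime q then F (invRes a (d + 1)) else 0) =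
    ∑ d ∈ Finset.range q, (if (d + 1).Coprime q then F (invRes a' (d + 1)) else 0) := by
  classical
  have key : ∀ a : (ZMod q)ˣ,
      ∑ d ∈ Finset.range q, (if (d + 1).Coprime q then F (invRes a (d + 1)) else 0) =
      ∑ u : (ZMod q)ˣ, F (u : ZMod q).val := by
    intro a
    rw [← Finset.sum_filter]
    refine Finset.sum_bij' (fun d hd => a * (ZMod.unitOfCoprime (d + 1)
      (Finset.mem_filter.mp hd).2)⁻¹)
      (fun u _ => (((u⁻¹ * a : (ZMod q)ˣ) : ZMod q) - 1).val) ?_ ?_ ?_ ?_ ?_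
    · intro d _; exact Finset.mem_univ _
    · intro u _
      refine Finset.mem_filter.mpr ⟨Finset.mem_range.mpr (ZMod.val_lt _), ?_⟩
      rw [← ZMod.isUnit_iff_coprime]
      push_cast
      rw [ZMod.natCast_val, ZMod.cast_id, sub_add_cancel]
      exact (u⁻¹ * a).isUnit
    · intro d hd
      have hd' := Finset.mem_range.mp (Finset.mem_filter.mp hd).1
      have : ((a * (ZMod.unitOfCoprime (d + 1) (Finset.mem_filter.mp hd).2)⁻¹)⁻¹ * a :
        (ZMod q)ˣ) = ZMod.unitOfCoprime (d + 1) (Finset.mem_filter.mp hd).2 := by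
        rw [mul_inv_rev, inv_inv, mul_assoc, inv_mul_cancel, mul_one]
      simp only [this, ZMod.coe_unitOfCoprime]
      push_cast
      rw [add_sub_cancel_right, ZMod.val_cast_of_lt hd']
    · intro u _
      have : ZMod.unitOfCoprime ((((u⁻¹ * a : (ZMod q)ˣ) : ZMod q) - 1).val + 1) (by
          rw [← ZMod.isUnit_iff_coprime]
          push_cast
          rw [ZMod.natCast_val, ZMod.cast_id, sub_add_cancel]
          exact (u⁻¹ * a).isUnit) = u⁻¹ * a := by
        ext
        rw [ZMod.coe_unitOfCoprime]
        push_cast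
        rw [ZMod.natCast_val, ZMod.cast_id, sub_add_cancel]
      rw [this, mul_inv_rev, inv_inv, mul_inv_cancel_left]
    · intro d hd
      rw [invRes, Units.val_mul, ← ZMod.inv_coe_unit, ZMod.coe_unitOfCoprime]
  rw [key, key]

/-- Comparison of two residue classes: full periods cancel, and a short sum remains. -/
lemma abs_sub_saw_le (a a' : (ZMod q)ˣ) (κ : ℝ) (R : ℕ) {N : ℕ} {T : ℝ} (hT : 1 ≤ T)
    (hqT : (q : ℝ) ≤ T ^ 2) (hN : 2 * T ^ 3 ≤ N) :
    |∑ d ∈ (Finset.Ico 1 (R + 1)).filter (fun d => d.Coprime q), saw ((κ - invRes a d) / q) -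
      ∑ d ∈ (Finset.Ico 1 (R + 1)).filter (fun d => d.Coprime q), saw ((κ - invRes a' d) / q)| ≤
    12 * errBound q N T := by
  classical
  set g : (ZMod q)ˣ → ℕ → ℝ := fun a d =>
    if (d + 1).Coprime q then saw ((κ - invRes a (d + 1)) / q) else 0 with hg
  have hG : ∀ (a : (ZMod q)ˣ) (R : ℕ), ∑ d ∈ (Finset.Ico 1 (R + 1)).filter (fun d => d.Coprime q),
      saw ((κ - invRes a d) / q) = ∑ d ∈ Finset.range R, g a d := by
    intro a R
    rw [Finset.sum_filter, Finset.range_eq_Ico, hg,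
      Finset.sum_Ico_add' (fun d : ℕ => if d.Coprime q then saw ((κ - invRes a d) / q) else 0) 0 R 1]
  have hper : ∀ (a : (ZMod q)ˣ) (d : ℕ), g a (d + q) = g a d := by
    intro a d
    have e1 : (d + q + 1).Coprime q ↔ (d + 1).Coprime q := by
      rw [add_right_comm, Nat.coprime_add_self_left]
    have e2 : invRes a (d + q + 1) = invRes a (d + 1) := by
      unfold invRes; push_cast; rw [ZMod.natCast_self, add_zero]
    simp only [hg, e1, e2]
  have hadd : ∀ (a : (ZMod q)ˣ) (R : ℕ), ∑ d ∈ Finset.range (R + q), g a d =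
      ∑ d ∈ Finset.range R, g a d + ∑ d ∈ Finset.range q, g a d := by
    intro a R
    rw [add_comm R q, Finset.sum_range_add, add_comm]
    congr 1
    exact Finset.sum_congr rfl fun d _ => by rw [add_comm q d, hper]
  have hfull := sum_period_eq a a' (fun c => saw ((κ - c) / q))
  rw [hG, hG]
  induction R using Nat.strong_induction_on with
  | _ R ih =>
    rcases lt_or_ge R q with hlt | hge
    · have h1 := abs_short_saw_le a κ hT hqT hlt.le hN
      have h2 := abs_short_saw_le a' κ hT hqT hlt.le hN
      rw [hG] at h1 h2
      refine (abs_sub _ _).trans ?_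
      linarith
    · obtain ⟨R', rfl⟩ := Nat.exists_eq_add_of_le' hge
      have := ih R' (by have := NeZero.pos q; omega)
      rw [hadd, hadd]
      have e : ∑ d ∈ Finset.range q, g a d = ∑ d ∈ Finset.range q, g a' d := hfull
      rw [e, add_sub_add_right_eq_sub]
      exact this

end Assembly

/-! ### The hyperbola method -/

section Hyperbola

variable {q : ℕ} [NeZero q]

/-- The number of integers in `[1, x]` congruent to `c`, in terms of the sawtooth function. -/
lemma card_modEq_eq (c : ℕ) {x : ℝ} (hx : 0 ≤ x) :
    (((Finset.Icc 1 ⌊x⌋₊).filter (fun e => e ≡ c [MOD q])).card : ℝ) =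
      x / q - saw ((x - c) / q) + saw ((0 - c) / q) := by
  have h1 := Nat.Ioc_filter_modEq_card 0 ⌊x⌋₊ (NeZero.pos q) c
  have hfl : ∀ (k : ℕ) (y : ℝ), ⌊y⌋ = (k : ℤ) → ⌊((k : ℚ) - c) / (q : ℚ)⌋ = ⌊(y - c) / (q : ℝ)⌋ := by
    intro k y hy
    rw [Int.floor_div_natCast, Int.floor_div_natCast, Int.floor_sub_natCast,
      Int.floor_sub_natCast, hy, Int.floor_natCast]
  rw [hfl ⌊x⌋₊ x (Int.natCast_floor_eq_floor hx).symm, hfl 0 0 (by simp), max_eq_left] at h1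
  · have h2 : (((Finset.Icc 1 ⌊x⌋₊).filter (fun e => e ≡ c [MOD q])).card : ℝ) =
        (⌊(x - c) / (q : ℝ)⌋ : ℝ) - ⌊((0 : ℝ) - c) / (q : ℝ)⌋ := by
      have e : Finset.Icc 1 ⌊x⌋₊ = Finset.Ioc 0 ⌊x⌋₊ := rfl
      rw [e]
      exact_mod_cast h1
    rw [h2]
    have h3 := Int.floor_add_fract ((x - c) / (q : ℝ))
    have h4 := Int.floor_add_fract (((0 : ℝ) - c) / (q : ℝ))
    have h5 : (x - c) / (q : ℝ) = x / q + (0 - c) / q := by ring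
    unfold saw
    linarith
  · rw [sub_nonneg]
    apply Int.floor_le_floor
    gcongr

/-- The pairs of positive integers with product at most `m` in a given residue class. -/
def pairsIn (q m : ℕ) (z : ZMod q) : Finset (ℕ × ℕ) :=
  (Finset.Icc 1 m ×ˢ Finset.Icc 1 m).filter
    (fun p => p.1 * p.2 ≤ m ∧ ((p.1 * p.2 : ℕ) : ZMod q) = z)

/-- The symmetry of pairs `(d, e)` with `d e ≤ m`, one of whose entries is at most `√m`. -/
lemma card_pairsIn {q : ℕ} (m : ℕ) (z : ZMod q) :
    (pairsIn q m z).card + ∑ d ∈ Finset.Icc 1 m.sqrt,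
      ((Finset.Icc 1 m.sqrt).filter (fun e => ((d * e : ℕ) : ZMod q) = z)).card =
    2 * ∑ d ∈ Finset.Icc 1 m.sqrt,
      ((Finset.Icc 1 (m / d)).filter (fun e => ((d * e : ℕ) : ZMod q) = z)).card := by
  classical
  set R := m.sqrt with hR
  have hRm : R ≤ m := Nat.sqrt_le_self m
  have hRR : R * R ≤ m := Nat.sqrt_le m
  have hRR2 : m < (R + 1) * (R + 1) := Nat.lt_succ_sqrt m
  set U := (pairsIn q m z).filter (fun p => p.1 ≤ R) with hU
  set V := (pairsIn q m z).filter (fun p => p.2 ≤ R) with hV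
  have hUV : U ∪ V = pairsIn q m z := by
    rw [hU, hV, ← Finset.filter_or, Finset.filter_eq_self]
    intro p hp
    have h1 := (Finset.mem_filter.mp hp).2.1
    by_contra hcon
    push Not at hcon
    have : (R + 1) * (R + 1) ≤ p.1 * p.2 := Nat.mul_le_mul hcon.1 hcon.2
    omega
  have hcardV : V.card = U.card := by
    refine Finset.card_bij' (fun p _ => p.swap) (fun p _ => p.swap) ?_ ?_ ?_ ?_
    · intro p hp
      simp only [hU, hV, pairsIn, Finset.mem_filter, Finset.mem_product, Prod.fst_swap,
        Prod.snd_swap] at hp ⊢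
      rw [mul_comm p.2]; tauto
    · intro p hp
      simp only [hU, hV, pairsIn, Finset.mem_filter, Finset.mem_product, Prod.fst_swap,
        Prod.snd_swap] at hp ⊢
      rw [mul_comm p.2]; tauto
    · intro p _; exact Prod.swap_swap p
    · intro p _; exact Prod.swap_swap p
  have hcardU : U.card = ∑ d ∈ Finset.Icc 1 R,
      ((Finset.Icc 1 (m / d)).filter (fun e => ((d * e : ℕ) : ZMod q) = z)).card := by
    rw [← Finset.card_sigma]
    refine Finset.card_bij' (fun p _ => ⟨p.1, p.2⟩) (fun p _ => (p.1, p.2)) ?_ ?_ ?_ ?_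
    · intro p hp
      simp only [hU, pairsIn, Finset.mem_filter, Finset.mem_product, Finset.mem_Icc,
        Finset.mem_sigma] at hp ⊢
      obtain ⟨⟨⟨⟨h1, h2⟩, h3, h4⟩, h5, h6⟩, h7⟩ := hp
      exact ⟨⟨h1, h7⟩, ⟨h3, (Nat.le_div_iff_mul_le h1).mpr (by rwa [mul_comm])⟩, h6⟩
    · intro p hp
      simp only [hU, pairsIn, Finset.mem_filter, Finset.mem_product, Finset.mem_Icc,
        Finset.mem_sigma] at hp ⊢
      obtain ⟨⟨h1, h2⟩, ⟨h3, h4⟩, h5⟩ := hp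
      exact ⟨⟨⟨⟨h1, h2.trans hRm⟩, h3, h4.trans (Nat.div_le_self _ _)⟩,
        by rw [mul_comm]; exact (Nat.le_div_iff_mul_le h1).mp h4, h5⟩, h2⟩
    · intro p _; rfl
    · intro p _; rfl
  have hcardI : (U ∩ V).card = ∑ d ∈ Finset.Icc 1 R,
      ((Finset.Icc 1 R).filter (fun e => ((d * e : ℕ) : ZMod q) = z)).card := by
    rw [← Finset.card_sigma]
    refine Finset.card_bij' (fun p _ => ⟨p.1, p.2⟩) (fun p _ => (p.1, p.2)) ?_ ?_ ?_ ?_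
    · intro p hp
      simp only [hU, hV, pairsIn, Finset.mem_inter, Finset.mem_filter, Finset.mem_product,
        Finset.mem_Icc, Finset.mem_sigma] at hp ⊢
      tauto
    · intro p hp
      simp only [hU, hV, pairsIn, Finset.mem_inter, Finset.mem_filter, Finset.mem_product,
        Finset.mem_Icc, Finset.mem_sigma] at hp ⊢
      obtain ⟨⟨h1, h2⟩, ⟨h3, h4⟩, h5⟩ := hp
      have h6 : p.1 * p.2 ≤ m := (Nat.mul_le_mul h2 h4).trans hRR
      have h7 := h2.trans hRm
      have h8 := h4.trans hRm
      tauto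
    · intro p _; rfl
    · intro p _; rfl
  have := Finset.card_union_add_card_inter U V
  rw [hUV, hcardI, hcardV, hcardU] at this
  omega

lemma card_filter_mul_eq (a : (ZMod q)ˣ) (d : ℕ) {x : ℝ} (hx : 0 ≤ x) :
    (((Finset.Icc 1 ⌊x⌋₊).filter (fun e => ((d * e : ℕ) : ZMod q) = a)).card : ℝ) =
    if d.Coprime q then x / q - saw ((x - invRes a d) / q) + saw ((0 - invRes a d) / q) else 0 := by
  classical
  split_ifs with hd
  · rw [← card_modEq_eq _ hx]
    congr 2
    ext e
    rw [Finset.mem_filter, Finset.mem_filter, and_congr_right_iff]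
    intro _
    rw [← ZMod.natCast_eq_natCast_iff, invRes_cast, Nat.cast_mul]
    have hu := (ZMod.isUnit_iff_coprime d q).mpr hd
    have h1 := ZMod.coe_mul_inv_eq_one d hd
    constructor
    · intro h
      rw [← h, mul_right_comm, h1, one_mul]
    · intro h
      rw [h, mul_left_comm, h1, mul_one]
  · rw [Finset.filter_eq_empty_iff.mpr, Finset.card_empty, Nat.cast_zero]
    intro e _ h
    apply hd
    rw [← ZMod.isUnit_iff_coprime]
    rw [Nat.cast_mul] at h
    exact isUnit_of_mul_isUnit_left (h ▸ a.isUnit)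

/-- Dirichlet's hyperbola method in a residue class. -/
lemma card_pairsIn_eq (a : (ZMod q)ˣ) {X : ℝ} (hX : 0 ≤ X) :
    ((pairsIn q ⌊X⌋₊ (a : ZMod q)).card : ℝ) =
    ∑ d ∈ (Finset.Ico 1 (⌊X⌋₊.sqrt + 1)).filter (fun d => d.Coprime q),
      (2 * (X / d) - (⌊X⌋₊.sqrt : ℝ)) / q +
    ∑ d ∈ (Finset.Ico 1 (⌊X⌋₊.sqrt + 1)).filter (fun d => d.Coprime q),
      saw ((0 - invRes a d) / q) +
    ∑ d ∈ (Finset.Ico 1 (⌊X⌋₊.sqrt + 1)).filter (fun d => d.Coprime q),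
      saw (((⌊X⌋₊.sqrt : ℝ) - invRes a d) / q) -
    2 * ∑ d ∈ (Finset.Ico 1 (⌊X⌋₊.sqrt + 1)).filter (fun d => d.Coprime q),
      saw ((X / d - invRes a d) / q) := by
  have h1 := card_pairsIn ⌊X⌋₊ (a : ZMod q)
  have h2 : ((pairsIn q ⌊X⌋₊ (a : ZMod q)).card : ℝ) =
      2 * ∑ d ∈ Finset.Icc 1 ⌊X⌋₊.sqrt,
      (((Finset.Icc 1 (⌊X⌋₊ / d)).filter (fun e => ((d * e : ℕ) : ZMod q) = a)).card : ℝ) -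
      ∑ d ∈ Finset.Icc 1 ⌊X⌋₊.sqrt,
      (((Finset.Icc 1 ⌊X⌋₊.sqrt).filter (fun e => ((d * e : ℕ) : ZMod q) = a)).card : ℝ) := by
    rw [eq_sub_iff_add_eq]; exact_mod_cast h1
  rw [h2]
  have e1 : ∀ d : ℕ, (((Finset.Icc 1 (⌊X⌋₊ / d)).filter
      (fun e => ((d * e : ℕ) : ZMod q) = a)).card : ℝ) =
      if d.Coprime q then X / d / q - saw ((X / d - invRes a d) / q) + saw ((0 - invRes a d) / q)
        else 0 := by
    intro d
    rw [← card_filter_mul_eq a d (by positivity : 0 ≤ X / d), Nat.floor_div_natCast]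
  have e2 : ∀ d : ℕ, (((Finset.Icc 1 ⌊X⌋₊.sqrt).filter
      (fun e => ((d * e : ℕ) : ZMod q) = a)).card : ℝ) =
      if d.Coprime q then (⌊X⌋₊.sqrt : ℝ) / q - saw (((⌊X⌋₊.sqrt : ℝ) - invRes a d) / q) +
        saw ((0 - invRes a d) / q) else 0 := by
    intro d
    rw [← card_filter_mul_eq a d (Nat.cast_nonneg ⌊X⌋₊.sqrt), Nat.floor_natCast]
  simp only [e1, e2]
  rw [← Finset.sum_filter, ← Finset.sum_filter, Finset.mul_sum, Finset.mul_sum,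
    ← Finset.sum_sub_distrib, ← Finset.sum_add_distrib, ← Finset.sum_add_distrib,
    ← Finset.sum_sub_distrib]
  refine Finset.sum_congr rfl fun d _ => ?_
  ring

/-- The divisor sums over two reduced residue classes are close to each other. -/
lemma abs_pairsIn_sub_le (a a' : (ZMod q)ˣ) {N : ℕ} {T : ℝ} (hT : 1 ≤ T)
    (hqT : (q : ℝ) ≤ T ^ 2) (hN : 2 * T ^ 3 ≤ N) :
    |((pairsIn q ⌊T ^ (3 : ℕ)⌋₊ (a : ZMod q)).card : ℝ) - (pairsIn q ⌊T ^ (3 : ℕ)⌋₊ (a' : ZMod q)).card| ≤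
    488 * ((1 + Real.log N) * errBound q N T) := by
  have hT3 : 0 ≤ T ^ 3 := by positivity
  rw [card_pairsIn_eq a hT3, card_pairsIn_eq a' hT3]
  set R := ⌊T ^ (3 : ℕ)⌋₊.sqrt with hR
  have hRT : (R : ℝ) ^ 2 ≤ T ^ 3 := by
    refine le_trans ?_ (Nat.floor_le hT3)
    rw [hR]; exact_mod_cast Nat.sqrt_le' ⌊T ^ (3 : ℕ)⌋₊
  have h0 := abs_le.mp (abs_sub_saw_le a a' 0 R hT hqT hN)
  have h1 := abs_le.mp (abs_sub_saw_le a a' R R hT hqT hN)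
  have h2 := abs_le.mp (abs_hyperbola_saw_le a hT hqT hRT hN)
  have h3 := abs_le.mp (abs_hyperbola_saw_le a' hT hqT hRT hN)
  have hQ : 0 ≤ errBound q N T := le_trans (by linarith) (le_errBound q N hT)
  have h4 : errBound q N T ≤ (1 + Real.log N) * errBound q N T := by
    have := Real.log_natCast_nonneg N
    nlinarith
  rw [abs_le]
  constructor <;> linarith [h0.1, h0.2, h1.1, h1.2, h2.1, h2.2, h3.1, h3.2]

end Hyperbola

/-! ### The divisor bound and averaging over the reduced residues -/

section DivisorBound

lemma two_pow_le_card_divisors {n : ℕ} (hn : n ≠ 0) :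
    2 ^ n.primeFactors.card ≤ n.divisors.card := by
  rw [Nat.card_divisors hn, ← Finset.prod_const]
  refine Finset.prod_le_prod' fun p hp => ?_
  have := (Nat.prime_of_mem_primeFactors hp).factorization_pos_of_dvd hn
    (Nat.dvd_of_mem_primeFactors hp)
  omega

/-- The divisor bound. -/
lemma exists_card_divisors_le {δ : ℝ} (hδ : 0 < δ) :
    ∃ C : ℝ, 1 ≤ C ∧ ∀ n : ℕ, n ≠ 0 → (n.divisors.card : ℝ) ≤ C * (n : ℝ) ^ δ := by
  classical
  set A : ℝ := 1 + 1 / (δ * Real.log 2) with hA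
  have hl2 : 0 < Real.log 2 := Real.log_pos one_lt_two
  have hA1 : 1 ≤ A := by
    rw [hA]; have : 0 < 1 / (δ * Real.log 2) := by positivity
    linarith
  set P := ⌈(2 : ℝ) ^ (1 / δ)⌉₊ with hP
  refine ⟨A ^ P, one_le_pow₀ hA1, fun n hn => ?_⟩
  have hlocal : ∀ p ∈ n.primeFactors, ((n.factorization p + 1 : ℕ) : ℝ) ≤
      (if p < P then A else 1) * ((p ^ n.factorization p : ℕ) : ℝ) ^ δ := by
    intro p hp
    have hp2 : (2 : ℝ) ≤ p := by exact_mod_cast (Nat.prime_of_mem_primeFactors hp).two_le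
    set k := n.factorization p
    have e : ((p ^ k : ℕ) : ℝ) ^ δ = ((p : ℝ) ^ δ) ^ k := by
      rw [Nat.cast_pow, ← Real.rpow_natCast, ← Real.rpow_mul (by positivity), mul_comm,
        Real.rpow_mul (by positivity), Real.rpow_natCast]
    rw [e]
    split_ifs with h
    · have h1 : (2 : ℝ) ^ δ ≤ (p : ℝ) ^ δ := by gcongr
      have h2 : 1 + k * (δ * Real.log 2) ≤ ((2 : ℝ) ^ δ) ^ k := by
        rw [← Real.rpow_natCast, ← Real.rpow_mul (by norm_num), Real.rpow_def_of_pos (by norm_num)]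
        have := Real.add_one_le_exp (Real.log 2 * (δ * k))
        linarith
      have h3 : ((k + 1 : ℕ) : ℝ) ≤ A * (1 + k * (δ * Real.log 2)) := by
        have e2 : A * (1 + k * (δ * Real.log 2)) =
            A + k * (δ * Real.log 2) + k := by
          rw [hA]; field_simp; ring
        rw [e2]; push_cast
        have : 0 ≤ (k : ℝ) * (δ * Real.log 2) := by positivity
        linarith
      calc _ ≤ A * (1 + k * (δ * Real.log 2)) := h3
        _ ≤ A * ((2 : ℝ) ^ δ) ^ k := by gcongr
        _ ≤ _ := by gcongr
    · have h1 : (2 : ℝ) ^ (1 / δ) ≤ p := (Nat.le_ceil _).trans (by exact_mod_cast not_lt.mp h)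
      have h2 : (2 : ℝ) ≤ (p : ℝ) ^ δ := by
        calc (2 : ℝ) = ((2 : ℝ) ^ (1 / δ)) ^ δ := by
              rw [← Real.rpow_mul (by norm_num), one_div_mul_cancel hδ.ne', Real.rpow_one]
          _ ≤ _ := by gcongr
      rw [one_mul]
      calc ((k + 1 : ℕ) : ℝ) ≤ 2 ^ k := by exact_mod_cast Nat.lt_two_pow_self
        _ ≤ _ := by gcongr
  have hprod : (n : ℝ) ^ δ = ∏ p ∈ n.primeFactors, ((p ^ n.factorization p : ℕ) : ℝ) ^ δ := by
    rw [Real.finsetProd_rpow _ _ fun _ _ => Nat.cast_nonneg _, ← Nat.cast_prod]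
    congr 2
    exact (Nat.prod_factorization_pow_eq_self hn).symm
  calc (n.divisors.card : ℝ) = ∏ p ∈ n.primeFactors, ((n.factorization p + 1 : ℕ) : ℝ) := by
        rw [Nat.card_divisors hn, Nat.cast_prod]
    _ ≤ ∏ p ∈ n.primeFactors, (if p < P then A else 1) *
        ((p ^ n.factorization p : ℕ) : ℝ) ^ δ :=
        Finset.prod_le_prod (fun _ _ => Nat.cast_nonneg _) hlocal
    _ = (∏ p ∈ n.primeFactors, (if p < P then A else 1)) * (n : ℝ) ^ δ := by
        rw [Finset.prod_mul_distrib, hprod]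
    _ ≤ _ := by
        gcongr
        rw [← Finset.prod_filter, Finset.prod_const]
        refine pow_le_pow_right₀ hA1 ?_
        refine (Finset.card_le_card (t := Finset.range P) fun p hp => ?_).trans
          (Finset.card_range P).le
        exact Finset.mem_range.mpr (Finset.mem_filter.mp hp).2

end DivisorBound

section Tauk

lemma tauk_two {n : ℕ} (hn : n ≠ 0) : tauk 2 n = n.divisorsAntidiagonal.card := by
  unfold tauk
  refine Finset.card_bij' (fun f _ => (f 0, f 1)) (fun p _ => ![p.1, p.2]) ?_ ?_ ?_ ?_
  · intro f hf
    have := (Finset.mem_filter.mp hf).2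
    rw [Fin.prod_univ_two] at this
    exact Nat.mem_divisorsAntidiagonal.mpr ⟨this, hn⟩
  · intro p hp
    have hp := (Nat.mem_divisorsAntidiagonal.mp hp).1
    refine Finset.mem_filter.mpr ⟨Fintype.mem_piFinset.mpr fun i => ?_, ?_⟩
    · fin_cases i
      · exact Nat.mem_divisors.mpr ⟨⟨p.2, hp.symm⟩, hn⟩
      · exact Nat.mem_divisors.mpr ⟨⟨p.1, by rw [mul_comm]; exact hp.symm⟩, hn⟩
    · rw [Fin.prod_univ_two]; exact hp
  · intro f _
    ext i; fin_cases i <;> rfl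
  · intro p _; rfl

variable {q : ℕ} [NeZero q]

lemma sum_tauk_eq {q : ℕ} (m : ℕ) (z : ZMod q) :
    ∑ n ∈ (Finset.Icc 1 m).filter (fun n : ℕ => (n : ZMod q) = z), tauk 2 n =
      (pairsIn q m z).card := by
  classical
  have h : ∀ n ∈ (Finset.Icc 1 m).filter (fun n : ℕ => (n : ZMod q) = z), tauk 2 n =
      ((pairsIn q m z).filter (fun p => p.1 * p.2 = n)).card := by
    intro n hn
    obtain ⟨hn1, hn2⟩ := Finset.mem_filter.mp hn
    have hn1 := Finset.mem_Icc.mp hn1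
    rw [tauk_two (by omega)]
    congr 1
    ext p
    simp only [Nat.mem_divisorsAntidiagonal, pairsIn, Finset.mem_filter, Finset.mem_product,
      Finset.mem_Icc]
    constructor
    · rintro ⟨h1, h2⟩
      have a1 : 1 ≤ p.1 := Nat.pos_of_ne_zero fun h => by simp [h] at h1; omega
      have a2 : 1 ≤ p.2 := Nat.pos_of_ne_zero fun h => by simp [h] at h1; omega
      have a3 : p.1 ≤ p.1 * p.2 := Nat.le_mul_of_pos_right _ a2
      have a4 : p.2 ≤ p.1 * p.2 := Nat.le_mul_of_pos_left _ a1
      refine ⟨⟨⟨⟨a1, by omega⟩, a2, by omega⟩, by omega, by rw [h1]; exact hn2⟩, h1⟩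
    · rintro ⟨_, h2⟩
      exact ⟨h2, by omega⟩
  rw [Finset.sum_congr rfl h, ← Finset.card_eq_sum_card_fiberwise]
  intro p hp
  simp only [pairsIn, Finset.coe_filter, Set.mem_ofPred_eq, Finset.mem_product,
    Finset.mem_Icc] at hp ⊢
  exact ⟨⟨Nat.mul_pos hp.1.1.1 hp.1.2.1, hp.2.1⟩, hp.2.2⟩

lemma sum_tauk_coprime_eq (m : ℕ) :
    ∑ n ∈ (Finset.Icc 1 m).filter (fun n => Nat.gcd n q = 1), tauk 2 n =
      ∑ u : (ZMod q)ˣ, (pairsIn q m (u : ZMod q)).card := by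
  classical
  simp only [← sum_tauk_eq, Finset.sum_filter]
  rw [Finset.sum_comm]
  refine Finset.sum_congr rfl fun n _ => ?_
  split_ifs with h
  · rw [Finset.sum_eq_single (ZMod.unitOfCoprime n h), if_pos (ZMod.coe_unitOfCoprime n h).symm]
    · intro u _ hu
      rw [if_neg]
      intro he
      exact hu (Units.ext (by rw [ZMod.coe_unitOfCoprime, he]))
    · simp
  · symm
    refine Finset.sum_eq_zero fun u _ => if_neg fun he => h ?_
    exact (ZMod.isUnit_iff_coprime n q).mp (he ▸ u.isUnit)

/-- The mean over all reduced classes differs from each of them by at most the largest difference of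
two classes. -/
lemma abs_sum_tauk_sub_le (a : (ZMod q)ˣ) {N : ℕ} {T : ℝ} (hT : 1 ≤ T)
    (hqT : (q : ℝ) ≤ T ^ 2) (hN : 2 * T ^ 3 ≤ N) :
    |∑ n ∈ (Finset.Icc 1 ⌊T ^ (3 : ℕ)⌋₊).filter (fun n : ℕ => (n : ZMod q) = a), (tauk 2 n : ℝ) -
      1 / (q.totient : ℝ) *
        ∑ n ∈ (Finset.Icc 1 ⌊T ^ (3 : ℕ)⌋₊).filter (fun n => Nat.gcd n q = 1), (tauk 2 n : ℝ)| ≤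
    488 * ((1 + Real.log N) * errBound q N T) := by
  classical
  have hφ : (0 : ℝ) < q.totient := by exact_mod_cast Nat.totient_pos.mpr (NeZero.pos q)
  rw [← Nat.cast_sum, ← Nat.cast_sum, sum_tauk_eq, sum_tauk_coprime_eq]
  set f : (ZMod q)ˣ → ℝ := fun u => ((pairsIn q ⌊T ^ (3 : ℕ)⌋₊ (u : ZMod q)).card : ℝ) with hf
  have hcard : (Finset.univ : Finset (ZMod q)ˣ).card = q.totient := by
    rw [Finset.card_univ, ZMod.card_units_eq_totient]
  have e : f a - 1 / (q.totient : ℝ) * ∑ u, f u = 1 / (q.totient : ℝ) * ∑ u, (f a - f u) := by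
    rw [Finset.sum_sub_distrib, Finset.sum_const, hcard, nsmul_eq_mul]
    field_simp
  rw [Nat.cast_sum]
  change |f a - 1 / (q.totient : ℝ) * ∑ u, f u| ≤ _
  rw [e, abs_mul, abs_of_pos (by positivity), one_div, inv_mul_le_iff₀ hφ]
  calc |∑ u, (f a - f u)| ≤ ∑ u, |f a - f u| := Finset.abs_sum_le_sum_abs _ _
    _ ≤ ∑ u : (ZMod q)ˣ, 488 * ((1 + Real.log N) * errBound q N T) :=
        Finset.sum_le_sum fun u _ => abs_pairsIn_sub_le a u hT hqT hN
    _ = _ := by rw [Finset.sum_const, hcard, nsmul_eq_mul]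

end Tauk

theorem divisor_function_level_of_distribution :
    ∀ ε : ℝ, 0 < ε → ∃ C : ℝ, 0 < C ∧ ∀ X : ℝ, 2 ≤ X → ∀ q : ℕ, 1 ≤ q →
      (q : ℝ) ≤ X ^ ((2 : ℝ) / 3) → ∀ a : ℤ, Int.gcd a q = 1 →
        |(∑ n ∈ (Finset.Icc 1 ⌊X⌋₊).filter fun n : ℕ => (n : ℤ) % (q : ℤ) = a % (q : ℤ),
            (tauk 2 n : ℝ)) -
          (1 / (q.totient : ℝ)) *
            ∑ n ∈ (Finset.Icc 1 ⌊X⌋₊).filter fun n => Nat.gcd n q = 1, (tauk 2 n : ℝ)| ≤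
        C * X ^ ((1 : ℝ) / 3 + ε) := by
  intro ε hε
  obtain ⟨C, hC1, hC⟩ := exists_card_divisors_le (by positivity : 0 < ε / 8)
  refine ⟨488 * (3 + 1 / (ε / 6)) ^ 3 * C ^ 4, by positivity, ?_⟩
  intro X hX q hq hqX a ha
  have : NeZero q := ⟨by omega⟩
  have hX0 : 0 < X := by linarith
  have hX1 : 1 ≤ X := by linarith
  set T : ℝ := X ^ ((1 : ℝ) / 3) with hTdef
  have hT : 1 ≤ T := Real.one_le_rpow hX1 (by norm_num)
  have hT3 : T ^ (3 : ℕ) = X := by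
    rw [hTdef, ← Real.rpow_natCast, ← Real.rpow_mul hX0.le]; norm_num
  have hT2 : T ^ (2 : ℕ) = X ^ ((2 : ℝ) / 3) := by
    rw [hTdef, ← Real.rpow_natCast, ← Real.rpow_mul hX0.le]; norm_num
  have hqX1 : (q : ℝ) ≤ X := hqX.trans
    ((Real.rpow_le_rpow_of_exponent_le hX1 (by norm_num)).trans (Real.rpow_one X).le)
  have hau : IsUnit (a : ZMod q) := by
    rw [ZMod.coe_int_isUnit_iff_isCoprime, isCoprime_comm, Int.isCoprime_iff_gcd_eq_one]
    exact ha
  obtain ⟨u, hu⟩ := hau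
  have key := abs_sum_tauk_sub_le u (N := ⌈2 * X⌉₊) hT (by rw [hT2]; exact hqX)
    (by rw [hT3]; exact Nat.le_ceil _)
  rw [hT3, hu] at key
  have hfil : (Finset.Icc 1 ⌊X⌋₊).filter (fun n : ℕ => (n : ℤ) % (q : ℤ) = a % (q : ℤ)) =
      (Finset.Icc 1 ⌊X⌋₊).filter (fun n : ℕ => (n : ZMod q) = a) := by
    refine Finset.filter_congr fun n _ => ?_
    have e : ((n : ℕ) : ZMod q) = (((n : ℤ)) : ZMod q) := (Int.cast_natCast n).symm
    rw [e, ZMod.intCast_eq_intCast_iff]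
    rfl
  rw [hfil]
  refine key.trans ?_
  set N := ⌈2 * X⌉₊ with hN
  have hℓ : 1 + Real.log N ≤ (3 + 1 / (ε / 6)) * X ^ (ε / 6) := by
    have h1 : (N : ℝ) ≤ 3 * X := by
      have := Nat.ceil_lt_add_one (by linarith : 0 ≤ 2 * X)
      rw [← hN] at this; linarith
    have hN0 : (0 : ℝ) < N := by
      have := Nat.le_ceil (2 * X)
      rw [← hN] at this; linarith
    have h2 : Real.log N ≤ Real.log 3 + Real.log X := by
      rw [← Real.log_mul (by norm_num) hX0.ne']
      exact Real.log_le_log hN0 h1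
    have h3 : Real.log 3 ≤ 2 := by
      have := Real.log_le_sub_one_of_pos (by norm_num : (0 : ℝ) < 3)
      linarith
    have h4 : Real.log X ≤ X ^ (ε / 6) / (ε / 6) := Real.log_le_rpow_div hX0.le (by positivity)
    have h5 : 1 ≤ X ^ (ε / 6) := Real.one_le_rpow hX1 (by positivity)
    calc _ ≤ 3 * X ^ (ε / 6) + X ^ (ε / 6) / (ε / 6) := by linarith
      _ = _ := by ring
  have hℓ0 : 0 ≤ 1 + Real.log N := by linarith [Real.log_natCast_nonneg N]
  have hτ : (6 : ℝ) ^ q.primeFactors.card * q.divisors.card ≤ (C * X ^ (ε / 8)) ^ 4 := by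
    have h1 : (q.divisors.card : ℝ) ≤ C * X ^ (ε / 8) :=
      (hC q (NeZero.ne q)).trans (by gcongr)
    have h2 : (6 : ℝ) ^ q.primeFactors.card ≤ (q.divisors.card : ℝ) ^ 3 := by
      calc (6 : ℝ) ^ q.primeFactors.card ≤ (2 ^ 3) ^ q.primeFactors.card := by gcongr; norm_num
        _ = ((2 : ℝ) ^ q.primeFactors.card) ^ 3 := by rw [← pow_mul, ← pow_mul, mul_comm]
        _ ≤ _ := by
          gcongr
          exact_mod_cast two_pow_le_card_divisors (NeZero.ne q)
    calc _ ≤ (q.divisors.card : ℝ) ^ 3 * q.divisors.card := by gcongr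
      _ = (q.divisors.card : ℝ) ^ 4 := by ring
      _ ≤ _ := by gcongr
  have hpow : (X ^ (ε / 6)) ^ 3 * (X ^ (ε / 8)) ^ 4 * T = X ^ ((1 : ℝ) / 3 + ε) := by
    rw [← Real.rpow_natCast, ← Real.rpow_natCast, ← Real.rpow_mul hX0.le, ← Real.rpow_mul hX0.le,
      hTdef, ← Real.rpow_add hX0, ← Real.rpow_add hX0]
    congr 1; push_cast; ring
  calc 488 * ((1 + Real.log N) * errBound q N T) = 488 * ((1 + Real.log N) ^ 3 *
        (6 ^ q.primeFactors.card * q.divisors.card) * T) := by rw [errBound]; ring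
    _ ≤ 488 * (((3 + 1 / (ε / 6)) * X ^ (ε / 6)) ^ 3 * (C * X ^ (ε / 8)) ^ 4 * T) := by gcongr
    _ = 488 * (3 + 1 / (ε / 6)) ^ 3 * C ^ 4 * ((X ^ (ε / 6)) ^ 3 * (X ^ (ε / 8)) ^ 4 * T) := by ring
    _ = _ := by rw [hpow]
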